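/- Assume condition (Cond1) and additionally that b, ω ∈ W^{1,2}_loc(ℝ). Let u_τ ∈ V^{2r} with 3/4 < r < 1 be positive with (d/dx)u_τ(0) > 0 and (d/dx)u_τ(1) < 0. Then there is a unique strong solution u to problem (Incl) (unique in the class of all solutions, not only the non-negative ones); it satisfies that u(t) is positive for all t ≥ τ, u ∈ C((τ,∞),H³(0,1)) ∩ C¹((τ,∞),V) with d²u/dt² ∈ L²_loc(τ+ε,∞;H) for all ε > 0, u_x(t,0) > 0 and u_x(t,1) < 0 for all t ≥ τ, and the partial derivatives u_t, u_xx exist in the classical sense and are continuous on (τ,∞)×[0,1]. -/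

import Mathlib

open MeasureTheory Set

noncomputable section

/-- Lebesgue measure restricted to the spatial interval `(0,1)`. -/
def μ01 : Measure ℝ := volume.restrict (Ioo (0:ℝ) 1)

/-- `H = L²(0,1)`. -/
abbrev Hsp : Type := Lp ℝ 2 μ01

/-- The Heaviside multifunction. -/
def heaviside (s : ℝ) : Set ℝ :=
  if s < 0 then {-1} else if s = 0 then Icc (-1) 1 else {1}

/-- Condition (Cond1). -/
structure Cond1 (b ω : ℝ → ℝ) (b0 b1 ω0 ω1 : ℝ) : Prop where
  contb : Continuous b
  contω : Continuous ω
  b0pos : 0 < b0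
  blb : ∀ t, b0 ≤ b t
  bub : ∀ t, b t ≤ b1
  ω0nonneg : 0 ≤ ω0
  ωlb : ∀ t, ω0 ≤ ω t
  ωub : ∀ t, ω t ≤ ω1

/-- `v ∈ H²(0,1) ∩ H¹₀(0,1)` with (weak) second derivative `w ∈ L²(0,1)`:
`v` has a representative that is continuous on `[0,1]`, vanishes at the boundary,
is differentiable on `(0,1)` and whose derivative is an antiderivative of `w`. -/
def InDomainA (v w : Hsp) : Prop :=
  ∃ vt : ℝ → ℝ, ContinuousOn vt (Icc 0 1) ∧ vt 0 = 0 ∧ vt 1 = 0 ∧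
    (∀ᵐ x ∂μ01, vt x = v x) ∧
    ∃ g : ℝ → ℝ,
      (∀ x ∈ Ioo (0:ℝ) 1, HasDerivAt vt (g x) x) ∧
      ∀ x ∈ Ioo (0:ℝ) 1, ∀ y ∈ Ioo (0:ℝ) 1, g x - g y = ∫ z in y..x, w z

/-- A strong solution of the inclusion on `[τ,∞)`, with explicit data:
`r` is the `L²`-selection, `u'` the time derivative, `uxx` the second spatial derivative. -/
structure IsStrongSolutionWith (b ω : ℝ → ℝ) (τ : ℝ) (u r u' uxx : ℝ → Hsp) : Prop where
  cont : ContinuousOn u (Ici τ)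
  rmem : ∀ T, τ < T → MemLp r 2 (volume.restrict (Ioo τ T))
  sel : ∀ᵐ t ∂(volume.restrict (Ioi τ)), ∀ᵐ x ∂μ01,
      ∃ h ∈ heaviside (u t x), r t x = b t * h + ω t * u t x
  dom : ∀ᵐ t ∂(volume.restrict (Ioi τ)), InDomainA (u t) (uxx t)
  eq : ∀ᵐ t ∂(volume.restrict (Ioi τ)), u' t = r t + uxx t
  fund : ∀ T1 T2 : ℝ, τ < T1 → T1 < T2 →
      IntervalIntegrable u' volume T1 T2 ∧
      ∀ t ∈ Icc T1 T2, u t = u T1 + ∫ s in T1..t, u' s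

/-- A strong solution of the inclusion on `[τ,∞)`. -/
def IsStrongSolution (b ω : ℝ → ℝ) (τ : ℝ) (u : ℝ → Hsp) : Prop :=
  ∃ r u' uxx, IsStrongSolutionWith b ω τ u r u' uxx

/-- The solution is non-negative on `[τ,∞)`. -/
def NonnegOn (u : ℝ → Hsp) (τ : ℝ) : Prop :=
  ∀ t, τ ≤ t → ∀ᵐ x ∂μ01, 0 ≤ u t x

/-- `v` is positive: it has a continuous representative on `[0,1]`
which is strictly positive on `(0,1)`. -/
def IsPositive (v : Hsp) : Prop :=
  ∃ vt : ℝ → ℝ, ContinuousOn vt (Icc 0 1) ∧ (∀ᵐ x ∂μ01, vt x = v x) ∧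
    ∀ x ∈ Ioo (0:ℝ) 1, 0 < vt x


/-- `f'` is the weak derivative of `f : ℝ → E` on the open set `S ⊆ ℝ`. -/
def HasWeakDerivOn {E : Type*} [NormedAddCommGroup E] [NormedSpace ℝ E]
    (f f' : ℝ → E) (S : Set ℝ) : Prop :=
  ∀ φ : ℝ → ℝ, ContDiff ℝ (⊤ : ℕ∞) φ → HasCompactSupport φ → tsupport φ ⊆ S →
    ∫ t in S, deriv φ t • f t = - ∫ t in S, φ t • f' t

/-- `f ∈ W^{k,2}_loc(ℝ)`. -/
def Wkloc (k : ℕ) (f : ℝ → ℝ) : Prop :=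
  ∀ T1 T2 : ℝ, T1 < T2 →
    ∃ D : ℕ → ℝ → ℝ, D 0 = f ∧
      (∀ j < k, HasWeakDerivOn (D j) (D (j + 1)) (Ioo T1 T2)) ∧
      ∀ j ≤ k, MemLp (D j) 2 (volume.restrict (Ioo T1 T2))

/-- `w` is the spatial weak derivative of `v` on `(0,1)`. -/
def IsSpatialWeakDeriv (v w : Hsp) : Prop :=
  ∀ φ : ℝ → ℝ, ContDiff ℝ (⊤ : ℕ∞) φ → HasCompactSupport φ → tsupport φ ⊆ Ioo (0:ℝ) 1 →
    ∫ x in Ioo (0:ℝ) 1, deriv φ x * v x = - ∫ x in Ioo (0:ℝ) 1, φ x * w x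

/-- `v : s → H` is of class `C^m` (in the `L²(0,1)` norm). -/
def TimeCk (m : ℕ) (v : ℝ → Hsp) (s : Set ℝ) : Prop :=
  ∃ Dt : ℕ → ℝ → Hsp, Dt 0 = v ∧
    (∀ j < m, ∀ t ∈ s, HasDerivAt (Dt j) (Dt (j + 1) t) t) ∧
    ∀ j ≤ m, ContinuousOn (Dt j) s

/-- `v : s → V = H¹₀(0,1)` is of class `C^m`: both `v` and its spatial derivative
are `C^m` into `L²(0,1)`. -/
def CkIntoV (m : ℕ) (v : ℝ → Hsp) (s : Set ℝ) : Prop :=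
  TimeCk m v s ∧
  ∃ d1 : ℝ → Hsp, (∀ t ∈ s, IsSpatialWeakDeriv (v t) (d1 t)) ∧ TimeCk m d1 s

/-- `v : s → H^m(0,1)` is of class `C^j`: all spatial weak derivatives up to
order `m` exist and are `C^j` in time into `L²(0,1)`. -/
def CjIntoHm (j m : ℕ) (v : ℝ → Hsp) (s : Set ℝ) : Prop :=
  ∃ Dx : ℕ → ℝ → Hsp, Dx 0 = v ∧
    (∀ i < m, ∀ t ∈ s, IsSpatialWeakDeriv (Dx i t) (Dx (i + 1) t)) ∧
    ∀ i ≤ m, TimeCk j (Dx i) s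

/-- `d^m v/dt^m ∈ L²_loc(τ+ε,∞;H)` for every `ε > 0`. -/
def HasL2locTimeDerivChain (m : ℕ) (v : ℝ → Hsp) (τ : ℝ) : Prop :=
  ∃ Dt : ℕ → ℝ → Hsp, Dt 0 = v ∧
    ∀ ε > (0:ℝ), ∀ T, τ + ε < T →
      (∀ j < m, HasWeakDerivOn (Dt j) (Dt (j + 1)) (Ioo (τ + ε) T)) ∧
      MemLp (Dt m) 2 (volume.restrict (Ioo (τ + ε) T))

/-- The partial derivatives `u_t`, `u_xx` exist in the classical sense
and are continuous on `(τ,∞)×[0,1]`. -/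
def ClassicalUtUxx (τ : ℝ) (u : ℝ → Hsp) : Prop :=
  ∃ F Fx ut uxx : ℝ → ℝ → ℝ,
    (∀ t ∈ Ioi τ, ∀ᵐ x ∂μ01, F t x = u t x) ∧
    (∀ t ∈ Ioi τ, ∀ x ∈ Icc (0:ℝ) 1, HasDerivAt (fun s => F s x) (ut t x) t) ∧
    (∀ t ∈ Ioi τ, ∀ x ∈ Icc (0:ℝ) 1, HasDerivWithinAt (F t) (Fx t x) (Icc 0 1) x) ∧
    (∀ t ∈ Ioi τ, ∀ x ∈ Icc (0:ℝ) 1, HasDerivWithinAt (Fx t) (uxx t x) (Icc 0 1) x) ∧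
    ContinuousOn (fun p : ℝ × ℝ => ut p.1 p.2) (Ioi τ ×ˢ Icc 0 1) ∧
    ContinuousOn (fun p : ℝ × ℝ => uxx p.1 p.2) (Ioi τ ×ˢ Icc 0 1)


/-- Fourier sine coefficient of `v` (eigenfunctions of `A = −d²/dx²` on `(0,1)`
with Dirichlet boundary conditions are `sin((n+1)πx)`, `n ∈ ℕ`). -/
def sinCoeff (v : Hsp) (n : ℕ) : ℝ :=
  ∫ x in (0:ℝ)..1, v x * Real.sin (((n : ℝ) + 1) * Real.pi * x)

/-- `v ∈ V^{2r} = D(A^r)`, characterized through the eigenfunction expansion: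
`Σ λₙ^{2r} |⟨v,eₙ⟩|² < ∞` with `λₙ = ((n+1)π)²`. -/
def MemV2r (r : ℝ) (v : Hsp) : Prop :=
  Summable (fun n : ℕ => ((((n : ℝ) + 1) * Real.pi) ^ (4 * r)) * (sinCoeff v n) ^ 2)

/-- `v` is positive on `(0,1)`, of class `C¹([0,1])`, vanishes at the boundary
and has strictly positive (resp. negative) derivative at `x = 0` (resp. `x = 1`). -/
def PositiveWithBoundaryDerivs (v : Hsp) : Prop :=
  ∃ vt g : ℝ → ℝ,
    ContinuousOn vt (Icc 0 1) ∧ vt 0 = 0 ∧ vt 1 = 0 ∧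
    (∀ᵐ x ∂μ01, vt x = v x) ∧
    (∀ x ∈ Icc (0:ℝ) 1, HasDerivWithinAt vt (g x) (Icc 0 1) x) ∧
    ContinuousOn g (Icc 0 1) ∧
    (∀ x ∈ Ioo (0:ℝ) 1, 0 < vt x) ∧ 0 < g 0 ∧ g 1 < 0

/-!
As long as the solution is positive, the inclusion is the linear problem `u_t - u_xx = b + ω u`, so
the solution is sought in that class. Write `p(x) = x(1-x)/2`. The sine coefficients of the solution
are explicit, and their decay in the frequency carries all the regularity: integrating by parts once
against `b' ∈ L²_loc`, the coefficients of `u - b(t) p` gain enough decay for the series of `u_t`,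
`u_xx` and `u_xxx` to converge, up to the explicit profile.

For positivity, the conditions on `u_τ` say that `c p ≤ u_τ` for some `c > 0`. Since `b` is bounded
below by a positive constant on compact time intervals, a small multiple of `p` is a subsolution
after removing the factor `exp (∫ω)`, and the minimum principle propagates the barrier `c p ≤ u(t)`.
It makes the selection `1 ∈ H₀(u)` legitimate and gives the signs of the boundary derivatives.

Uniqueness is not obvious because `H₀` is increasing. If `w` is another solution and `v = u - w`,
the two selections differ only where `w ≤ 0`, that is, where `v ≥ c p`; hence their difference
contributes at most a multiple of `∫ v²/p` to `d/dt ‖v‖²`. This is absorbed by the Dirichlet energy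
and a multiple of `‖v‖²`, and Grönwall's inequality gives `v = 0`.
-/

/-! ### Primitives of locally square integrable functions -/

/-- `d ∈ L²_loc(ℝ)`. -/
def LocL2 (d : ℝ → ℝ) : Prop := ∀ s t, MemLp d 2 (volume.restrict (Ioo s t))

namespace LocL2

variable {d e g : ℝ → ℝ}

lemma add (hd : LocL2 d) (he : LocL2 e) : LocL2 (fun x => d x + e x) :=
  fun s t => (hd s t).add (he s t)

lemma continuous_mul (hd : LocL2 d) (hg : Continuous g) : LocL2 (fun x => g x * d x) := by
  intro s t
  obtain ⟨C, hC⟩ := (isCompact_Icc (a := s) (b := t)).exists_bound_of_continuousOn hg.continuousOn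
  refine MemLp.of_le_mul (g := d) (c := C) (hd s t) (hg.aestronglyMeasurable.mul (hd s t).1) ?_
  rw [ae_restrict_iff' measurableSet_Ioo]
  filter_upwards with x hx
  rw [norm_mul]
  exact mul_le_mul_of_nonneg_right (hC x ⟨hx.1.le, hx.2.le⟩) (norm_nonneg _)

lemma of_continuous (hg : Continuous g) : LocL2 g := by
  have h1 : LocL2 (fun _ => (1 : ℝ)) := fun s t => memLp_const 1
  simpa using h1.continuous_mul hg

lemma intervalIntegrable (hd : LocL2 d) (s t : ℝ) : IntervalIntegrable d volume s t := by
  rw [intervalIntegrable_iff, uIoc]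
  exact (integrableOn_Ioc_iff_integrableOn_Ioo).2
    ((hd (min s t) (max s t)).integrable one_le_two)

lemma intervalIntegrable_sq (hd : LocL2 d) (s t : ℝ) :
    IntervalIntegrable (fun x => d x ^ 2) volume s t := by
  rw [intervalIntegrable_iff, uIoc]
  exact (integrableOn_Ioc_iff_integrableOn_Ioo).2 (hd (min s t) (max s t)).integrable_sq

lemma integral_sq_mono (hd : LocL2 d) {a b a' b' : ℝ} (ha : a' ≤ a) (hab : a ≤ b) (hb : b ≤ b') :
    ∫ t in a..b, d t ^ 2 ≤ ∫ t in a'..b', d t ^ 2 :=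
  intervalIntegral.integral_mono_interval ha hab hb
    (Filter.Eventually.of_forall fun _ => sq_nonneg _) (hd.intervalIntegrable_sq a' b')

end LocL2

/-- `F ∈ W^{1,2}_loc(ℝ)` with derivative `d ∈ L²_loc(ℝ)`, encoded by the fundamental theorem of
calculus, so that `F` is the continuous representative. -/
structure HasL2Deriv (F d : ℝ → ℝ) : Prop where
  locL2 : LocL2 d
  sub_eq : ∀ s t, F t - F s = ∫ x in s..t, d x

namespace HasL2Deriv

variable {F G d e : ℝ → ℝ}

lemma intervalIntegrable (h : HasL2Deriv F d) (s t : ℝ) : IntervalIntegrable d volume s t :=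
  h.locL2.intervalIntegrable s t

lemma eq_add_integral (h : HasL2Deriv F d) (a : ℝ) : F = fun x => F a + ∫ y in a..x, d y := by
  funext x; rw [← h.sub_eq]; ring

lemma continuous (h : HasL2Deriv F d) : Continuous F := by
  rw [h.eq_add_integral 0]
  exact continuous_const.add (intervalIntegral.continuous_primitive h.intervalIntegrable 0)

lemma ae_hasDerivAt (h : HasL2Deriv F d) : ∀ᵐ x, HasDerivAt F (d x) x := by
  have hd : LocallyIntegrable d volume := fun x =>
    ⟨Ioc (x - 1) (x + 1), Ioc_mem_nhds (by linarith) (by linarith),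
      (intervalIntegrable_iff_integrableOn_Ioc_of_le (by linarith)).1
        (h.intervalIntegrable (x - 1) (x + 1))⟩
  filter_upwards [LocallyIntegrable.ae_hasDerivAt_integral hd] with x hx
  have := (hx 0).const_add (F 0)
  rwa [← h.eq_add_integral 0] at this

lemma absolutelyContinuousOnInterval (h : HasL2Deriv F d) (a b : ℝ) :
    AbsolutelyContinuousOnInterval F a b := by
  rw [h.eq_add_integral a]
  exact (LipschitzWith.const (F a)).lipschitzOnWith.absolutelyContinuousOnInterval.fun_add
    ((h.intervalIntegrable a b).absolutelyContinuousOnInterval_intervalIntegral (by simp))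

lemma mul (hF : HasL2Deriv F d) (hG : HasL2Deriv G e) :
    HasL2Deriv (fun x => F x * G x) (fun x => d x * G x + F x * e x) where
  locL2 := by
    simpa only [mul_comm] using
      (hF.locL2.continuous_mul hG.continuous).add (hG.locL2.continuous_mul hF.continuous)
  sub_eq s t := by
    rw [← AbsolutelyContinuousOnInterval.integral_deriv_mul_eq_sub
      (hF.absolutelyContinuousOnInterval s t) (hG.absolutelyContinuousOnInterval s t)]
    apply intervalIntegral.integral_congr_ae
    filter_upwards [hF.ae_hasDerivAt, hG.ae_hasDerivAt] with x h1 h2 _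
    rw [h1.deriv, h2.deriv]

lemma add (hF : HasL2Deriv F d) (hG : HasL2Deriv G e) :
    HasL2Deriv (fun x => F x + G x) (fun x => d x + e x) where
  locL2 := hF.locL2.add hG.locL2
  sub_eq s t := by
    rw [intervalIntegral.integral_add (hF.intervalIntegrable s t) (hG.intervalIntegrable s t),
      ← hF.sub_eq, ← hG.sub_eq]
    ring

lemma const_mul (hF : HasL2Deriv F d) (c : ℝ) :
    HasL2Deriv (fun x => c * F x) (fun x => c * d x) where
  locL2 := hF.locL2.continuous_mul continuous_const
  sub_eq s t := by rw [intervalIntegral.integral_const_mul, ← hF.sub_eq]; ring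

lemma of_hasDerivAt (h : ∀ x, HasDerivAt F (d x) x) (hd : Continuous d) : HasL2Deriv F d where
  locL2 := .of_continuous hd
  sub_eq s t := (intervalIntegral.integral_eq_sub_of_hasDerivAt (fun x _ => h x)
    (hd.intervalIntegrable s t)).symm

lemma const (c : ℝ) : HasL2Deriv (fun _ => c) (fun _ => 0) :=
  .of_hasDerivAt (fun x => hasDerivAt_const x c) continuous_const

lemma hasDerivAt (h : HasL2Deriv F d) (hd : Continuous d) (x : ℝ) : HasDerivAt F (d x) x := by
  rw [h.eq_add_integral 0]
  exact (intervalIntegral.integral_hasDerivAt_right (h.intervalIntegrable 0 x)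
    (hd.stronglyMeasurableAtFilter _ _) hd.continuousAt).const_add _

lemma primitive (hd : LocL2 d) (a : ℝ) : HasL2Deriv (fun x => ∫ y in a..x, d y) d where
  locL2 := hd
  sub_eq s t := by
    rw [intervalIntegral.integral_interval_sub_left (hd.intervalIntegrable _ _)
      (hd.intervalIntegrable _ _)]

end HasL2Deriv

/-! ### Weak derivatives on an interval -/

/-- Test functions of an open set, as they are quantified over in `HasWeakDerivOn` and
`IsSpatialWeakDeriv`. -/
structure IsTestFunction (S : Set ℝ) (φ : ℝ → ℝ) : Prop where
  contDiff : ContDiff ℝ (⊤ : ℕ∞) φ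
  hasCompactSupport : HasCompactSupport φ
  tsupport_subset : tsupport φ ⊆ S

namespace IsTestFunction

variable {S : Set ℝ} {φ ψ : ℝ → ℝ} {T1 T2 : ℝ}

lemma eq_zero (hφ : IsTestFunction S φ) {x : ℝ} (hx : x ∉ S) : φ x = 0 :=
  image_eq_zero_of_notMem_tsupport fun h => hx (hφ.tsupport_subset h)

lemma setIntegral_eq (hφ : IsTestFunction S φ) (h : ℝ → ℝ) :
    ∫ x in S, φ x * h x = ∫ x, φ x * h x :=
  setIntegral_eq_integral_of_forall_compl_eq_zero fun x hx => by rw [hφ.eq_zero hx, zero_mul]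

lemma integrable_mul (hφ : IsTestFunction S φ) (hS : IsOpen S) {h : ℝ → ℝ}
    (hh : ContinuousOn h S) : Integrable (fun x => φ x * h x) := by
  have hcont : Continuous (fun x => φ x * h x) := by
    rw [continuous_iff_continuousAt]
    intro x
    by_cases hx : x ∈ tsupport φ
    · exact hφ.contDiff.continuous.continuousAt.mul
        (hh.continuousAt (hS.mem_nhds (hφ.tsupport_subset hx)))
    · have : (fun t => φ t * h t) =ᶠ[nhds x] fun _ => 0 := by
        filter_upwards [(isClosed_tsupport φ).isOpen_compl.mem_nhds hx] with t ht
        rw [image_eq_zero_of_notMem_tsupport ht, zero_mul]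
      exact continuousAt_const.congr this.symm
  exact hcont.integrable_of_hasCompactSupport hφ.hasCompactSupport.mul_right

lemma sub_const_mul (hφ : IsTestFunction S φ) (hψ : IsTestFunction S ψ) (c : ℝ) :
    IsTestFunction S (fun x => φ x - c * ψ x) := by
  have hsub : tsupport (fun x => φ x - c * ψ x) ⊆ tsupport φ ∪ tsupport ψ := by
    refine closure_minimal (fun x hx => ?_) ((isClosed_tsupport φ).union (isClosed_tsupport ψ))
    by_contra h
    rw [mem_union, not_or] at h
    exact hx (by simp [image_eq_zero_of_notMem_tsupport h.1, image_eq_zero_of_notMem_tsupport h.2])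
  exact ⟨hφ.contDiff.sub (contDiff_const.mul hψ.contDiff),
    (hφ.hasCompactSupport.isCompact.union hψ.hasCompactSupport.isCompact).of_isClosed_subset
      (isClosed_tsupport _) hsub,
    hsub.trans (union_subset hφ.tsupport_subset hψ.tsupport_subset)⟩

lemma exists_integral_eq_one (hT : T1 < T2) : ∃ η, IsTestFunction (Ioo T1 T2) η ∧ ∫ x, η x = 1 := by
  let B : ContDiffBump ((T1 + T2) / 2) := ⟨(T2 - T1) / 8, (T2 - T1) / 4, by linarith, by linarith⟩
  refine ⟨B.normed volume, ⟨B.contDiff_normed, B.hasCompactSupport_normed, ?_⟩, B.integral_normed⟩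
  rw [B.tsupport_normed_eq, Real.closedBall_eq_Icc]
  exact Icc_subset_Ioo (by change T1 < _ - (T2 - T1) / 4; linarith)
    (by change _ + (T2 - T1) / 4 < T2; linarith)

lemma exists_tsupport_subset_Icc (hφ : IsTestFunction (Ioo T1 T2) φ) (hT : T1 < T2) :
    ∃ α ∈ Ioo T1 T2, ∃ β ∈ Ioo T1 T2, tsupport φ ⊆ Icc α β := by
  rcases (tsupport φ).eq_empty_or_nonempty with h | h
  · have hm : (T1 + T2) / 2 ∈ Ioo T1 T2 := ⟨by linarith, by linarith⟩
    exact ⟨_, hm, _, hm, h ▸ empty_subset _⟩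
  · obtain ⟨α, hα, hα'⟩ := hφ.hasCompactSupport.isCompact.exists_isLeast h
    obtain ⟨β, hβ, hβ'⟩ := hφ.hasCompactSupport.isCompact.exists_isGreatest h
    exact ⟨α, hφ.tsupport_subset hα, β, hφ.tsupport_subset hβ, fun x hx => ⟨hα' hx, hβ' hx⟩⟩

lemma exists_deriv_eq (hφ : IsTestFunction (Ioo T1 T2) φ) (hT : T1 < T2) (hint : ∫ x, φ x = 0) :
    ∃ ψ, IsTestFunction (Ioo T1 T2) ψ ∧ deriv ψ = φ := by
  have hcont := hφ.contDiff.continuous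
  set ψ : ℝ → ℝ := fun t => ∫ x in T1..t, φ x
  have hderiv : ∀ t, HasDerivAt ψ (φ t) t :=
    (HasL2Deriv.primitive (.of_continuous hcont) T1).hasDerivAt hcont
  have hderiv' : deriv ψ = φ := funext fun t => (hderiv t).deriv
  obtain ⟨α, hα, β, hβ, hsub⟩ := hφ.exists_tsupport_subset_Icc hT
  have hzero : ∀ x, x ∉ Icc α β → φ x = 0 := fun x hx =>
    image_eq_zero_of_notMem_tsupport fun h => hx (hsub h)
  have hψzero : ∀ t, t ∉ Icc α β → ψ t = 0 := by
    intro t ht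
    rcases lt_or_ge t α with htα | htα
    · refine intervalIntegral.integral_zero_ae (Filter.Eventually.of_forall fun x hx => hzero x ?_)
      exact fun hx' => absurd (hx'.1.trans hx.2) (not_le.2 (max_lt hα.1 htα))
    · have htβ : β < t := not_le.1 fun h => ht ⟨htα, h⟩
      rw [← hint]
      simp only [ψ]
      rw [intervalIntegral.integral_of_le (hβ.1.trans htβ).le]
      refine setIntegral_eq_integral_of_forall_compl_eq_zero fun x hx => hzero x fun hx' => ?_
      exact hx ⟨hα.1.trans_le hx'.1, hx'.2.trans htβ.le⟩
  have hψsub : tsupport ψ ⊆ Icc α β :=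
    closure_minimal (fun x hx => not_not.1 fun h => hx (hψzero x h)) isClosed_Icc
  refine ⟨ψ, ⟨?_, isCompact_Icc.of_isClosed_subset (isClosed_tsupport _) hψsub,
    hψsub.trans (Icc_subset_Ioo hα.1 hβ.2)⟩, hderiv'⟩
  exact contDiff_infty_iff_deriv.2 ⟨fun t => (hderiv t).differentiableAt, hderiv' ▸ hφ.contDiff⟩

end IsTestFunction

/-- The lemma of du Bois-Reymond. -/
lemma eqOn_const_of_hasWeakDerivOn_zero {T1 T2 : ℝ} (hT : T1 < T2) {h : ℝ → ℝ}
    (hh : ContinuousOn h (Ioo T1 T2)) (hweak : HasWeakDerivOn h (fun _ => 0) (Ioo T1 T2)) :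
    ∃ c, ∀ t ∈ Ioo T1 T2, h t = c := by
  obtain ⟨η, hη, hη1⟩ := IsTestFunction.exists_integral_eq_one hT
  set c := ∫ t, η t * h t
  have hzero : ∀ᵐ x, x ∈ Ioo T1 T2 → h x - c = 0 := by
    refine isOpen_Ioo.ae_eq_zero_of_integral_contDiff_smul_eq_zero
      ((hh.sub continuousOn_const).locallyIntegrableOn measurableSet_Ioo) fun ψ h1 h2 h3 => ?_
    have hψ : IsTestFunction (Ioo T1 T2) ψ := ⟨h1, h2, h3⟩
    have hψi := h1.continuous.integrable_of_hasCompactSupport (μ := volume) h2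
    have hηi := hη.contDiff.continuous.integrable_of_hasCompactSupport (μ := volume)
      hη.hasCompactSupport
    -- `ψ - (∫ ψ) η` has mean zero, so it is the derivative of a test function.
    obtain ⟨φ, hφ, hφ'⟩ := (hψ.sub_const_mul hη (∫ x, ψ x)).exists_deriv_eq hT (by
      rw [integral_sub hψi (hηi.const_mul _), integral_const_mul, hη1, mul_one, sub_self])
    have horth := hweak φ hφ.contDiff hφ.hasCompactSupport hφ.tsupport_subset
    rw [hφ'] at horth
    simp only [smul_eq_mul, mul_zero, integral_zero, neg_zero] at horth ⊢
    rw [(hψ.sub_const_mul hη _).setIntegral_eq] at horth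
    simp only [sub_mul, mul_assoc, mul_sub] at horth ⊢
    rw [integral_sub (hψ.integrable_mul isOpen_Ioo hh)
      ((hη.integrable_mul isOpen_Ioo hh).const_mul _), integral_const_mul] at horth
    rw [integral_sub (hψ.integrable_mul isOpen_Ioo hh) (hψi.mul_const c), integral_mul_const]
    exact horth
  refine ⟨c, Measure.eqOn_of_ae_eq (μ := volume) ?_ hh continuousOn_const
    (by rw [isOpen_Ioo.interior_eq]; exact subset_closure)⟩
  rw [Filter.EventuallyEq, ae_restrict_iff' measurableSet_Ioo]
  filter_upwards [hzero] with x hx hxT using sub_eq_zero.1 (hx hxT)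

lemma hasWeakDerivOn_primitive {T1 T2 : ℝ} (hT : T1 ≤ T2) {g : ℝ → ℝ}
    (hg : IntervalIntegrable g volume T1 T2) :
    HasWeakDerivOn (fun t => ∫ x in T1..t, g x) g (Ioo T1 T2) := by
  intro φ hφ hc hs
  have htest : IsTestFunction (Ioo T1 T2) φ := ⟨hφ, hc, hs⟩
  set G : ℝ → ℝ := fun t => ∫ x in T1..t, g x
  have hG : AbsolutelyContinuousOnInterval G T1 T2 :=
    hg.absolutelyContinuousOnInterval_intervalIntegral left_mem_uIcc
  have hφac : AbsolutelyContinuousOnInterval φ T1 T2 :=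
    (hφ.of_le (by simp)).contDiffOn.absolutelyContinuousOnInterval
  have hφ' : Continuous (deriv φ) := hφ.continuous_deriv (by simp)
  have hparts := AbsolutelyContinuousOnInterval.integral_deriv_mul_eq_sub hφac hG
  have hG' : ∫ x in T1..T2, φ x * deriv G x = ∫ x in T1..T2, φ x * g x := by
    apply intervalIntegral.integral_congr_ae
    filter_upwards [hg.ae_hasDerivAt_integral] with x hx hxT
    rw [(hx (uIoc_subset_uIcc hxT) T1 left_mem_uIcc).deriv]
  rw [intervalIntegral.integral_add
    (f := fun x => deriv φ x * G x) (hφ'.continuousOn.mul hG.continuousOn).intervalIntegrable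
    (hG.intervalIntegrable_deriv.continuousOn_mul hφ.continuous.continuousOn), hG',
    htest.eq_zero left_notMem_Ioo, htest.eq_zero right_notMem_Ioo] at hparts
  simp only [smul_eq_mul]
  rw [← integral_Ioc_eq_integral_Ioo, ← intervalIntegral.integral_of_le hT,
    ← integral_Ioc_eq_integral_Ioo, ← intervalIntegral.integral_of_le hT]
  linarith

lemma HasWeakDerivOn.eqOn_const_add_integral {T1 T2 : ℝ} (hT : T1 < T2) {f g : ℝ → ℝ}
    (hf : ContinuousOn f (Ioo T1 T2)) (hfg : HasWeakDerivOn f g (Ioo T1 T2))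
    (hg : IntervalIntegrable g volume T1 T2) :
    ∃ c, ∀ t ∈ Ioo T1 T2, f t = c + ∫ x in T1..t, g x := by
  have hG : ContinuousOn (fun t => ∫ x in T1..t, g x) (Ioo T1 T2) :=
    (hg.absolutelyContinuousOnInterval_intervalIntegral left_mem_uIcc).continuousOn.mono
      (Ioo_subset_Icc_self.trans Icc_subset_uIcc)
  obtain ⟨c, hc⟩ := eqOn_const_of_hasWeakDerivOn_zero hT (hf.sub hG) fun φ h1 h2 h3 => by
    have htest : IsTestFunction (Ioo T1 T2) (deriv φ) :=
      ⟨(contDiff_infty_iff_deriv.1 h1).2, h2.deriv, (tsupport_deriv_subset).trans h3⟩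
    simp only [smul_eq_mul, Pi.sub_apply, mul_sub, mul_zero, integral_zero, neg_zero]
    rw [integral_sub (htest.integrable_mul isOpen_Ioo hf).integrableOn
      (htest.integrable_mul isOpen_Ioo hG).integrableOn]
    exact sub_eq_zero.2 ((hfg φ h1 h2 h3).trans
      (hasWeakDerivOn_primitive hT.le hg φ h1 h2 h3).symm)
  exact ⟨c, fun t ht => by rw [← hc t ht]; simp⟩

lemma Wkloc.exists_eqOn_const_add_integral {f : ℝ → ℝ} (hf : Wkloc 1 f) (hcont : Continuous f)
    {T1 T2 : ℝ} (hT : T1 < T2) :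
    ∃ g : ℝ → ℝ, MemLp g 2 (volume.restrict (Ioo T1 T2)) ∧ IntervalIntegrable g volume T1 T2 ∧
      ∃ c, ∀ t ∈ Ioo T1 T2, f t = c + ∫ x in T1..t, g x := by
  obtain ⟨D, rfl, hweak, hmem⟩ := hf T1 T2 hT
  have hg : IntervalIntegrable (D 1) volume T1 T2 := by
    rw [intervalIntegrable_iff_integrableOn_Ioo_of_le hT.le]
    exact (hmem 1 le_rfl).integrable one_le_two
  exact ⟨D 1, hmem 1 le_rfl, hg,
    (hweak 0 one_pos).eqOn_const_add_integral hT hcont.continuousOn hg⟩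

lemma Wkloc.memLp_deriv_and_sub_eq {f : ℝ → ℝ} (hf : Wkloc 1 f) (hcont : Continuous f)
    {s t : ℝ} (hst : s < t) :
    MemLp (deriv f) 2 (volume.restrict (Ioo s t)) ∧ f t - f s = ∫ x in s..t, deriv f x := by
  obtain ⟨g, hg, hgi, c, hfg⟩ :=
    hf.exists_eqOn_const_add_integral hcont (show s - 1 < t + 1 by linarith)
  have hmem : ∀ x ∈ Icc s t, x ∈ Ioo (s - 1) (t + 1) :=
    fun x hx => ⟨by linarith [hx.1], by linarith [hx.2]⟩
  have hderiv : ∀ᵐ x, x ∈ Icc s t → deriv f x = g x := by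
    filter_upwards [hgi.ae_hasDerivAt_integral] with x hx hxst
    have hx' := (hx (Icc_subset_uIcc (Ioo_subset_Icc_self (hmem x hxst))) (s - 1)
      left_mem_uIcc).const_add c
    refine (hx'.congr_of_eventuallyEq ?_).deriv
    filter_upwards [isOpen_Ioo.mem_nhds (hmem x hxst)] with y hy using hfg y hy
  constructor
  · refine MemLp.ae_eq ?_ (hg.mono_measure (Measure.restrict_mono_set _
      (Ioo_subset_Icc_self.trans hmem)))
    rw [Filter.EventuallyEq, ae_restrict_iff' measurableSet_Ioo]
    filter_upwards [hderiv] with x hx hxst using (hx (Ioo_subset_Icc_self hxst)).symm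
  · have hgx : ∀ x ∈ Icc s t, IntervalIntegrable g volume (s - 1) x := fun x hx =>
      hgi.mono_set (uIcc_subset_uIcc left_mem_uIcc
        (Icc_subset_uIcc (Ioo_subset_Icc_self (hmem x hx))))
    rw [hfg t (hmem t ⟨hst.le, le_rfl⟩), hfg s (hmem s ⟨le_rfl, hst.le⟩), add_sub_add_left_eq_sub,
      intervalIntegral.integral_interval_sub_left (hgx t ⟨hst.le, le_rfl⟩)
        (hgx s ⟨le_rfl, hst.le⟩)]
    apply intervalIntegral.integral_congr_ae
    filter_upwards [hderiv] with x hx hxst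
    rw [uIoc_of_le hst.le] at hxst
    exact (hx (Ioc_subset_Icc_self hxst)).symm

lemma Wkloc.hasL2Deriv {f : ℝ → ℝ} (hf : Wkloc 1 f) (hcont : Continuous f) :
    HasL2Deriv f (deriv f) where
  locL2 s t := by
    rcases lt_or_ge s t with h | h
    · exact (hf.memLp_deriv_and_sub_eq hcont h).1
    · simp [Ioo_eq_empty (not_lt.2 h)]
  sub_eq s t := by
    rcases lt_trichotomy s t with h | rfl | h
    · exact (hf.memLp_deriv_and_sub_eq hcont h).2
    · simp
    · rw [intervalIntegral.integral_symm, ← (hf.memLp_deriv_and_sub_eq hcont h).2]; ring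

/-! ### Forced decay modes -/

/-- The solution of `y' = -l y - p d`, `y(τ) = a`. -/
def decayMode (l τ a p : ℝ) (d : ℝ → ℝ) (t : ℝ) : ℝ :=
  Real.exp (-l * (t - τ)) * (a - p * ∫ s in τ..t, Real.exp (l * (s - τ)) * d s)

section DecayMode

variable {l τ a p : ℝ} {d y : ℝ → ℝ}

lemma decayMode_self (l τ a p : ℝ) (d : ℝ → ℝ) : decayMode l τ a p d τ = a := by simp [decayMode]

lemma decayMode_eq_add (l τ a p : ℝ) (d : ℝ → ℝ) (t : ℝ) :
    decayMode l τ a p d t = a * Real.exp (-l * (t - τ)) + decayMode l τ 0 p d t := by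
  simp only [decayMode]; ring

lemma hasL2Deriv_decayMode (l τ a p : ℝ) (hd : LocL2 d) :
    HasL2Deriv (decayMode l τ a p d) (fun t => -l * decayMode l τ a p d t - p * d t) := by
  have hexp : HasL2Deriv (fun t => Real.exp (-l * (t - τ)))
      (fun t => -l * Real.exp (-l * (t - τ))) := by
    refine .of_hasDerivAt (fun x => ?_) (by fun_prop)
    simpa [mul_comm] using (((hasDerivAt_id x).sub_const τ).const_mul (-l)).exp
  have hint := (HasL2Deriv.primitive
    (hd.continuous_mul (g := fun s => Real.exp (l * (s - τ))) (by fun_prop)) τ).const_mul (-p)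
  convert hexp.mul ((HasL2Deriv.const a).add hint) using 1
  · funext t; simp only [decayMode]; ring
  · funext t
    have : Real.exp (-l * (t - τ)) * Real.exp (l * (t - τ)) = 1 := by rw [← Real.exp_add]; simp
    simp only [decayMode]
    linear_combination (p * d t) * this

lemma sq_add_integral_sq_le (hl : 0 < l) (hd : LocL2 d)
    (hy : HasL2Deriv y (fun t => -l * y t - p * d t)) {T1 T2 : ℝ} (hT : T1 ≤ T2) :
    y T2 ^ 2 + l * ∫ t in T1..T2, y t ^ 2 ≤ y T1 ^ 2 + p ^ 2 / l * ∫ t in T1..T2, d t ^ 2 := by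
  have hy2 : IntervalIntegrable (fun t => y t ^ 2) volume T1 T2 :=
    (hy.continuous.pow 2).intervalIntegrable _ _
  have hd2 := hd.intervalIntegrable_sq T1 T2
  have hmono : y T2 * y T2 - y T1 * y T1 ≤ ∫ t in T1..T2, (-l * y t ^ 2 + p ^ 2 / l * d t ^ 2) := by
    rw [(hy.mul hy).sub_eq T1 T2]
    refine intervalIntegral.integral_mono_on hT ((hy.mul hy).intervalIntegrable _ _)
      ((hy2.const_mul _).add (hd2.const_mul _)) fun t _ => ?_
    have hsq : 0 ≤ (l * y t + p * d t) ^ 2 / l := by positivity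
    have hexpand : (l * y t + p * d t) ^ 2 / l =
        l * y t ^ 2 + 2 * p * d t * y t + p ^ 2 / l * d t ^ 2 := by
      field_simp; ring
    linarith
  rw [intervalIntegral.integral_add (hy2.const_mul _) (hd2.const_mul _),
    intervalIntegral.integral_const_mul, intervalIntegral.integral_const_mul] at hmono
  linarith

lemma abs_decayMode_le {k : ℝ} (hk : 0 < k) (hd : LocL2 d) {t T : ℝ} (ht : t ∈ Icc τ T) :
    |decayMode (k ^ 2) τ a p d t| ≤ |a| * Real.exp (-k ^ 2 * (t - τ)) +
      |p| / k * Real.sqrt (∫ s in τ..T, d s ^ 2) := by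
  rw [decayMode_eq_add]
  refine (abs_add_le _ _).trans (add_le_add (by rw [abs_mul, Real.abs_exp]) ?_)
  have henergy := sq_add_integral_sq_le (pow_pos hk 2) hd
    (hasL2Deriv_decayMode (k ^ 2) τ 0 p hd) ht.1
  rw [decayMode_self] at henergy
  have hnonneg : 0 ≤ k ^ 2 * ∫ s in τ..t, decayMode (k ^ 2) τ 0 p d s ^ 2 :=
    mul_nonneg (sq_nonneg k) (intervalIntegral.integral_nonneg ht.1 fun x _ => sq_nonneg _)
  have hint : 0 ≤ ∫ s in τ..T, d s ^ 2 :=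
    intervalIntegral.integral_nonneg (ht.1.trans ht.2) fun x _ => sq_nonneg _
  refine abs_le_of_sq_le_sq ?_ (by positivity)
  calc decayMode (k ^ 2) τ 0 p d t ^ 2 ≤ p ^ 2 / k ^ 2 * ∫ s in τ..t, d s ^ 2 := by linarith
    _ ≤ p ^ 2 / k ^ 2 * ∫ s in τ..T, d s ^ 2 := by
      gcongr; exact hd.integral_sq_mono le_rfl ht.1 ht.2
    _ = _ := by rw [mul_pow, Real.sq_sqrt hint, div_pow, sq_abs]

end DecayMode

/-! ### Decay in the frequency -/

/-- The square root of the `n`-th Dirichlet eigenvalue of `-d²/dx²` on `(0,1)`. -/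
def freq (n : ℕ) : ℝ := ((n : ℝ) + 1) * Real.pi

lemma one_le_freq (n : ℕ) : 1 ≤ freq n := by
  have := Real.pi_gt_three
  have : (0 : ℝ) ≤ n := Nat.cast_nonneg n
  unfold freq; nlinarith

lemma freq_pos (n : ℕ) : 0 < freq n := one_pos.trans_le (one_le_freq n)

lemma summable_one_div_freq_pow {j : ℕ} (hj : 2 ≤ j) : Summable (fun n => 1 / freq n ^ j) := by
  have hsq : Summable (fun n : ℕ => 1 / ((n : ℝ) + 1) ^ 2) := by
    simpa using (summable_nat_add_iff 1).2 (Real.summable_one_div_nat_pow.2 (le_refl 2))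
  refine hsq.of_nonneg_of_le (fun n => by have := freq_pos n; positivity) fun n => ?_
  apply one_div_le_one_div_of_le (by positivity)
  calc ((n : ℝ) + 1) ^ 2 ≤ freq n ^ 2 := by
        have := Real.pi_gt_three
        unfold freq; gcongr; nlinarith
    _ ≤ freq n ^ j := pow_le_pow_right₀ (one_le_freq n) hj

/-- Coefficients of order `freq n ^ (-j)`, uniformly on compact subsets of `(τ,∞)`. -/
def HasDecay (τ : ℝ) (j : ℕ) (c : ℕ → ℝ → ℝ) : Prop :=
  ∀ T1 T2, τ < T1 → ∃ C, ∀ n, ∀ t ∈ Icc T1 T2, |c n t| ≤ C / freq n ^ j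

/-- Coefficients that are square summable in `L²(T1,T2)` whenever `τ < T1 ≤ T2`, that is, the
coefficients of a function in `L²_loc(τ,∞;H)`. -/
structure LocSqSummable (τ : ℝ) (c : ℕ → ℝ → ℝ) : Prop where
  locL2 : ∀ n, LocL2 (c n)
  summable : ∀ T1 T2, τ < T1 → T1 ≤ T2 → Summable fun n => ∫ t in T1..T2, c n t ^ 2

namespace HasDecay

variable {τ : ℝ} {i j : ℕ} {c e : ℕ → ℝ → ℝ} {g d : ℝ → ℝ}

lemma exists_nonneg_bound (hc : HasDecay τ j c) {T1 : ℝ} (hT : τ < T1) (T2 : ℝ) :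
    ∃ C, 0 ≤ C ∧ ∀ n, ∀ t ∈ Icc T1 T2, |c n t| ≤ C / freq n ^ j := by
  obtain ⟨C, hC⟩ := hc T1 T2 hT
  refine ⟨|C|, abs_nonneg _, fun n t ht => (hC n t ht).trans ?_⟩
  have := freq_pos n
  gcongr
  exact le_abs_self C

lemma add (hc : HasDecay τ j c) (he : HasDecay τ j e) :
    HasDecay τ j (fun n t => c n t + e n t) := by
  intro T1 T2 hT
  obtain ⟨C, hC⟩ := hc T1 T2 hT
  obtain ⟨C', hC'⟩ := he T1 T2 hT
  refine ⟨C + C', fun n t ht => ?_⟩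
  rw [add_div]
  exact (abs_add_le _ _).trans (add_le_add (hC n t ht) (hC' n t ht))

lemma continuous_mul (hc : HasDecay τ j c) (hg : Continuous g) :
    HasDecay τ j (fun n t => g t * c n t) := by
  intro T1 T2 hT
  obtain ⟨C, hC⟩ := hc T1 T2 hT
  obtain ⟨B, hB⟩ :=
    (isCompact_Icc (a := T1) (b := T2)).exists_bound_of_continuousOn hg.continuousOn
  refine ⟨B * C, fun n t ht => ?_⟩
  rw [abs_mul, mul_div_assoc]
  exact mul_le_mul (hB t ht) (hC n t ht) (abs_nonneg _) ((norm_nonneg _).trans (hB t ht))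

lemma freq_pow_mul (i : ℕ) (hc : HasDecay τ (j + i) c) :
    HasDecay τ j (fun n t => freq n ^ i * c n t) := by
  intro T1 T2 hT
  obtain ⟨C, hC⟩ := hc T1 T2 hT
  refine ⟨C, fun n t ht => ?_⟩
  have hk := freq_pos n
  rw [abs_mul, abs_of_pos (pow_pos hk i)]
  calc freq n ^ i * |c n t| ≤ freq n ^ i * (C / freq n ^ (j + i)) := by gcongr; exact hC n t ht
    _ = C / freq n ^ j := by rw [pow_add]; field_simp

lemma mono (hc : HasDecay τ j c) (hij : i ≤ j) : HasDecay τ i c := by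
  intro T1 T2 hT
  obtain ⟨C, _, hC⟩ := hc.exists_nonneg_bound hT T2
  refine ⟨C, fun n t ht => (hC n t ht).trans ?_⟩
  have := freq_pos n
  have := one_le_freq n
  gcongr

lemma const {p : ℕ → ℝ} {C : ℝ} (hp : ∀ n, |p n| ≤ C / freq n ^ j) :
    HasDecay τ j (fun n _ => p n) := fun _ _ _ => ⟨C, fun n _ _ => hp n⟩

lemma mul_locL2 (hc : HasDecay τ 1 c) (hcont : ∀ n, Continuous (c n)) (hd : LocL2 d) :
    LocSqSummable τ (fun n t => c n t * d t) where
  locL2 n := hd.continuous_mul (hcont n)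
  summable T1 T2 hT hT12 := by
    obtain ⟨C, _, hC⟩ := hc.exists_nonneg_bound hT T2
    refine Summable.of_nonneg_of_le
      (fun n => intervalIntegral.integral_nonneg hT12 fun _ _ => sq_nonneg _) (fun n => ?_)
      ((summable_one_div_freq_pow le_rfl).mul_left (C ^ 2 * ∫ t in T1..T2, d t ^ 2))
    rw [mul_one_div, mul_div_right_comm, ← intervalIntegral.integral_const_mul]
    refine intervalIntegral.integral_mono_on hT12
      ((hd.continuous_mul (hcont n)).intervalIntegrable_sq _ _)
      ((hd.intervalIntegrable_sq _ _).const_mul _) fun t ht => ?_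
    have hle := hC n t ht
    rw [mul_pow, ← sq_abs (c n t), ← div_pow]
    rw [pow_one] at hle
    gcongr

end HasDecay

namespace LocSqSummable

variable {τ : ℝ} {c e : ℕ → ℝ → ℝ} {g : ℝ → ℝ}

lemma add (hc : LocSqSummable τ c) (he : LocSqSummable τ e) :
    LocSqSummable τ (fun n t => c n t + e n t) where
  locL2 n := (hc.locL2 n).add (he.locL2 n)
  summable T1 T2 hT hT12 := by
    refine Summable.of_nonneg_of_le
      (fun n => intervalIntegral.integral_nonneg hT12 fun _ _ => sq_nonneg _) (fun n => ?_)
      (((hc.summable T1 T2 hT hT12).mul_left 2).add ((he.summable T1 T2 hT hT12).mul_left 2))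
    have hci := ((hc.locL2 n).intervalIntegrable_sq T1 T2).const_mul 2
    have hei := ((he.locL2 n).intervalIntegrable_sq T1 T2).const_mul 2
    rw [← intervalIntegral.integral_const_mul, ← intervalIntegral.integral_const_mul,
      ← intervalIntegral.integral_add hci hei]
    refine intervalIntegral.integral_mono_on hT12
      (((hc.locL2 n).add (he.locL2 n)).intervalIntegrable_sq _ _) (hci.add hei) fun t _ => ?_
    rw [← mul_add]
    exact add_sq_le

lemma continuous_mul (hc : LocSqSummable τ c) (hg : Continuous g) :
    LocSqSummable τ (fun n t => g t * c n t) where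
  locL2 n := (hc.locL2 n).continuous_mul hg
  summable T1 T2 hT hT12 := by
    obtain ⟨B, hB⟩ :=
      (isCompact_Icc (a := T1) (b := T2)).exists_bound_of_continuousOn hg.continuousOn
    refine Summable.of_nonneg_of_le
      (fun n => intervalIntegral.integral_nonneg hT12 fun _ _ => sq_nonneg _) (fun n => ?_)
      ((hc.summable T1 T2 hT hT12).mul_left (B ^ 2))
    rw [← intervalIntegral.integral_const_mul]
    refine intervalIntegral.integral_mono_on hT12
      (((hc.locL2 n).continuous_mul hg).intervalIntegrable_sq _ _)
      (((hc.locL2 n).intervalIntegrable_sq _ _).const_mul _) fun t ht => ?_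
    rw [mul_pow, ← sq_abs (g t)]
    gcongr
    exact hB t ht

end LocSqSummable

lemma exp_neg_le_two_div_sq {x : ℝ} (hx : 0 < x) : Real.exp (-x) ≤ 2 / x ^ 2 := by
  rw [Real.exp_neg, inv_eq_one_div, div_le_div_iff₀ (Real.exp_pos x) (by positivity)]
  nlinarith [Real.quadratic_le_exp_of_nonneg hx.le]

section HeatModes

variable {τ A P : ℝ} {a p : ℕ → ℝ} {d : ℝ → ℝ}

lemma abs_div_freq_le (hp : ∀ n, |p n| ≤ P / freq n ^ 3) (n : ℕ) :
    |p n| / freq n ≤ P / freq n ^ 4 := by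
  have hk := freq_pos n
  rw [pow_succ, ← div_div]
  gcongr
  exact hp n

lemma hasDecay_decayMode (hd : LocL2 d) (hp : ∀ n, |p n| ≤ P / freq n ^ 3)
    (ha : ∀ n, |a n| ≤ A) :
    HasDecay τ 4 (fun n => decayMode (freq n ^ 2) τ (a n) (p n) d) := by
  intro T1 T2 hT
  refine ⟨A * (2 / (T1 - τ) ^ 2) + P * Real.sqrt (∫ s in τ..T2, d s ^ 2), fun n t ht => ?_⟩
  have hk := freq_pos n
  have hT' : 0 < T1 - τ := sub_pos.2 hT
  refine (abs_decayMode_le hk hd ⟨hT.le.trans ht.1, ht.2⟩).trans ?_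
  rw [add_div, mul_div_right_comm P]
  refine add_le_add ?_ (mul_le_mul_of_nonneg_right (abs_div_freq_le hp n) (Real.sqrt_nonneg _))
  have hexp : Real.exp (-freq n ^ 2 * (t - τ)) ≤ 2 / (freq n ^ 2 * (T1 - τ)) ^ 2 := by
    refine (Real.exp_le_exp.2 ?_).trans (exp_neg_le_two_div_sq (by positivity))
    rw [neg_mul]
    gcongr
    exact ht.1
  calc |a n| * Real.exp (-freq n ^ 2 * (t - τ))
      ≤ A * (2 / (freq n ^ 2 * (T1 - τ)) ^ 2) :=
        mul_le_mul (ha n) hexp (Real.exp_pos _).le ((abs_nonneg _).trans (ha n))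
    _ = A * (2 / (T1 - τ) ^ 2) / freq n ^ 4 := by field_simp

lemma locSqSummable_decayMode (hd : LocL2 d) (hp : ∀ n, |p n| ≤ P / freq n ^ 3)
    (ha : ∀ n, |a n| ≤ A) :
    LocSqSummable τ (fun n t => freq n ^ 4 * decayMode (freq n ^ 2) τ (a n) (p n) d t) where
  locL2 n := .of_continuous ((hasL2Deriv_decayMode _ _ _ _ hd).continuous.const_mul _)
  summable T1 T2 hT hT12 := by
    obtain ⟨C, hC⟩ := hasDecay_decayMode (τ := τ) hd hp ha T1 T2 hT
    set K := ∫ t in T1..T2, d t ^ 2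
    have hK : 0 ≤ K := intervalIntegral.integral_nonneg hT12 fun _ _ => sq_nonneg _
    refine Summable.of_nonneg_of_le
      (fun n => intervalIntegral.integral_nonneg hT12 fun _ _ => sq_nonneg _) (fun n => ?_)
      ((summable_one_div_freq_pow le_rfl).mul_left (C ^ 2 + P ^ 2 * K))
    have hk := freq_pos n
    set y := decayMode (freq n ^ 2) τ (a n) (p n) d
    have hy1 : y T1 ^ 2 ≤ (C / freq n ^ 4) ^ 2 := by
      rw [← sq_abs]; gcongr; exact hC n T1 ⟨le_rfl, hT12⟩
    have hpn : p n ^ 2 ≤ (P / freq n ^ 3) ^ 2 := by rw [← sq_abs]; gcongr; exact hp n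
    have henergy := sq_add_integral_sq_le (pow_pos hk 2) hd
      (hasL2Deriv_decayMode (freq n ^ 2) τ (a n) (p n) hd) hT12
    have hpK : p n ^ 2 / freq n ^ 2 * K ≤ (P / freq n ^ 3) ^ 2 / freq n ^ 2 * K := by gcongr
    simp only [mul_pow]
    rw [intervalIntegral.integral_const_mul]
    calc (freq n ^ 4) ^ 2 * ∫ t in T1..T2, y t ^ 2
        = freq n ^ 6 * (freq n ^ 2 * ∫ t in T1..T2, y t ^ 2) := by ring
      _ ≤ freq n ^ 6 * ((C / freq n ^ 4) ^ 2 + (P / freq n ^ 3) ^ 2 / freq n ^ 2 * K) := by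
        gcongr; linarith [sq_nonneg (y T2)]
      _ = (C ^ 2 + P ^ 2 * K) * (1 / freq n ^ 2) := by field_simp

lemma exists_summable_bound_decayMode (hd : LocL2 d) (hp : ∀ n, |p n| ≤ P / freq n ^ 3)
    (ha : Summable fun n => |a n|) (T : ℝ) :
    ∃ M : ℕ → ℝ, Summable M ∧
      ∀ n, ∀ t ∈ Icc τ T, |decayMode (freq n ^ 2) τ (a n) (p n) d t| ≤ M n := by
  refine ⟨_, ha.add ((summable_one_div_freq_pow (j := 4) (by norm_num)).mul_left
    (P * Real.sqrt (∫ s in τ..T, d s ^ 2))), fun n t ht => ?_⟩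
  have hk := freq_pos n
  refine (abs_decayMode_le hk hd ht).trans
    (add_le_add (mul_le_of_le_one_right (abs_nonneg _) ?_) ?_)
  · rw [Real.exp_le_one_iff]
    nlinarith [pow_pos hk 2, ht.1]
  · rw [mul_one_div, mul_div_right_comm]
    exact mul_le_mul_of_nonneg_right (abs_div_freq_le hp n) (Real.sqrt_nonneg _)

end HeatModes

/-! ### Orthonormal series with time-dependent coefficients -/

section OrthonormalSeries

open Filter Topology

variable {E : Type*} [NormedAddCommGroup E] [InnerProductSpace ℝ E] {ι : Type*} {e : ι → E}

lemma norm_sum_smul_sq_of_orthonormal (he : Orthonormal ℝ e) (c : ι → ℝ) (s : Finset ι) :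
    ‖∑ i ∈ s, c i • e i‖ ^ 2 = ∑ i ∈ s, c i ^ 2 := by
  simpa using he.orthogonalFamily.norm_sum c s

variable [CompleteSpace E]

lemma summable_smul_of_orthonormal (he : Orthonormal ℝ e) {c : ι → ℝ}
    (hc : Summable fun i => c i ^ 2) : Summable fun i => c i • e i := by
  simpa using (he.orthogonalFamily.summable_iff_norm_sq_summable c).2 (by simpa using hc)

lemma hasSum_sq_of_orthonormal (he : Orthonormal ℝ e) {c : ι → ℝ}
    (hc : Summable fun i => c i ^ 2) :
    HasSum (fun i => c i ^ 2) (‖∑' i, c i • e i‖ ^ 2) := by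
  have := (summable_smul_of_orthonormal he hc).hasSum.norm.pow 2
  simp only [norm_sum_smul_sq_of_orthonormal he] at this
  exact this

lemma summable_sq_of_abs_le {c M : ι → ℝ} (hM : Summable fun i => M i ^ 2)
    (hc : ∀ i, |c i| ≤ M i) : Summable fun i => c i ^ 2 :=
  hM.of_nonneg_of_le (fun _ => sq_nonneg _) fun i => by
    rw [← sq_abs]; exact pow_le_pow_left₀ (abs_nonneg _) (hc i) 2

lemma tendsto_tsum_smul_of_orthonormal {α : Type*} {l : Filter α} (he : Orthonormal ℝ e)
    {c : α → ι → ℝ} {d M : ι → ℝ} (hM : Summable fun i => M i ^ 2)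
    (hc : ∀ᶠ x in l, ∀ i, |c x i| ≤ M i) (hlim : ∀ i, Tendsto (c · i) l (𝓝 (d i))) :
    Tendsto (fun x => ∑' i, c x i • e i) l (𝓝 (∑' i, d i • e i)) := by
  rcases l.eq_or_neBot with rfl | _
  · exact tendsto_bot
  have hd : ∀ i, |d i| ≤ M i := fun i => le_of_tendsto (hlim i).abs (hc.mono fun _ hx => hx i)
  have hsq : Tendsto (fun x => ∑' i, (c x i - d i) ^ 2) l (𝓝 0) := by
    have := tendsto_tsum_of_dominated_convergence (𝓕 := l) (g := fun _ : ι => (0 : ℝ))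
      (f := fun x i => (c x i - d i) ^ 2) (hM.mul_left 4) (fun i => ?_) (hc.mono fun x hx i => ?_)
    · simpa using this
    · simpa using ((hlim i).sub_const (d i)).pow 2
    · rw [Real.norm_of_nonneg (sq_nonneg _), ← sq_abs]
      calc |c x i - d i| ^ 2 ≤ (M i + M i) ^ 2 := by
            gcongr; exact (abs_sub _ _).trans (add_le_add (hx i) (hd i))
        _ = 4 * M i ^ 2 := by ring
  have hnorm : (fun x => ‖∑' i, c x i • e i - ∑' i, d i • e i‖) =ᶠ[l]
      fun x => Real.sqrt (∑' i, (c x i - d i) ^ 2) := by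
    filter_upwards [hc] with x hx
    have hcx := summable_smul_of_orthonormal he (summable_sq_of_abs_le hM hx)
    have hdx := summable_smul_of_orthonormal he (summable_sq_of_abs_le hM hd)
    have hcd : Summable fun i => (c x i - d i) ^ 2 :=
      summable_sq_of_abs_le (M := fun i => 2 * M i)
        ((hM.mul_left 4).congr fun i => by ring) fun i =>
          ((abs_sub _ _).trans (add_le_add (hx i) (hd i))).trans_eq (two_mul _).symm
    rw [← hcx.tsum_sub hdx, (hasSum_sq_of_orthonormal he hcd).tsum_eq]
    simp only [sub_smul, Real.sqrt_sq (norm_nonneg _)]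
  rw [tendsto_iff_norm_sub_tendsto_zero]
  simpa only [Real.sqrt_zero] using hsq.sqrt.congr' hnorm.symm

section L2

variable {α : Type*} {m : MeasurableSpace α} {μ : Measure α} [Countable ι]
  {c : ι → α → ℝ} (hc : ∀ i, MemLp (c i) 2 μ) (hsum : Summable fun i => ∫ t, c i t ^ 2 ∂μ)

include hc hsum

lemma lintegral_tsum_enorm_sq_ne_top : ∫⁻ t, ∑' i, ‖c i t ^ 2‖ₑ ∂μ ≠ ⊤ := by
  rw [lintegral_tsum fun i => (hc i).integrable_sq.1.enorm]
  have hterm : ∀ i, ∫⁻ t, ‖c i t ^ 2‖ₑ ∂μ = ENNReal.ofReal (∫ t, c i t ^ 2 ∂μ) := fun i => by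
    rw [← ofReal_integral_norm_eq_lintegral_enorm (hc i).integrable_sq]
    simp
  simp only [hterm]
  exact hsum.tsum_ofReal_ne_top

lemma ae_summable_sq : ∀ᵐ t ∂μ, Summable fun i => c i t ^ 2 := by
  filter_upwards [ae_lt_top' (AEMeasurable.tsum fun i => (hc i).integrable_sq.1.enorm)
    (lintegral_tsum_enorm_sq_ne_top hc hsum)] with t ht
  simpa using tsum_enorm_ne_top_iff_summable_norm.1 ht.ne

lemma memLp_tsum_smul_of_orthonormal (he : Orthonormal ℝ e) :
    MemLp (fun t => ∑' i, c i t • e i) 2 μ := by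
  have hae := ae_summable_sq hc hsum
  have hmeas : AEStronglyMeasurable (fun t => ∑' i, c i t • e i) μ :=
    aestronglyMeasurable_of_tendsto_ae (u := atTop)
      (f := fun (s : Finset ι) t => ∑ i ∈ s, c i t • e i)
      (fun s => Finset.aestronglyMeasurable_fun_sum _ fun i _ => (hc i).1.smul_const (e i))
      (hae.mono fun t ht => (summable_smul_of_orthonormal he ht).hasSum)
  rw [memLp_two_iff_integrable_sq_norm hmeas]
  refine ⟨(hmeas.norm.pow 2), lt_of_le_of_lt (lintegral_mono_ae ?_)
    (lintegral_tsum_enorm_sq_ne_top hc hsum).lt_top⟩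
  filter_upwards [hae] with t ht
  rw [← (hasSum_sq_of_orthonormal he ht).tsum_eq]
  exact enorm_tsum_le_tsum_enorm

lemma hasSum_integral_smul_of_orthonormal (he : Orthonormal ℝ e) {φ : α → ℝ}
    (hφ : MemLp φ 2 μ) :
    HasSum (fun i => (∫ t, φ t * c i t ∂μ) • e i) (∫ t, φ t • ∑' i, c i t • e i ∂μ) := by
  have hS := memLp_tsum_smul_of_orthonormal hc hsum he
  have hae := ae_summable_sq hc hsum
  have hint : ∀ s : Finset ι, ∑ i ∈ s, (∫ t, φ t * c i t ∂μ) • e i =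
      ∫ t, φ t • ∑ i ∈ s, c i t • e i ∂μ := fun s => by
    simp only [Finset.smul_sum, smul_smul]
    have hi : ∀ i, Integrable (fun t => φ t * c i t) μ := fun i => hφ.integrable_mul (hc i)
    simp only [integral_finsetSum _ fun i _ => (hi i).smul_const (e i), integral_smul_const]
  simp only [HasSum, SummationFilter.unconditional_filter, hint]
  refine tendsto_integral_filter_of_dominated_convergence
    (fun t => ‖φ t‖ * ‖∑' i, c i t • e i‖) (.of_forall fun s => ?_) (.of_forall fun s => ?_)
    (hφ.norm.integrable_mul hS.norm) ?_
  · exact hφ.1.smul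
      (Finset.aestronglyMeasurable_fun_sum _ fun i _ => (hc i).1.smul_const (e i))
  · filter_upwards [hae] with t ht
    rw [norm_smul]
    gcongr
    refine le_of_sq_le_sq ?_ (norm_nonneg _)
    rw [norm_sum_smul_sq_of_orthonormal he]
    exact sum_le_hasSum s (fun _ _ => sq_nonneg _) (hasSum_sq_of_orthonormal he ht)
  · filter_upwards [hae] with t ht
    exact Tendsto.const_smul (summable_smul_of_orthonormal he ht).hasSum (φ t)

end L2

end OrthonormalSeries

section TimeRegularity

variable {E : Type*} [NormedAddCommGroup E] [InnerProductSpace ℝ E] [CompleteSpace E]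
  {e : ℕ → E} {τ : ℝ} {c c' : ℕ → ℝ → ℝ}

lemma summable_sq_div_freq (C : ℝ) : Summable fun n => (C / freq n ^ 1) ^ 2 :=
  ((summable_one_div_freq_pow le_rfl).mul_left (C ^ 2)).congr fun n => by
    rw [pow_one, div_pow, mul_one_div]

lemma continuousOn_tsum_smul_of_orthonormal (he : Orthonormal ℝ e) (hc : HasDecay τ 1 c)
    (hcont : ∀ n, Continuous (c n)) : ContinuousOn (fun t => ∑' n, c n t • e n) (Ioi τ) := by
  intro t ht
  obtain ⟨T1, hT1, hT1t⟩ := exists_between (mem_Ioi.1 ht)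
  obtain ⟨C, hC⟩ := hc T1 (t + 1) hT1
  refine ContinuousAt.continuousWithinAt <|
    tendsto_tsum_smul_of_orthonormal he (summable_sq_div_freq C) ?_ fun n => (hcont n).tendsto t
  filter_upwards [Icc_mem_nhds hT1t (lt_add_one t)] with s hs n using hC n s hs

lemma hasDerivAt_tsum_smul_of_orthonormal (he : Orthonormal ℝ e) (hc : HasDecay τ 1 c)
    (hc' : HasDecay τ 1 c') (hderiv : ∀ n t, HasDerivAt (c n) (c' n t) t) {t : ℝ} (ht : τ < t) :
    HasDerivAt (fun t => ∑' n, c n t • e n) (∑' n, c' n t • e n) t := by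
  obtain ⟨T1, hT1, hT1t⟩ := exists_between ht
  obtain ⟨C, hC⟩ := hc T1 (t + 1) hT1
  obtain ⟨C', hC'⟩ := hc' T1 (t + 1) hT1
  have hsummable : ∀ s ∈ Icc T1 (t + 1), Summable fun n => c n s • e n := fun s hs =>
    summable_smul_of_orthonormal he (summable_sq_of_abs_le (summable_sq_div_freq C) (hC · s hs))
  have htmem : t ∈ Icc T1 (t + 1) := ⟨hT1t.le, by linarith⟩
  have hmem : Icc T1 (t + 1) ∈ nhdsWithin t {t}ᶜ :=
    mem_nhdsWithin_of_mem_nhds (Icc_mem_nhds hT1t (lt_add_one t))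
  rw [hasDerivAt_iff_tendsto_slope]
  refine (tendsto_tsum_smul_of_orthonormal he (c := fun s n => slope (c n) t s)
    (summable_sq_div_freq C') ?_ fun n => (hderiv n t).tendsto_slope).congr' ?_
  · filter_upwards [hmem, self_mem_nhdsWithin] with s hs hst n
    have hmvt := (convex_Icc T1 (t + 1)).norm_image_sub_le_of_norm_hasDerivWithin_le
      (fun x _ => (hderiv n x).hasDerivWithinAt) (hC' n) htmem hs
    rw [slope_def_field, abs_div, div_le_iff₀ (abs_pos.2 (sub_ne_zero.2 hst))]
    exact hmvt
  · filter_upwards [hmem] with s hs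
    rw [slope_def_module, ← (hsummable s hs).tsum_sub (hsummable t htmem), ← tsum_const_smul'']
    simp only [slope_def_field, ← sub_smul, smul_smul, inv_mul_eq_div]

lemma HasL2Deriv.setIntegral_deriv_mul {U R φ : ℝ → ℝ} {T1 T2 : ℝ} (hT : T1 ≤ T2)
    (hU : HasL2Deriv U R) (hφ : IsTestFunction (Ioo T1 T2) φ) :
    ∫ t in Ioo T1 T2, deriv φ t * U t = -∫ t in Ioo T1 T2, φ t * R t := by
  have hdφ : Continuous (deriv φ) := hφ.contDiff.continuous_deriv (by simp)
  have hφ' : HasL2Deriv φ (deriv φ) := .of_hasDerivAt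
    (fun x => (hφ.contDiff.differentiable (by simp) x).hasDerivAt) hdφ
  have hparts := (hφ'.mul hU).sub_eq T1 T2
  have hφU : IntervalIntegrable (fun t => deriv φ t * U t) volume T1 T2 :=
    (hdφ.mul hU.continuous).intervalIntegrable _ _
  have hφR : IntervalIntegrable (fun t => φ t * R t) volume T1 T2 :=
    (hU.intervalIntegrable _ _).continuousOn_mul hφ'.continuous.continuousOn
  rw [hφ.eq_zero (fun h => h.1.false), hφ.eq_zero (fun h => h.2.false),
    intervalIntegral.integral_add hφU hφR] at hparts
  simp only [← integral_Ioc_eq_integral_Ioo, ← intervalIntegral.integral_of_le hT]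
  linarith

variable {U R : ℕ → ℝ → ℝ} {T1 T2 : ℝ}

lemma LocSqSummable.summable_setIntegral (hR : LocSqSummable τ R) (h1 : τ < T1) (hT : T1 ≤ T2) :
    Summable fun n => ∫ t in Ioo T1 T2, R n t ^ 2 := by
  simpa only [← integral_Ioc_eq_integral_Ioo, ← intervalIntegral.integral_of_le hT]
    using hR.summable T1 T2 h1 hT

lemma memLp_tsum_smul_of_locSqSummable (he : Orthonormal ℝ e) (hR : LocSqSummable τ R)
    (h1 : τ < T1) (hT : T1 ≤ T2) :
    MemLp (fun t => ∑' n, R n t • e n) 2 (volume.restrict (Ioo T1 T2)) :=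
  memLp_tsum_smul_of_orthonormal (fun n => hR.locL2 n T1 T2) (hR.summable_setIntegral h1 hT) he

lemma hasWeakDerivOn_tsum_smul (he : Orthonormal ℝ e) (hUR : ∀ n, HasL2Deriv (U n) (R n))
    (hU : LocSqSummable τ U) (hR : LocSqSummable τ R) (h1 : τ < T1) (hT : T1 ≤ T2) :
    HasWeakDerivOn (fun t => ∑' n, U n t • e n) (fun t => ∑' n, R n t • e n) (Ioo T1 T2) := by
  intro φ hφ hcpt hsupp
  have hφL2 : LocL2 φ := .of_continuous hφ.continuous
  have hφ'L2 : LocL2 (deriv φ) := .of_continuous (hφ.continuous_deriv (by simp))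
  have hsumU := hasSum_integral_smul_of_orthonormal (fun n => hU.locL2 n T1 T2)
    (hU.summable_setIntegral h1 hT) he (hφ'L2 T1 T2)
  have hsumR := hasSum_integral_smul_of_orthonormal (fun n => hR.locL2 n T1 T2)
    (hR.summable_setIntegral h1 hT) he (hφL2 T1 T2)
  refine hsumU.unique ?_
  simpa only [neg_smul, (hUR _).setIntegral_deriv_mul hT ⟨hφ, hcpt, hsupp⟩] using hsumR.neg

lemma HasDecay.locSqSummable (hc : HasDecay τ 1 c) (hcont : ∀ n, Continuous (c n)) :
    LocSqSummable τ c := by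
  simpa using hc.mul_locL2 hcont (.of_continuous continuous_one)

end TimeRegularity

/-! ### The trigonometric bases of `L²(0,1)` -/

section Completeness

open Polynomial

instance isFiniteMeasure_μ01 : IsFiniteMeasure μ01 := by unfold μ01; infer_instance

lemma ae_μ01_mem : ∀ᵐ x ∂μ01, x ∈ Ioo (0 : ℝ) 1 := ae_restrict_mem measurableSet_Ioo

lemma integral_μ01 (f : ℝ → ℝ) : ∫ x, f x ∂μ01 = ∫ x in (0 : ℝ)..1, f x := by
  rw [μ01, ← integral_Ioc_eq_integral_Ioo, ← intervalIntegral.integral_of_le zero_le_one]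

variable {h : ℝ → ℝ}

lemma integrable_mul_continuous_μ01 (hh : Integrable h μ01) {g : ℝ → ℝ} (hg : Continuous g) :
    Integrable (fun x => h x * g x) μ01 := by
  obtain ⟨B, hB⟩ := (isCompact_Icc (a := (0 : ℝ)) (b := 1)).exists_bound_of_continuousOn
    hg.continuousOn
  exact hh.mul_bdd (c := B) hg.aestronglyMeasurable
    (ae_μ01_mem.mono fun x hx => hB x (Ioo_subset_Icc_self hx))

lemma integral_mul_sin_mul_eval_cos_eq_zero (hh : Integrable h μ01)
    (h0 : ∀ n, ∫ x, h x * Real.sin (freq n * x) ∂μ01 = 0) (p : ℝ[X]) :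
    ∫ x, h x * (Real.sin (Real.pi * x) * p.eval (Real.cos (Real.pi * x))) ∂μ01 = 0 := by
  let chebyshev : Polynomial.Sequence ℝ := ⟨fun n => Chebyshev.U ℝ n, Chebyshev.degree_U_natCast ℝ⟩
  have hspan : p ∈ Submodule.span ℝ (range chebyshev) := by
    rw [chebyshev.span fun i => (leadingCoeff_ne_zero.2 (chebyshev.ne_zero i)).isUnit]
    trivial
  have hcont : ∀ q : ℝ[X], Integrable
      (fun x => h x * (Real.sin (Real.pi * x) * q.eval (Real.cos (Real.pi * x)))) μ01 := fun q =>
    integrable_mul_continuous_μ01 hh ((by fun_prop : Continuous fun x => Real.sin (Real.pi * x)).mul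
      (q.continuous.comp (by fun_prop : Continuous fun x => Real.cos (Real.pi * x))))
  induction hspan using Submodule.span_induction with
  | mem q hq =>
    obtain ⟨n, rfl⟩ := hq
    rw [← h0 n]
    refine integral_congr_ae (.of_forall fun x => ?_)
    simp only [chebyshev, freq, mul_assoc]
    rw [mul_comm (Real.sin _)]
    exact congrArg (h x * ·) (by simp)
  | zero => simp
  | add p q _ _ hp hq =>
    simp only [eval_add, mul_add] at hp hq hcont ⊢
    rw [integral_add (hcont p) (hcont q), hp, hq, add_zero]
  | smul a p _ hp =>
    simp only [eval_smul, smul_eq_mul, mul_left_comm _ a]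
    rw [integral_const_mul, hp, mul_zero]

lemma integral_mul_sin_mul_continuous_eq_zero (hh : Integrable h μ01)
    (h0 : ∀ n, ∫ x, h x * Real.sin (freq n * x) ∂μ01 = 0) {g : ℝ → ℝ} (hg : Continuous g) :
    ∫ x, h x * (Real.sin (Real.pi * x) * g x) ∂μ01 = 0 := by
  have hgcos : Continuous fun y => g (Real.arccos y / Real.pi) :=
    hg.comp (Real.continuous_arccos.div_const _)
  have hsin : Continuous fun x => Real.sin (Real.pi * x) := by fun_prop
  have hle : ∀ ε > 0, |∫ x, h x * (Real.sin (Real.pi * x) * g x) ∂μ01| ≤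
      ε * ∫ x, |h x| ∂μ01 := fun ε hε => by
    obtain ⟨p, hp⟩ := exists_polynomial_near_of_continuousOn (-1) 1 _ hgcos.continuousOn ε hε
    have hpcont : Continuous fun x => p.eval (Real.cos (Real.pi * x)) :=
      p.continuous.comp (by fun_prop)
    have hg_int : Integrable (fun x => h x * (Real.sin (Real.pi * x) * g x)) μ01 :=
      integrable_mul_continuous_μ01 hh (hsin.mul hg)
    have hp_int : Integrable
        (fun x => h x * (Real.sin (Real.pi * x) * p.eval (Real.cos (Real.pi * x)))) μ01 :=
      integrable_mul_continuous_μ01 hh (hsin.mul hpcont)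
    rw [← sub_zero (∫ x, h x * (Real.sin (Real.pi * x) * g x) ∂μ01),
      ← integral_mul_sin_mul_eval_cos_eq_zero hh h0 p, ← integral_sub hg_int hp_int,
      ← integral_const_mul, ← Real.norm_eq_abs]
    refine norm_integral_le_of_norm_le (hh.norm.const_mul ε) (ae_μ01_mem.mono fun x hx => ?_)
    have hx' : Real.arccos (Real.cos (Real.pi * x)) / Real.pi = x := by
      rw [Real.arccos_cos (by have := hx.1; positivity) (by nlinarith [hx.2, Real.pi_pos])]
      field_simp
    have hnear := hp (Real.cos (Real.pi * x)) ⟨Real.neg_one_le_cos _, Real.cos_le_one _⟩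
    rw [hx', abs_sub_comm] at hnear
    calc ‖h x * (Real.sin (Real.pi * x) * g x) -
          h x * (Real.sin (Real.pi * x) * p.eval (Real.cos (Real.pi * x)))‖
        = |h x| * (|Real.sin (Real.pi * x)| * |g x - p.eval (Real.cos (Real.pi * x))|) := by
          rw [← mul_sub, ← mul_sub, Real.norm_eq_abs, abs_mul, abs_mul]
      _ ≤ |h x| * (1 * ε) := by gcongr; exact Real.abs_sin_le_one _
      _ = ε * ‖h x‖ := by rw [one_mul, mul_comm, Real.norm_eq_abs]
  have hlim : Filter.Tendsto (fun ε => ε * ∫ x, |h x| ∂μ01) (nhdsWithin 0 (Ioi 0)) (nhds 0) := by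
    exact ((continuous_id.mul continuous_const).tendsto' 0 0 (zero_mul _)).mono_left
      nhdsWithin_le_nhds
  exact abs_nonpos_iff.1 (ge_of_tendsto hlim (Filter.eventually_of_mem self_mem_nhdsWithin hle))

lemma ae_eq_zero_of_integral_mul_sin_eq_zero (hh : Integrable h μ01)
    (h0 : ∀ n, ∫ x, h x * Real.sin (freq n * x) ∂μ01 = 0) : ∀ᵐ x ∂μ01, h x = 0 := by
  have hsin : Continuous fun x => Real.sin (Real.pi * x) := by fun_prop
  have hzero : ∀ᵐ x ∂μ01, x ∈ Ioo (0 : ℝ) 1 → h x * Real.sin (Real.pi * x) = 0 := by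
    refine isOpen_Ioo.ae_eq_zero_of_integral_contDiff_smul_eq_zero
      ((integrable_mul_continuous_μ01 hh hsin).locallyIntegrable.locallyIntegrableOn _)
      fun g hg _ _ => ?_
    rw [← integral_mul_sin_mul_continuous_eq_zero hh h0 hg.continuous]
    exact integral_congr_ae (.of_forall fun x => by simp only [smul_eq_mul]; ring)
  filter_upwards [hzero, ae_μ01_mem] with x hx hmem
  refine (mul_eq_zero.1 (hx hmem)).resolve_right (Real.sin_pos_of_pos_of_lt_pi ?_ ?_).ne'
  · exact mul_pos Real.pi_pos hmem.1
  · exact mul_lt_of_lt_one_right Real.pi_pos hmem.2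

end Completeness

section Bases

lemma memLp_Ioo_of_continuousOn {E : Type*} [NormedAddCommGroup E] {f : ℝ → E} {s t : ℝ}
    (hf : ContinuousOn f (Icc s t)) : MemLp f 2 (volume.restrict (Ioo s t)) := by
  obtain ⟨B, hB⟩ := isCompact_Icc.exists_bound_of_continuousOn hf
  exact .of_bound ((hf.mono Ioo_subset_Icc_self).aestronglyMeasurable measurableSet_Ioo) B
    ((ae_restrict_mem measurableSet_Ioo).mono fun x hx => hB x (Ioo_subset_Icc_self hx))

lemma memLp_μ01_of_continuousOn {f : ℝ → ℝ} (hf : ContinuousOn f (Icc 0 1)) : MemLp f 2 μ01 :=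
  memLp_Ioo_of_continuousOn hf

/-- The normalised Dirichlet eigenfunctions `√2 sin((n+1)πx)` of `-d²/dx²`. -/
def sinFun (n : ℕ) (x : ℝ) : ℝ := √2 * Real.sin (freq n * x)

/-- The normalised derivatives `√2 cos((n+1)πx)` of the Dirichlet eigenfunctions. -/
def cosFun (n : ℕ) (x : ℝ) : ℝ := √2 * Real.cos (freq n * x)

lemma continuous_sinFun (n : ℕ) : Continuous (sinFun n) := by unfold sinFun; fun_prop

lemma continuous_cosFun (n : ℕ) : Continuous (cosFun n) := by unfold cosFun; fun_prop

lemma hasDerivAt_sinFun (n : ℕ) (x : ℝ) : HasDerivAt (sinFun n) (freq n * cosFun n x) x :=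
  ((((hasDerivAt_id x).const_mul (freq n)).sin).const_mul √2).congr_deriv (by
    simp only [cosFun, id]; ring)

lemma hasDerivAt_cosFun (n : ℕ) (x : ℝ) : HasDerivAt (cosFun n) (-freq n * sinFun n x) x :=
  ((((hasDerivAt_id x).const_mul (freq n)).cos).const_mul √2).congr_deriv (by
    simp only [sinFun, id]; ring)

lemma abs_sinFun_le (n : ℕ) (x : ℝ) : |sinFun n x| ≤ √2 := by
  rw [sinFun, abs_mul, abs_of_nonneg (Real.sqrt_nonneg 2)]
  exact mul_le_of_le_one_right (Real.sqrt_nonneg 2) (Real.abs_sin_le_one _)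

lemma abs_cosFun_le (n : ℕ) (x : ℝ) : |cosFun n x| ≤ √2 := by
  rw [cosFun, abs_mul, abs_of_nonneg (Real.sqrt_nonneg 2)]
  exact mul_le_of_le_one_right (Real.sqrt_nonneg 2) (Real.abs_cos_le_one _)

lemma sinFun_zero (n : ℕ) : sinFun n 0 = 0 := by simp [sinFun]

lemma sinFun_one (n : ℕ) : sinFun n 1 = 0 := by
  simpa [sinFun, freq] using Real.sin_nat_mul_pi (n + 1)

/-- The class of `sinFun n` in `H`. -/
def sinVec (n : ℕ) : Hsp := (memLp_μ01_of_continuousOn (continuous_sinFun n).continuousOn).toLp _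

/-- The class of `cosFun n` in `H`. -/
def cosVec (n : ℕ) : Hsp := (memLp_μ01_of_continuousOn (continuous_cosFun n).continuousOn).toLp _

lemma coeFn_sinVec (n : ℕ) : sinVec n =ᵐ[μ01] sinFun n := MemLp.coeFn_toLp _

lemma coeFn_cosVec (n : ℕ) : cosVec n =ᵐ[μ01] cosFun n := MemLp.coeFn_toLp _

lemma inner_eq_integral {u v : Hsp} {f g : ℝ → ℝ} (hu : u =ᵐ[μ01] f) (hv : v =ᵐ[μ01] g) :
    inner ℝ u v = ∫ x, f x * g x ∂μ01 := by
  rw [L2.inner_def]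
  refine integral_congr_ae ?_
  filter_upwards [hu, hv] with x hux hvx
  rw [hux, hvx, real_inner_eq_re_inner, mul_comm]
  rfl

lemma integral_cos_int_mul_pi (m : ℤ) :
    ∫ x in (0 : ℝ)..1, Real.cos (m * Real.pi * x) = if m = 0 then 1 else 0 := by
  split_ifs with hm
  · simp [hm]
  · have : (m : ℝ) * Real.pi ≠ 0 := mul_ne_zero (Int.cast_ne_zero.2 hm) Real.pi_ne_zero
    rw [intervalIntegral.integral_comp_mul_left _ this, integral_cos]
    simp [Real.sin_int_mul_pi]

lemma integral_cos_sub_add_freq (σ : ℝ) (i j : ℕ) :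
    ∫ x, (Real.cos ((freq i - freq j) * x) + σ * Real.cos ((freq i + freq j) * x)) ∂μ01 =
      if i = j then 1 else 0 := by
  have hsub : freq i - freq j = ((i - j : ℤ) : ℝ) * Real.pi := by
    simp only [freq]; push_cast; ring
  have hadd : freq i + freq j = ((i + j + 2 : ℤ) : ℝ) * Real.pi := by
    simp only [freq]; push_cast; ring
  rw [integral_μ01, intervalIntegral.integral_add (Continuous.intervalIntegrable (by fun_prop) _ _)
    (Continuous.intervalIntegrable (by fun_prop) _ _), intervalIntegral.integral_const_mul,
    hsub, hadd, integral_cos_int_mul_pi, integral_cos_int_mul_pi,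
    if_neg (by lia : (i + j + 2 : ℤ) ≠ 0)]
  simp [sub_eq_zero]

lemma orthonormal_sinVec : Orthonormal ℝ sinVec := by
  rw [orthonormal_iff_ite]
  intro i j
  rw [inner_eq_integral (coeFn_sinVec i) (coeFn_sinVec j), ← integral_cos_sub_add_freq (-1)]
  refine integral_congr_ae (.of_forall fun x => ?_)
  simp only [sinFun, sub_mul, add_mul, Real.cos_sub, Real.cos_add]
  linear_combination
    (Real.sin (freq i * x) * Real.sin (freq j * x)) * Real.mul_self_sqrt zero_le_two

lemma orthonormal_cosVec : Orthonormal ℝ cosVec := by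
  rw [orthonormal_iff_ite]
  intro i j
  rw [inner_eq_integral (coeFn_cosVec i) (coeFn_cosVec j), ← integral_cos_sub_add_freq 1]
  refine integral_congr_ae (.of_forall fun x => ?_)
  simp only [cosFun, sub_mul, add_mul, Real.cos_sub, Real.cos_add]
  linear_combination
    (Real.cos (freq i * x) * Real.cos (freq j * x)) * Real.mul_self_sqrt zero_le_two

lemma orthogonal_span_sinVec : (Submodule.span ℝ (range sinVec))ᗮ = ⊥ := by
  rw [Submodule.eq_bot_iff]
  intro v hv
  have hint : Integrable v μ01 := (Lp.memLp v).integrable one_le_two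
  refine Lp.eq_zero_iff_ae_eq_zero.2 (ae_eq_zero_of_integral_mul_sin_eq_zero hint fun n => ?_)
  have := Submodule.inner_right_of_mem_orthogonal (Submodule.subset_span (mem_range_self n)) hv
  rw [inner_eq_integral (coeFn_sinVec n) (ae_eq_refl v)] at this
  simp only [sinFun, mul_assoc, integral_const_mul] at this
  simp only [mul_comm (v _)]
  exact (mul_eq_zero.1 this).resolve_left (Real.sqrt_ne_zero'.2 two_pos)

lemma hasSum_inner_sinVec (v : Hsp) : HasSum (fun n => inner ℝ (sinVec n) v • sinVec n) v := by
  simpa [HilbertBasis.repr_apply_apply] using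
    (HilbertBasis.mkOfOrthogonalEqBot orthonormal_sinVec orthogonal_span_sinVec).hasSum_repr v

lemma coeFn_tsum_smul {v : ℕ → Hsp} (hv : ∀ n, ‖v n‖ = 1) {f : ℕ → ℝ → ℝ}
    (hvf : ∀ n, v n =ᵐ[μ01] f n) {c : ℕ → ℝ} (hc : Summable fun n => |c n|) :
    (∑' n, c n • v n : Hsp) =ᵐ[μ01] fun x => ∑' n, c n * f n x := by
  have hnorm : ∑' n, ‖c n • v n‖ₑ ≠ ⊤ :=
    tsum_enorm_ne_top_iff_summable_norm.2 (by simpa [norm_smul, hv] using hc)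
  filter_upwards [Lp.coeFn_tsum hnorm, ae_all_iff.2 hvf, ae_all_iff.2 fun n =>
    Lp.coeFn_smul (c n) (v n)] with x hx hvx hsmul
  simp only [hx, hsmul, Pi.smul_apply, smul_eq_mul, hvx]

end Bases

section SpatialWeakDerivative

lemma isSpatialWeakDeriv_of_hasDerivAt {v w : Hsp} {f f' : ℝ → ℝ} (hv : v =ᵐ[μ01] f)
    (hw : w =ᵐ[μ01] f') (hf : ∀ x, HasDerivAt f (f' x) x) (hf' : Continuous f') :
    IsSpatialWeakDeriv v w := by
  intro φ hφ hcpt hsupp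
  change ∫ x, deriv φ x * v x ∂μ01 = -∫ x, φ x * w x ∂μ01
  rw [integral_congr_ae (hv.mono fun x hx => congrArg (deriv φ x * ·) hx),
    integral_congr_ae (hw.mono fun x hx => congrArg (φ x * ·) hx)]
  exact (HasL2Deriv.of_hasDerivAt hf hf').setIntegral_deriv_mul zero_le_one ⟨hφ, hcpt, hsupp⟩

lemma isSpatialWeakDeriv_tsum_smul {e e' : ℕ → Hsp} (he : Orthonormal ℝ e)
    (he' : Orthonormal ℝ e') {l c : ℕ → ℝ} (hderiv : ∀ n, IsSpatialWeakDeriv (e n) (l n • e' n))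
    (hc : Summable fun n => c n ^ 2) (hlc : Summable fun n => (l n * c n) ^ 2) :
    IsSpatialWeakDeriv (∑' n, c n • e n) (∑' n, (l n * c n) • e' n) := by
  intro φ hφ hcpt hsupp
  have hLp : ∀ {f : ℝ → ℝ}, Continuous f → ∃ F : Hsp, F =ᵐ[μ01] f := fun hf =>
    ⟨_, (memLp_μ01_of_continuousOn hf.continuousOn).coeFn_toLp⟩
  obtain ⟨Φ, hΦ⟩ := hLp hφ.continuous
  obtain ⟨Φ', hΦ'⟩ := hLp (hφ.continuous_deriv (by simp))
  have hterm : ∀ n, inner ℝ Φ' (c n • e n) = -inner ℝ Φ ((l n * c n) • e' n) := fun n => by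
    rw [mul_comm, ← smul_smul, inner_smul_right, inner_smul_right, ← mul_neg,
      inner_eq_integral hΦ' (ae_eq_refl _), inner_eq_integral hΦ (ae_eq_refl _)]
    exact congrArg (c n * ·) (hderiv n φ hφ hcpt hsupp)
  have hsum := (summable_smul_of_orthonormal he hc).hasSum.mapL (innerSL ℝ Φ')
  have hsum' := ((summable_smul_of_orthonormal he' hlc).hasSum.mapL (innerSL ℝ Φ)).neg
  simp only [innerSL_apply_apply, hterm] at hsum hsum'
  have h := hsum.unique hsum'
  rwa [inner_eq_integral hΦ' (ae_eq_refl _), inner_eq_integral hΦ (ae_eq_refl _)] at h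

lemma isSpatialWeakDeriv_sinVec (n : ℕ) : IsSpatialWeakDeriv (sinVec n) (freq n • cosVec n) :=
  isSpatialWeakDeriv_of_hasDerivAt (coeFn_sinVec n) ((Lp.coeFn_smul _ _).trans
    ((coeFn_cosVec n).const_smul (freq n))) (hasDerivAt_sinFun n)
    ((continuous_cosFun n).const_smul (freq n))

lemma isSpatialWeakDeriv_cosVec (n : ℕ) : IsSpatialWeakDeriv (cosVec n) (-freq n • sinVec n) :=
  isSpatialWeakDeriv_of_hasDerivAt (coeFn_cosVec n) ((Lp.coeFn_smul _ _).trans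
    ((coeFn_sinVec n).const_smul (-freq n))) (hasDerivAt_cosFun n)
    ((continuous_sinFun n).const_smul (-freq n))

lemma IsSpatialWeakDeriv.sub_smul {v v' w w' : Hsp} (h : IsSpatialWeakDeriv v v')
    (h' : IsSpatialWeakDeriv w w') (a : ℝ) : IsSpatialWeakDeriv (v - a • w) (v' - a • w') := by
  intro φ hφ hcpt hsupp
  have hsub {ψ : ℝ → ℝ} (hψ : Continuous ψ) (p q : Hsp) : ∫ x, ψ x * (p - a • q : Hsp) x ∂μ01 =
      ∫ x, ψ x * p x ∂μ01 - a * ∫ x, ψ x * q x ∂μ01 := by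
    have hint (p : Hsp) : Integrable (fun x => ψ x * p x) μ01 := by
      simpa only [mul_comm] using
        integrable_mul_continuous_μ01 ((Lp.memLp p).integrable one_le_two) hψ
    rw [← integral_const_mul, ← integral_sub (hint p) ((hint q).const_mul a)]
    refine integral_congr_ae ?_
    filter_upwards [Lp.coeFn_sub p (a • q), Lp.coeFn_smul a q] with x hx hx'
    simp only [hx, Pi.sub_apply, hx', Pi.smul_apply, smul_eq_mul]
    ring
  have hv : ∫ x, deriv φ x * v x ∂μ01 = -∫ x, φ x * v' x ∂μ01 := h φ hφ hcpt hsupp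
  have hw : ∫ x, deriv φ x * w x ∂μ01 = -∫ x, φ x * w' x ∂μ01 := h' φ hφ hcpt hsupp
  change ∫ x, deriv φ x * (v - a • w : Hsp) x ∂μ01 = -∫ x, φ x * (v' - a • w' : Hsp) x ∂μ01
  rw [hsub (hφ.continuous_deriv (by simp)), hsub hφ.continuous, hv, hw]
  ring

end SpatialWeakDerivative

/-! ### Series with decaying coefficients -/

section Series

variable {τ B : ℝ} {c c' f f' : ℕ → ℝ → ℝ}

lemma HasDecay.summable_sq (hc : HasDecay τ 1 c) {t : ℝ} (ht : τ < t) :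
    Summable fun n => c n t ^ 2 := by
  obtain ⟨C, hC⟩ := hc t t ht
  exact summable_sq_of_abs_le (summable_sq_div_freq C) fun n => hC n t ⟨le_rfl, le_rfl⟩

lemma HasDecay.summable_abs (hc : HasDecay τ 2 c) {t : ℝ} (ht : τ < t) :
    Summable fun n => |c n t| := by
  obtain ⟨C, hC⟩ := hc t t ht
  refine .of_nonneg_of_le (fun _ => abs_nonneg _) (fun n => hC n t ⟨le_rfl, le_rfl⟩) ?_
  simpa only [mul_one_div] using (summable_one_div_freq_pow le_rfl).mul_left C

lemma norm_mul_le_mul_of_abs_le {a y m : ℝ} (ha : |a| ≤ m) (hy : |y| ≤ B) : ‖a * y‖ ≤ m * B := by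
  rw [norm_mul]
  exact mul_le_mul ha hy (abs_nonneg _) ((abs_nonneg _).trans ha)

lemma summable_mul_of_abs_le {a y : ℕ → ℝ} (ha : Summable fun n => |a n|) (hy : ∀ n, |y n| ≤ B) :
    Summable fun n => a n * y n :=
  .of_norm_bounded (ha.mul_right B) fun n => norm_mul_le_mul_of_abs_le le_rfl (hy n)

lemma continuousOn_tsum_mul_of_abs_le {M : ℕ → ℝ} {S : Set ℝ} (hM : Summable M)
    (hcont : ∀ n, Continuous (c n)) (hc : ∀ n, ∀ t ∈ S, |c n t| ≤ M n)
    (hf : ∀ n, Continuous (f n)) (hfB : ∀ n x, |f n x| ≤ B) :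
    ContinuousOn (fun p : ℝ × ℝ => ∑' n, c n p.1 * f n p.2) (S ×ˢ univ) :=
  continuousOn_tsum (fun n => (((hcont n).comp continuous_fst).mul
    ((hf n).comp continuous_snd)).continuousOn) (hM.mul_right B)
    fun n p hp => norm_mul_le_mul_of_abs_le (hc n p.1 hp.1) (hfB n p.2)

lemma HasDecay.continuousOn_tsum_mul (hc : HasDecay τ 2 c) (hcont : ∀ n, Continuous (c n))
    (hf : ∀ n, Continuous (f n)) (hfB : ∀ n x, |f n x| ≤ B) :
    ContinuousOn (fun p : ℝ × ℝ => ∑' n, c n p.1 * f n p.2) (Ioi τ ×ˢ univ) := by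
  rintro ⟨t, x⟩ ⟨ht, -⟩
  obtain ⟨T, hτT, hTt⟩ := exists_between (mem_Ioi.1 ht)
  obtain ⟨C, hC⟩ := hc T (t + 1) hτT
  refine ContinuousAt.continuousWithinAt (((continuousOn_tsum_mul_of_abs_le
    ((summable_one_div_freq_pow le_rfl).mul_left C) hcont (fun n s hs => ?_) hf hfB).continuousAt
    (prod_mem_nhds (Icc_mem_nhds hTt (lt_add_one t)) Filter.univ_mem)))
  simpa only [mul_one_div] using hC n s hs

lemma HasDecay.hasDerivAt_tsum_mul (hc : HasDecay τ 2 c) (hc' : HasDecay τ 2 c')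
    (hderiv : ∀ n t, HasDerivAt (c n) (c' n t) t) {y : ℕ → ℝ} (hy : ∀ n, |y n| ≤ B) {t : ℝ}
    (ht : τ < t) : HasDerivAt (fun s => ∑' n, c n s * y n) (∑' n, c' n t * y n) t := by
  obtain ⟨T, hτT, hTt⟩ := exists_between ht
  obtain ⟨C, hC⟩ := hc' T (t + 1) hτT
  have hmem : t ∈ Ioo T (t + 1) := ⟨hTt, lt_add_one t⟩
  refine hasDerivAt_tsum_of_isPreconnected
    (((summable_one_div_freq_pow le_rfl).mul_left C).mul_right B) isOpen_Ioo isPreconnected_Ioo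
    (fun n s _ => (hderiv n s).mul_const _) (fun n s hs => ?_) hmem
    (summable_mul_of_abs_le (hc.summable_abs ht) hy) hmem
  rw [mul_one_div]
  exact norm_mul_le_mul_of_abs_le (hC n s (Ioo_subset_Icc_self hs)) (hy n)

lemma hasDerivAt_tsum_mul_of_abs_le {a l : ℕ → ℝ} (ha : Summable fun n => |a n|)
    (hla : Summable fun n => |l n * a n|) (hderiv : ∀ n x, HasDerivAt (f n) (l n * f' n x) x)
    (hfB : ∀ n x, |f n x| ≤ B) (hf'B : ∀ n x, |f' n x| ≤ B) (x : ℝ) :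
    HasDerivAt (fun x => ∑' n, a n * f n x) (∑' n, l n * a n * f' n x) x :=
  hasDerivAt_tsum (hla.mul_right B)
    (fun n y => ((hderiv n y).const_mul (a n)).congr_deriv (by ring))
    (fun n y => norm_mul_le_mul_of_abs_le le_rfl (hf'B n y))
    (summable_mul_of_abs_le ha (hfB · 0)) x

end Series

/-! ### The sine expansions of the constant and of the parabola -/

section Expansions

lemma eqOn_Icc_of_ae_eq_μ01 {f g : ℝ → ℝ} (h : f =ᵐ[μ01] g) (hf : ContinuousOn f (Icc 0 1))
    (hg : ContinuousOn g (Icc 0 1)) : EqOn f g (Icc 0 1) :=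
  Measure.eqOn_Icc_of_ae_eq volume zero_ne_one (by rwa [← restrict_Ioo_eq_restrict_Icc]) hf hg

/-- The class of the constant function `1` in `H`. -/
def unitVec : Hsp := (memLp_const 1).toLp fun _ => (1 : ℝ)

lemma coeFn_unitVec : unitVec =ᵐ[μ01] fun _ => 1 := MemLp.coeFn_toLp _

/-- The sine coefficients of the constant function `1`. -/
def unitCoeff (n : ℕ) : ℝ := inner ℝ (sinVec n) unitVec

lemma hasSum_unitCoeff : HasSum (fun n => unitCoeff n • sinVec n) unitVec :=
  hasSum_inner_sinVec unitVec

lemma unitCoeff_eq_integral (n : ℕ) : unitCoeff n = ∫ x in (0 : ℝ)..1, sinFun n x := by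
  rw [unitCoeff, inner_eq_integral (coeFn_sinVec n) coeFn_unitVec]
  simp only [mul_one, integral_μ01]

lemma abs_unitCoeff_le (n : ℕ) : |unitCoeff n| ≤ 2 * √2 / freq n := by
  have hk := freq_pos n
  have hprim : freq n * unitCoeff n = cosFun n 0 - cosFun n 1 := by
    rw [unitCoeff_eq_integral, ← neg_sub (cosFun n 1),
      ← intervalIntegral.integral_eq_sub_of_hasDerivAt (fun x _ => hasDerivAt_cosFun n x)
        (((continuous_sinFun n).const_mul _).intervalIntegrable 0 1),
      intervalIntegral.integral_const_mul]
    ring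
  have hval : |unitCoeff n| * freq n = |cosFun n 0 - cosFun n 1| := by
    rw [← hprim, abs_mul, abs_of_pos hk, mul_comm]
  rw [le_div_iff₀ hk, hval, two_mul]
  exact (abs_sub _ _).trans (add_le_add (abs_cosFun_le n 0) (abs_cosFun_le n 1))

/-- The solution of `-φ'' = 1` on `(0,1)` with Dirichlet boundary conditions. -/
def parabola (x : ℝ) : ℝ := x * (1 - x) / 2

lemma continuous_parabola : Continuous parabola := by unfold parabola; fun_prop

lemma hasDerivAt_parabola (x : ℝ) : HasDerivAt parabola (1 / 2 - x) x :=
  (((hasDerivAt_id x).mul ((hasDerivAt_id x).const_sub 1)).div_const 2).congr_deriv (by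
    simp only [id]; ring)

lemma integral_sinFun_mul_parabola (n : ℕ) :
    ∫ x in (0 : ℝ)..1, sinFun n x * parabola x = unitCoeff n / freq n ^ 2 := by
  have hk := (freq_pos n).ne'
  have hprim : ∀ x, HasDerivAt
      (fun x => (1 / 2 - x) * sinFun n x / freq n ^ 2 - parabola x * cosFun n x / freq n)
      (sinFun n x * parabola x - sinFun n x / freq n ^ 2) x := fun x => by
    refine (((((hasDerivAt_id x).const_sub _).mul (hasDerivAt_sinFun n x)).div_const _).sub
      (((hasDerivAt_parabola x).mul (hasDerivAt_cosFun n x)).div_const _)).congr_deriv ?_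
    simp only [id]
    field_simp
    ring
  have hint : ∀ {f : ℝ → ℝ}, Continuous f → IntervalIntegrable f volume 0 1 :=
    fun hf => hf.intervalIntegrable 0 1
  have hsin := continuous_sinFun n
  have hmul : Continuous fun x => sinFun n x * parabola x := hsin.mul continuous_parabola
  have hzero := intervalIntegral.integral_eq_sub_of_hasDerivAt (fun x _ => hprim x)
    (hint (hmul.sub (hsin.div_const _)))
  rw [intervalIntegral.integral_sub (hint hmul) (hint (hsin.div_const _)),
    intervalIntegral.integral_div, ← unitCoeff_eq_integral] at hzero
  simp only [sinFun_zero, sinFun_one, parabola] at hzero ⊢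
  linear_combination hzero

lemma abs_unitCoeff_div_sq_le (n : ℕ) : |unitCoeff n / freq n ^ 2| ≤ 2 * √2 / freq n ^ 3 := by
  rw [abs_div, abs_of_pos (pow_pos (freq_pos n) 2), pow_succ' _ 2, ← div_div]
  have := freq_pos n
  gcongr
  exact abs_unitCoeff_le n

lemma summable_abs_unitCoeff_div_sq : Summable fun n => |unitCoeff n / freq n ^ 2| :=
  .of_nonneg_of_le (fun _ => abs_nonneg _) abs_unitCoeff_div_sq_le <| by
    simpa only [mul_one_div] using
      (summable_one_div_freq_pow (j := 3) (by norm_num)).mul_left (2 * √2)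

lemma tsum_unitCoeff_div_sq_mul_sinFun {x : ℝ} (hx : x ∈ Icc (0 : ℝ) 1) :
    ∑' n, unitCoeff n / freq n ^ 2 * sinFun n x = parabola x := by
  have hL2 := memLp_μ01_of_continuousOn continuous_parabola.continuousOn
  have hcoeff (n : ℕ) : inner ℝ (sinVec n) (hL2.toLp parabola) = unitCoeff n / freq n ^ 2 := by
    rw [inner_eq_integral (coeFn_sinVec n) hL2.coeFn_toLp, integral_μ01,
      integral_sinFun_mul_parabola]
  have hsum := (hasSum_inner_sinVec (hL2.toLp parabola)).tsum_eq
  simp only [hcoeff] at hsum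
  have hae := (coeFn_tsum_smul orthonormal_sinVec.1 coeFn_sinVec
    summable_abs_unitCoeff_div_sq).symm.trans (hsum ▸ hL2.coeFn_toLp)
  refine eqOn_Icc_of_ae_eq_μ01 hae (Continuous.continuousOn ?_) continuous_parabola.continuousOn hx
  exact continuous_tsum (fun n => (continuous_sinFun n).const_mul _)
    (summable_abs_unitCoeff_div_sq.mul_right √2)
    fun n x => norm_mul_le_mul_of_abs_le le_rfl (abs_sinFun_le n x)

lemma summable_abs_freq_mul_unitCoeff_div_sq :
    Summable fun n => |freq n * (unitCoeff n / freq n ^ 2)| := by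
  refine .of_nonneg_of_le (fun _ => abs_nonneg _) (fun n => ?_)
    ((summable_one_div_freq_pow le_rfl).mul_left (2 * √2))
  have hk := freq_pos n
  rw [abs_mul, abs_of_pos hk]
  calc freq n * |unitCoeff n / freq n ^ 2| ≤ freq n * (2 * √2 / freq n ^ 3) := by
        gcongr; exact abs_unitCoeff_div_sq_le n
    _ = 2 * √2 * (1 / freq n ^ 2) := by field_simp

lemma tsum_freq_mul_unitCoeff_div_sq_mul_cosFun {x : ℝ} (hx : x ∈ Icc (0 : ℝ) 1) :
    ∑' n, freq n * (unitCoeff n / freq n ^ 2) * cosFun n x = 1 / 2 - x := by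
  have hseries := hasDerivAt_tsum_mul_of_abs_le summable_abs_unitCoeff_div_sq
    summable_abs_freq_mul_unitCoeff_div_sq hasDerivAt_sinFun abs_sinFun_le abs_cosFun_le x
  exact (uniqueDiffOn_Icc zero_lt_one x hx).eq_deriv _ hseries.hasDerivWithinAt
    ((hasDerivAt_parabola x).hasDerivWithinAt.congr
      (fun _ hy => tsum_unitCoeff_div_sq_mul_sinFun hy) (tsum_unitCoeff_div_sq_mul_sinFun hx))

end Expansions

/-! ### Regularity from the sine coefficients -/

/-- The `H`-valued sine series with coefficients `c n t`. -/
def sineVec (c : ℕ → ℝ → ℝ) (t : ℝ) : Hsp := ∑' n, c n t • sinVec n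

/-- The `H`-valued cosine series with coefficients `c n t`. -/
def cosineVec (c : ℕ → ℝ → ℝ) (t : ℝ) : Hsp := ∑' n, c n t • cosVec n

/-- The pointwise sine series with coefficients `c n t`. -/
def sineSeries (c : ℕ → ℝ → ℝ) (t x : ℝ) : ℝ := ∑' n, c n t * sinFun n x

/-- The pointwise cosine series with coefficients `c n t`. -/
def cosineSeries (c : ℕ → ℝ → ℝ) (t x : ℝ) : ℝ := ∑' n, c n t * cosFun n x

/-- `U n` are the sine coefficients of a solution of `u_t - u_xx = b + ω u` on `(τ,∞)`, with first
and second time derivatives `U'` and `U''`, together with the bounds that make the solution smooth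
for `t > τ` and continuous up to `t = τ`. -/
structure IsHeatCoeff (b ω : ℝ → ℝ) (τ : ℝ) (U U' U'' : ℕ → ℝ → ℝ) : Prop where
  hasDerivAt : ∀ n t, HasDerivAt (U n) (U' n t) t
  hasL2Deriv : ∀ n, HasL2Deriv (U' n) (U'' n)
  ode : ∀ n t, U' n t + freq n ^ 2 * U n t = b t * unitCoeff n + ω t * U n t
  hasDecay : HasDecay τ 3 U
  hasDecay_deriv : HasDecay τ 2 U'
  locSqSummable : LocSqSummable τ U''
  exists_bound : ∀ T, ∃ M : ℕ → ℝ, Summable M ∧ ∀ n, ∀ t ∈ Icc τ T, |U n t| ≤ M n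

section TimeRegularity

variable {v v' : ℝ → Hsp} {s : Set ℝ}

lemma timeCk_zero (hv : ContinuousOn v s) : TimeCk 0 v s :=
  ⟨fun _ => v, rfl, by simp, fun _ _ => hv⟩

lemma timeCk_one (hderiv : ∀ t ∈ s, HasDerivAt v (v' t) t) (hv' : ContinuousOn v' s) :
    TimeCk 1 v s := by
  refine ⟨fun j => if j = 0 then v else v', rfl, fun j hj => ?_, fun j hj => ?_⟩
  · rw [Nat.lt_one_iff.1 hj]
    exact hderiv
  · interval_cases j
    · exact HasDerivAt.continuousOn hderiv
    · exact hv'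

end TimeRegularity

namespace IsHeatCoeff

variable {b ω : ℝ → ℝ} {τ : ℝ} {U U' U'' : ℕ → ℝ → ℝ}

section FiniteOrder

variable (h : IsHeatCoeff b ω τ U U' U'')
include h

lemma continuous (n : ℕ) : Continuous (U n) :=
  continuous_iff_continuousAt.2 fun t => (h.hasDerivAt n t).continuousAt

lemma hasDecay_freq_mul : HasDecay τ 2 fun n t => freq n * U n t := by
  simpa using h.hasDecay.freq_pow_mul (j := 2) 1

lemma hasDecay_freq_mul_deriv : HasDecay τ 1 fun n t => freq n * U' n t := by
  simpa using h.hasDecay_deriv.freq_pow_mul (j := 1) 1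

lemma summable_sq {t : ℝ} (ht : τ < t) : Summable fun n => U n t ^ 2 :=
  (h.hasDecay.mono (by norm_num)).summable_sq ht

lemma summable_sq_deriv {t : ℝ} (ht : τ < t) : Summable fun n => U' n t ^ 2 :=
  (h.hasDecay_deriv.mono one_le_two).summable_sq ht

lemma continuousOn_sineVec : ContinuousOn (sineVec U) (Ici τ) := fun t ht => by
  obtain ⟨M, hM, hUM⟩ := h.exists_bound (t + 1)
  have hM0 : ∀ n, 0 ≤ M n := fun n =>
    (abs_nonneg _).trans (hUM n t ⟨ht, (lt_add_one t).le⟩)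
  have hMsq : Summable fun n => M n ^ 2 := by
    refine (hM.mul_left (∑' n, M n)).of_nonneg_of_le (fun n => sq_nonneg _) fun n => ?_
    rw [sq]
    exact mul_le_mul_of_nonneg_right (hM.le_tsum n fun m _ => hM0 m) (hM0 n)
  refine tendsto_tsum_smul_of_orthonormal (c := fun s n => U n s) orthonormal_sinVec hMsq ?_
    fun n => ((h.continuous n).tendsto t).mono_left nhdsWithin_le_nhds
  filter_upwards [self_mem_nhdsWithin, mem_nhdsWithin_of_mem_nhds (Iic_mem_nhds (lt_add_one t))]
    with s hs hst n using hUM n s ⟨hs, hst⟩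

lemma hasDerivAt_sineVec {t : ℝ} (ht : τ < t) : HasDerivAt (sineVec U) (sineVec U' t) t :=
  hasDerivAt_tsum_smul_of_orthonormal orthonormal_sinVec (h.hasDecay.mono (by norm_num))
    (h.hasDecay_deriv.mono one_le_two) h.hasDerivAt ht

lemma continuousOn_sineVec_deriv : ContinuousOn (sineVec U') (Ioi τ) :=
  continuousOn_tsum_smul_of_orthonormal orthonormal_sinVec (h.hasDecay_deriv.mono one_le_two)
    fun n => (h.hasL2Deriv n).continuous

lemma hasDerivAt_cosineVec {t : ℝ} (ht : τ < t) :
    HasDerivAt (cosineVec fun n t => freq n * U n t) (cosineVec (fun n t => freq n * U' n t) t) t :=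
  hasDerivAt_tsum_smul_of_orthonormal orthonormal_cosVec (h.hasDecay_freq_mul.mono one_le_two)
    h.hasDecay_freq_mul_deriv (fun n t => (h.hasDerivAt n t).const_mul _) ht

lemma continuousOn_cosineVec_deriv :
    ContinuousOn (cosineVec fun n t => freq n * U' n t) (Ioi τ) :=
  continuousOn_tsum_smul_of_orthonormal orthonormal_cosVec h.hasDecay_freq_mul_deriv
    fun n => (h.hasL2Deriv n).continuous.const_mul _

lemma isSpatialWeakDeriv_sineVec {t : ℝ} (ht : τ < t) :
    IsSpatialWeakDeriv (sineVec U t) (cosineVec (fun n t => freq n * U n t) t) :=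
  isSpatialWeakDeriv_tsum_smul orthonormal_sinVec orthonormal_cosVec isSpatialWeakDeriv_sinVec
    (h.summable_sq ht) ((h.hasDecay_freq_mul.mono one_le_two).summable_sq ht)

lemma isSpatialWeakDeriv_sineVec_deriv {t : ℝ} (ht : τ < t) :
    IsSpatialWeakDeriv (sineVec U' t) (cosineVec (fun n t => freq n * U' n t) t) :=
  isSpatialWeakDeriv_tsum_smul orthonormal_sinVec orthonormal_cosVec isSpatialWeakDeriv_sinVec
    (h.summable_sq_deriv ht) (h.hasDecay_freq_mul_deriv.summable_sq ht)

theorem ckIntoV : CkIntoV 1 (sineVec U) (Ioi τ) :=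
  ⟨timeCk_one (fun _ => h.hasDerivAt_sineVec) h.continuousOn_sineVec_deriv,
    cosineVec fun n t => freq n * U n t, fun _ => h.isSpatialWeakDeriv_sineVec,
    timeCk_one (fun _ => h.hasDerivAt_cosineVec) h.continuousOn_cosineVec_deriv⟩

theorem hasL2locTimeDerivChain : HasL2locTimeDerivChain 2 (sineVec U) τ := by
  have hcont' n := (h.hasL2Deriv n).continuous
  have hU := (h.hasDecay.mono (by norm_num : 1 ≤ 3)).locSqSummable h.continuous
  have hU' := (h.hasDecay_deriv.mono one_le_two).locSqSummable hcont'
  refine ⟨fun | 0 => sineVec U | 1 => sineVec U' | _ => sineVec U'', rfl, fun ε hε T hT => ?_⟩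
  have hτ : τ < τ + ε := lt_add_of_pos_right τ hε
  refine ⟨fun j hj => ?_,
    memLp_tsum_smul_of_locSqSummable orthonormal_sinVec h.locSqSummable hτ hT.le⟩
  interval_cases j
  · exact hasWeakDerivOn_tsum_smul orthonormal_sinVec
      (fun n => .of_hasDerivAt (h.hasDerivAt n) (hcont' n)) hU hU' hτ hT.le
  · exact hasWeakDerivOn_tsum_smul orthonormal_sinVec h.hasL2Deriv hU' h.locSqSummable hτ hT.le

/-- The second spatial derivative of the solution, read off from the equation: in this form it can
be differentiated once more, whereas the sine series differentiated three times term by term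
diverges because of the constant source term. -/
def laplacianVec (b ω : ℝ → ℝ) (U U' : ℕ → ℝ → ℝ) (t : ℝ) : Hsp :=
  sineVec U' t - ω t • sineVec U t - b t • unitVec

lemma tsum_eq_laplacianVec {t : ℝ} (ht : τ < t) :
    ∑' n, (-freq n * (freq n * U n t)) • sinVec n = laplacianVec b ω U U' t := by
  have hU := (summable_smul_of_orthonormal orthonormal_sinVec (h.summable_sq ht)).hasSum
  have hU' := (summable_smul_of_orthonormal orthonormal_sinVec (h.summable_sq_deriv ht)).hasSum
  refine .trans (tsum_congr fun n => ?_)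
    ((hU'.sub (hU.const_smul (ω t))).sub (hasSum_unitCoeff.const_smul (b t))).tsum_eq
  rw [smul_smul, smul_smul, ← sub_smul, ← sub_smul]
  congr 1
  linear_combination -h.ode n t

lemma isSpatialWeakDeriv_cosineVec {t : ℝ} (ht : τ < t) :
    IsSpatialWeakDeriv (cosineVec (fun n t => freq n * U n t) t) (laplacianVec b ω U U' t) := by
  have hsq : Summable fun n => (-freq n * (freq n * U n t)) ^ 2 := by
    have hdecay : HasDecay τ 1 fun n t => freq n ^ 2 * U n t := h.hasDecay.freq_pow_mul 2
    exact (hdecay.summable_sq ht).congr fun n => by ring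
  rw [← h.tsum_eq_laplacianVec ht]
  exact isSpatialWeakDeriv_tsum_smul orthonormal_cosVec orthonormal_sinVec isSpatialWeakDeriv_cosVec
    ((h.hasDecay_freq_mul.mono one_le_two).summable_sq ht) hsq

lemma isSpatialWeakDeriv_laplacianVec {t : ℝ} (ht : τ < t) :
    IsSpatialWeakDeriv (laplacianVec b ω U U' t) (cosineVec (fun n t => freq n * U' n t) t -
      ω t • cosineVec (fun n t => freq n * U n t) t) := by
  have hunit : IsSpatialWeakDeriv unitVec 0 := isSpatialWeakDeriv_of_hasDerivAt coeFn_unitVec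
    (Lp.coeFn_zero ..) (fun x => hasDerivAt_const x 1) continuous_const
  simpa [laplacianVec] using ((h.isSpatialWeakDeriv_sineVec_deriv ht).sub_smul
    (h.isSpatialWeakDeriv_sineVec ht) (ω t)).sub_smul hunit (b t)

theorem cjIntoHm (hb : Continuous b) (hω : Continuous ω) : CjIntoHm 0 3 (sineVec U) (Ioi τ) := by
  have hcosineVec : ContinuousOn (cosineVec fun n t => freq n * U n t) (Ioi τ) :=
    HasDerivAt.continuousOn fun _ => h.hasDerivAt_cosineVec
  have hsineVec := h.continuousOn_sineVec.mono Ioi_subset_Ici_self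
  refine ⟨fun
    | 0 => sineVec U
    | 1 => cosineVec fun n t => freq n * U n t
    | 2 => laplacianVec b ω U U'
    | _ => fun t => cosineVec (fun n t => freq n * U' n t) t -
        ω t • cosineVec (fun n t => freq n * U n t) t,
    rfl, fun i hi => ?_, fun i hi => timeCk_zero ?_⟩
  · interval_cases i
    exacts [fun _ => h.isSpatialWeakDeriv_sineVec, fun _ => h.isSpatialWeakDeriv_cosineVec,
      fun _ => h.isSpatialWeakDeriv_laplacianVec]
  · interval_cases i
    exacts [hsineVec, hcosineVec,
      (h.continuousOn_sineVec_deriv.sub (hω.continuousOn.smul hsineVec)).sub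
        (hb.smul continuous_const).continuousOn,
      h.continuousOn_cosineVec_deriv.sub (hω.continuousOn.smul hcosineVec)]

lemma summable_abs {t : ℝ} (ht : τ ≤ t) : Summable fun n => |U n t| := by
  obtain ⟨M, hM, hUM⟩ := h.exists_bound t
  exact hM.of_nonneg_of_le (fun n => abs_nonneg _) fun n => hUM n t ⟨ht, le_rfl⟩

lemma summable_abs_deriv {t : ℝ} (ht : τ < t) : Summable fun n => |U' n t| :=
  h.hasDecay_deriv.summable_abs ht

lemma coeFn_sineVec {t : ℝ} (ht : τ ≤ t) : sineVec U t =ᵐ[μ01] sineSeries U t :=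
  coeFn_tsum_smul orthonormal_sinVec.1 coeFn_sinVec (h.summable_abs ht)

lemma coeFn_sineVec_deriv {t : ℝ} (ht : τ < t) : sineVec U' t =ᵐ[μ01] sineSeries U' t :=
  coeFn_tsum_smul orthonormal_sinVec.1 coeFn_sinVec (h.summable_abs_deriv ht)

lemma continuousOn_sineSeries (T : ℝ) :
    ContinuousOn (fun p : ℝ × ℝ => sineSeries U p.1 p.2) (Icc τ T ×ˢ univ) := by
  obtain ⟨M, hM, hUM⟩ := h.exists_bound T
  exact continuousOn_tsum_mul_of_abs_le hM h.continuous hUM continuous_sinFun abs_sinFun_le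

lemma continuousOn_sineSeries_deriv :
    ContinuousOn (fun p : ℝ × ℝ => sineSeries U' p.1 p.2) (Ioi τ ×ˢ univ) :=
  h.hasDecay_deriv.continuousOn_tsum_mul (fun n => (h.hasL2Deriv n).continuous) continuous_sinFun
    abs_sinFun_le

lemma hasDerivAt_sineSeries_time {t : ℝ} (ht : τ < t) (x : ℝ) :
    HasDerivAt (fun s => sineSeries U s x) (sineSeries U' t x) t :=
  (h.hasDecay.mono (by norm_num)).hasDerivAt_tsum_mul h.hasDecay_deriv h.hasDerivAt
    (fun n => abs_sinFun_le n x) ht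

lemma hasDerivAt_sineSeries_space {t : ℝ} (ht : τ < t) (x : ℝ) :
    HasDerivAt (sineSeries U t) (cosineSeries (fun n t => freq n * U n t) t x) x :=
  hasDerivAt_tsum_mul_of_abs_le (h.summable_abs ht.le) (h.hasDecay_freq_mul.summable_abs ht)
    hasDerivAt_sinFun abs_sinFun_le abs_cosFun_le x

/-- The second spatial derivative of the solution as a function on `[0,1]`, read off from the
equation. -/
def laplacianSeries (b ω : ℝ → ℝ) (U U' : ℕ → ℝ → ℝ) (t x : ℝ) : ℝ :=
  sineSeries U' t x - ω t * sineSeries U t x - b t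

lemma coeFn_laplacianVec {t : ℝ} (ht : τ < t) :
    laplacianVec b ω U U' t =ᵐ[μ01] laplacianSeries b ω U U' t := by
  filter_upwards [Lp.coeFn_sub (sineVec U' t - ω t • sineVec U t) (b t • unitVec),
    Lp.coeFn_sub (sineVec U' t) (ω t • sineVec U t), Lp.coeFn_smul (ω t) (sineVec U t),
    Lp.coeFn_smul (b t) unitVec, h.coeFn_sineVec ht.le, h.coeFn_sineVec_deriv ht, coeFn_unitVec]
    with x h1 h2 h3 h4 h5 h6 h7
  simp only [laplacianVec, laplacianSeries, h1, h2, h3, h4, h5, h6, h7, Pi.sub_apply, Pi.smul_apply,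
    smul_eq_mul, mul_one]

lemma continuousOn_laplacianSeries (hb : Continuous b) (hω : Continuous ω) :
    ContinuousOn (fun p : ℝ × ℝ => laplacianSeries b ω U U' p.1 p.2) (Ioi τ ×ˢ univ) := by
  have hU : ContinuousOn (fun p : ℝ × ℝ => sineSeries U p.1 p.2) (Ioi τ ×ˢ univ) :=
    (h.hasDecay.mono (by norm_num)).continuousOn_tsum_mul h.continuous continuous_sinFun
      abs_sinFun_le
  exact (h.continuousOn_sineSeries_deriv.sub
    ((hω.comp continuous_fst).continuousOn.mul hU)).sub (hb.comp continuous_fst).continuousOn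

/-- Subtracting the cosine series of `b (1/2 - x)` leaves a series that can be differentiated term
by term. -/
lemma cosineSeries_eq {t x : ℝ} (ht : τ < t) (hx : x ∈ Icc (0 : ℝ) 1) :
    cosineSeries (fun n t => freq n * U n t) t x =
      ∑' n, (freq n * U n t - b t * (freq n * (unitCoeff n / freq n ^ 2))) * cosFun n x +
        b t * (1 / 2 - x) := by
  have hU := summable_mul_of_abs_le (h.hasDecay_freq_mul.summable_abs ht) (abs_cosFun_le · x)
  have hq := summable_mul_of_abs_le summable_abs_freq_mul_unitCoeff_div_sq (abs_cosFun_le · x)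
  rw [← tsum_freq_mul_unitCoeff_div_sq_mul_cosFun hx, ← tsum_mul_left,
    ← Summable.tsum_add _ (hq.mul_left _)]
  · exact tsum_congr fun n => by ring
  · exact (hU.sub (hq.mul_left (b t))).congr fun n => by ring

lemma hasDerivWithinAt_cosineSeries {t x : ℝ} (ht : τ < t) (hx : x ∈ Icc (0 : ℝ) 1) :
    HasDerivWithinAt (cosineSeries (fun n t => freq n * U n t) t) (laplacianSeries b ω U U' t x)
      (Icc 0 1) x := by
  set a : ℕ → ℝ := fun n => freq n * U n t - b t * (freq n * (unitCoeff n / freq n ^ 2))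
  have ha : Summable fun n => |a n| :=
    (((h.hasDecay_freq_mul.summable_abs ht).of_abs).sub
      (summable_abs_freq_mul_unitCoeff_div_sq.of_abs.mul_left (b t))).abs
  have hla n : -freq n * a n = U' n t - ω t * U n t := by
    have := (freq_pos n).ne'
    simp only [a]
    field_simp
    linear_combination -h.ode n t
  have hU := (h.summable_abs ht.le).of_abs
  have hU' := (h.summable_abs_deriv ht).of_abs
  have hderiv := hasDerivAt_tsum_mul_of_abs_le ha
    ((hU'.sub (hU.mul_left (ω t))).abs.congr fun n => by rw [hla]) hasDerivAt_cosFun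
    abs_cosFun_le abs_sinFun_le x
  have hsum : ∑' n, -freq n * a n * sinFun n x = sineSeries U' t x - ω t * sineSeries U t x := by
    have hUx := summable_mul_of_abs_le (h.summable_abs ht.le) (abs_sinFun_le · x)
    have hUx' := summable_mul_of_abs_le (h.summable_abs_deriv ht) (abs_sinFun_le · x)
    rw [sineSeries, sineSeries, ← tsum_mul_left, ← hUx'.tsum_sub (hUx.mul_left _)]
    exact tsum_congr fun n => by rw [hla]; ring
  have hsource := ((hasDerivAt_id' x).const_sub (1 / 2)).const_mul (b t)
  refine ((hderiv.add hsource).hasDerivWithinAt.congr_deriv ?_).congr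
    (fun y hy => h.cosineSeries_eq ht hy) (h.cosineSeries_eq ht hx)
  rw [hsum, laplacianSeries]
  ring

theorem classicalUtUxx (hb : Continuous b) (hω : Continuous ω) : ClassicalUtUxx τ (sineVec U) :=
  ⟨sineSeries U, cosineSeries fun n t => freq n * U n t, sineSeries U', laplacianSeries b ω U U',
    fun _ ht => (h.coeFn_sineVec (le_of_lt ht)).symm,
    fun _ ht x _ => h.hasDerivAt_sineSeries_time ht x,
    fun _ ht x _ => (h.hasDerivAt_sineSeries_space ht x).hasDerivWithinAt,
    fun _ ht _ hx => h.hasDerivWithinAt_cosineSeries ht hx,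
    h.continuousOn_sineSeries_deriv.mono (prod_mono_right (subset_univ _)),
    (h.continuousOn_laplacianSeries hb hω).mono (prod_mono_right (subset_univ _))⟩

/-! ### The solution as a strong solution -/

lemma continuous_laplacianSeries (hb : Continuous b) (hω : Continuous ω) {t : ℝ} (ht : τ < t) :
    Continuous (laplacianSeries b ω U U' t) :=
  continuousOn_univ.1 <| (h.continuousOn_laplacianSeries hb hω).comp
    (f := fun x : ℝ => (t, x)) (by fun_prop) fun _ _ => ⟨ht, mem_univ _⟩

lemma inDomainA (hb : Continuous b) (hω : Continuous ω) {t : ℝ} (ht : τ < t) :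
    InDomainA (sineVec U t) (laplacianVec b ω U U' t) := by
  refine ⟨sineSeries U t, HasDerivAt.continuousOn fun x _ => h.hasDerivAt_sineSeries_space ht x,
    by simp [sineSeries, sinFun_zero], by simp [sineSeries, sinFun_one],
    (h.coeFn_sineVec ht.le).symm, cosineSeries (fun n t => freq n * U n t) t,
    fun x _ => h.hasDerivAt_sineSeries_space ht x, fun x hx y hy => ?_⟩
  have hyx : uIcc y x ⊆ Ioo 0 1 := ordConnected_Ioo.uIcc_subset hy hx
  have hlaplacian := (ae_restrict_iff' measurableSet_Ioo).1 (h.coeFn_laplacianVec ht)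
  rw [intervalIntegral.integral_congr_ae (g := laplacianSeries b ω U U' t),
    intervalIntegral.integral_eq_sub_of_hasDerivAt
      (fun z hz => (h.hasDerivWithinAt_cosineSeries ht (Ioo_subset_Icc_self (hyx hz))).hasDerivAt
        (Icc_mem_nhds (hyx hz).1 (hyx hz).2))
      ((h.continuous_laplacianSeries hb hω ht).intervalIntegrable y x)]
  filter_upwards [hlaplacian] with z hz hzyx using hz (hyx (uIoc_subset_uIcc hzyx))

lemma sineVec_eq_add_integral {T1 T2 : ℝ} (hT1 : τ < T1) (hT : T1 ≤ T2) :
    IntervalIntegrable (sineVec U') volume T1 T2 ∧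
      sineVec U T2 = sineVec U T1 + ∫ s in T1..T2, sineVec U' s := by
  have hIoi : uIcc T1 T2 ⊆ Ioi τ := by
    rw [uIcc_of_le hT]
    exact fun s hs => hT1.trans_le hs.1
  have hint : IntervalIntegrable (sineVec U') volume T1 T2 :=
    (h.continuousOn_sineVec_deriv.mono hIoi).intervalIntegrable
  refine ⟨hint, ?_⟩
  rw [intervalIntegral.integral_eq_sub_of_hasDerivAt
    (fun s hs => h.hasDerivAt_sineVec (hIoi hs)) hint, add_sub_cancel]

theorem isStrongSolution (hb : Continuous b) (hω : Continuous ω)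
    (hpos : ∀ t, τ < t → ∀ x ∈ Ioo (0 : ℝ) 1, 0 < sineSeries U t x) :
    IsStrongSolution b ω τ (sineVec U) := by
  refine ⟨fun t => ω t • sineVec U t + b t • unitVec, sineVec U', laplacianVec b ω U U',
    h.continuousOn_sineVec, fun T _ => ?_, ?_, ?_, ?_, fun T1 T2 hT1 hT => ?_⟩
  · exact memLp_Ioo_of_continuousOn ((hω.continuousOn.smul
      (h.continuousOn_sineVec.mono Icc_subset_Ici_self)).add
      (hb.smul continuous_const).continuousOn)
  · filter_upwards [ae_restrict_mem measurableSet_Ioi] with t ht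
    filter_upwards [ae_μ01_mem, h.coeFn_sineVec (le_of_lt ht), coeFn_unitVec,
      Lp.coeFn_add (ω t • sineVec U t) (b t • unitVec), Lp.coeFn_smul (ω t) (sineVec U t),
      Lp.coeFn_smul (b t) unitVec] with x hx h1 h2 h3 h4 h5
    have hux := hpos t ht x hx
    refine ⟨1, by simp [h1, heaviside, hux.ne', hux.le.not_gt], ?_⟩
    simp only [h2, h3, h4, h5, Pi.add_apply, Pi.smul_apply, smul_eq_mul]
    ring
  · filter_upwards [ae_restrict_mem measurableSet_Ioi] with t ht using h.inDomainA hb hω ht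
  · exact .of_forall fun t => by simp only [laplacianVec]; abel
  · exact ⟨(h.sineVec_eq_add_integral hT1 hT.le).1,
      fun t ht => (h.sineVec_eq_add_integral hT1 ht.1).2⟩

end FiniteOrder
end IsHeatCoeff

/-! ### Positivity -/

section MinimumPrinciple

open Topology

variable {f g : ℝ → ℝ} {f' a y : ℝ} {s : Set ℝ}

lemma mul_sub_nonneg_of_isMinOn (hs : Convex ℝ s) (hmin : IsMinOn f s a)
    (hf : HasDerivWithinAt f f' s a) (ha : a ∈ s) (hy : y ∈ s) : 0 ≤ (y - a) * f' := by
  simpa using hmin.localize.hasFDerivWithinAt_nonneg hf.hasFDerivWithinAt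
    (sub_mem_posTangentConeAt_of_segment_subset (hs.segment_subset ha hy))

lemma eventually_le_of_mul_sub_nonneg (hf : HasDerivWithinAt f f' s a) (hf' : f' ≠ 0)
    (hs : ∀ y ∈ s, 0 ≤ f' * (y - a)) : ∀ᶠ y in 𝓝[s] a, f a ≤ f y := by
  have hslope := (hasDerivWithinAt_iff_tendsto_slope.1 hf).const_mul f'
  have hpos := eventually_nhdsWithin_iff.1 (hslope.eventually_const_lt (mul_self_pos.2 hf'))
  refine eventually_nhdsWithin_iff.2 (hpos.mono fun y hy hys => ?_)
  rcases eq_or_ne y a with rfl | hya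
  · exact le_rfl
  have hprod := mul_nonneg (hy ⟨hys, hya⟩).le (hs y hys)
  rw [slope_def_field, show f' * ((f y - f a) / (y - a)) * (f' * (y - a)) =
    f' ^ 2 * (f y - f a) by field_simp [sub_ne_zero.2 hya]] at hprod
  exact sub_nonneg.1 (nonneg_of_mul_nonneg_right hprod (by positivity))

lemma second_deriv_nonneg_of_isLocalMin (hmin : IsLocalMin f a)
    (hf : ∀ᶠ y in 𝓝 a, HasDerivAt f (g y) y) (hg : HasDerivAt g f' a) : 0 ≤ f' := by
  by_contra! hneg
  have hderiv : deriv f =ᶠ[𝓝 a] g := hf.mono fun y hy => hy.deriv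
  have hderiv2 : deriv (deriv f) a = f' := hderiv.deriv_eq.trans hg.deriv
  have hmax : IsLocalMax f a := isLocalMax_of_deriv_deriv_neg (hderiv2.trans_lt hneg)
    (hmin.deriv_eq_zero) hf.self_of_nhds.continuousAt
  have hconst : f =ᶠ[𝓝 a] fun _ => f a := (hmin.and hmax).mono fun y hy => le_antisymm hy.2 hy.1
  have hzero : deriv (deriv f) a = 0 := by
    rw [hconst.deriv.deriv_eq]
    simp
  exact hneg.ne (hderiv2.symm.trans hzero)

theorem nonneg_of_strict_supersolution {τ T : ℝ} (hT : τ ≤ T) {P Pt Px Pxx : ℝ → ℝ → ℝ}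
    (hP : ContinuousOn (fun p : ℝ × ℝ => P p.1 p.2) (Icc τ T ×ˢ Icc 0 1))
    (hinit : ∀ x ∈ Icc (0 : ℝ) 1, 0 ≤ P τ x) (hzero : ∀ t ∈ Icc τ T, 0 ≤ P t 0)
    (hone : ∀ t ∈ Icc τ T, 0 ≤ P t 1)
    (ht : ∀ t ∈ Ioc τ T, ∀ x ∈ Ioo (0 : ℝ) 1, HasDerivAt (fun s => P s x) (Pt t x) t)
    (hx : ∀ t ∈ Ioc τ T, ∀ x ∈ Ioo (0 : ℝ) 1, HasDerivAt (P t) (Px t x) x)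
    (hxx : ∀ t ∈ Ioc τ T, ∀ x ∈ Ioo (0 : ℝ) 1, HasDerivAt (Px t) (Pxx t x) x)
    (hlt : ∀ t ∈ Ioc τ T, ∀ x ∈ Ioo (0 : ℝ) 1, Pxx t x < Pt t x) :
    ∀ t ∈ Icc τ T, ∀ x ∈ Icc (0 : ℝ) 1, 0 ≤ P t x := by
  obtain ⟨⟨t₀, x₀⟩, ⟨ht₀, hx₀⟩, hmin⟩ := (isCompact_Icc.prod isCompact_Icc).exists_isMinOn
    ⟨(τ, 0), ⟨le_rfl, hT⟩, ⟨le_rfl, zero_le_one⟩⟩ hP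
  suffices 0 ≤ P t₀ x₀ from fun t ht x hx => this.trans (hmin (mk_mem_prod ht hx))
  simp only at ht₀ hx₀
  by_contra! hneg
  have ht₀' : τ < t₀ := ht₀.1.lt_of_ne fun h => hneg.not_ge (h ▸ hinit x₀ hx₀)
  have hx₀' : x₀ ∈ Ioo (0 : ℝ) 1 :=
    ⟨hx₀.1.lt_of_ne fun h => hneg.not_ge (h ▸ hzero t₀ ht₀),
      hx₀.2.lt_of_ne fun h => hneg.not_ge (h ▸ hone t₀ ht₀)⟩
  have hPt : 0 ≤ (τ - t₀) * Pt t₀ x₀ :=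
    mul_sub_nonneg_of_isMinOn (f := fun s => P s x₀) (convex_Icc τ T)
      (fun s hs => hmin (mk_mem_prod hs hx₀))
      (ht t₀ ⟨ht₀', ht₀.2⟩ x₀ hx₀').hasDerivWithinAt ht₀ ⟨le_rfl, hT⟩
  have hIoo : Ioo (0 : ℝ) 1 ∈ 𝓝 x₀ := Ioo_mem_nhds hx₀'.1 hx₀'.2
  have hPxx : 0 ≤ Pxx t₀ x₀ := by
    refine second_deriv_nonneg_of_isLocalMin (f := P t₀) (g := Px t₀) ?_ ?_
      (hxx t₀ ⟨ht₀', ht₀.2⟩ x₀ hx₀')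
    · filter_upwards [hIoo] with y hy using hmin (mk_mem_prod ht₀ (Ioo_subset_Icc_self hy))
    · filter_upwards [hIoo] with y hy using hx t₀ ⟨ht₀', ht₀.2⟩ y hy
  nlinarith [hlt t₀ ⟨ht₀', ht₀.2⟩ x₀ hx₀']

end MinimumPrinciple

section ParabolaBarrier

open Topology

variable {vt g : ℝ → ℝ}

lemma parabola_nonneg {x : ℝ} (hx : x ∈ Icc (0 : ℝ) 1) : 0 ≤ parabola x :=
  div_nonneg (mul_nonneg hx.1 (sub_nonneg.2 hx.2)) zero_le_two

lemma parabola_pos {x : ℝ} (hx : x ∈ Ioo (0 : ℝ) 1) : 0 < parabola x :=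
  div_pos (mul_pos hx.1 (sub_pos.2 hx.2)) zero_lt_two

lemma parabola_zero : parabola 0 = 0 := by simp [parabola]

lemma parabola_one : parabola 1 = 0 := by simp [parabola]

lemma exists_mul_parabola_le_nhdsWithin (h0 : vt 0 = 0) (h1 : vt 1 = 0)
    (hd : ∀ x ∈ Icc (0 : ℝ) 1, HasDerivWithinAt vt (g x) (Icc 0 1) x)
    (hpos : ∀ x ∈ Ioo (0 : ℝ) 1, 0 < vt x) (hg0 : 0 < g 0) (hg1 : g 1 < 0) {a : ℝ}
    (ha : a ∈ Icc (0 : ℝ) 1) : ∃ c > 0, ∀ᶠ x in 𝓝[Icc 0 1] a, c * parabola x ≤ vt x := by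
  have hsub (c : ℝ) := (hd a ha).sub ((hasDerivAt_parabola a).hasDerivWithinAt.const_mul c)
  rcases ha.1.eq_or_lt with rfl | ha0
  · refine ⟨g 0, hg0, (eventually_le_of_mul_sub_nonneg (hsub (g 0)) (by linarith)
      fun y hy => mul_nonneg (by linarith) (by linarith [hy.1])).mono fun x hx => ?_⟩
    simpa [h0, parabola_zero] using hx
  rcases ha.2.eq_or_lt with rfl | ha1
  · refine ⟨-g 1, by linarith, (eventually_le_of_mul_sub_nonneg (hsub (-g 1)) (by linarith)
      fun y hy => mul_nonneg_of_nonpos_of_nonpos (by linarith) (by linarith [hy.2])).mono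
      fun x hx => ?_⟩
    simpa [h1, parabola_one, neg_le_iff_add_nonneg] using hx
  · have hlt : vt a * parabola a < vt a := by
      have := hpos a ⟨ha0, ha1⟩
      rw [parabola]
      nlinarith [sq_nonneg (a - 1 / 2)]
    exact ⟨vt a, hpos a ⟨ha0, ha1⟩,
      ((continuous_parabola.continuousWithinAt.const_mul _).eventually_lt
        (hd a ha).continuousWithinAt hlt).mono fun x => le_of_lt⟩

lemma exists_mul_parabola_le (h0 : vt 0 = 0) (h1 : vt 1 = 0)
    (hd : ∀ x ∈ Icc (0 : ℝ) 1, HasDerivWithinAt vt (g x) (Icc 0 1) x)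
    (hpos : ∀ x ∈ Ioo (0 : ℝ) 1, 0 < vt x) (hg0 : 0 < g 0) (hg1 : g 1 < 0) :
    ∃ c > 0, ∀ x ∈ Icc (0 : ℝ) 1, c * parabola x ≤ vt x := by
  suffices ∃ c > 0, ∀ x ∈ Icc (0 : ℝ) 1, x ∈ Icc (0 : ℝ) 1 → c * parabola x ≤ vt x by
    obtain ⟨c, hc, hle⟩ := this
    exact ⟨c, hc, fun x hx => hle x hx hx⟩
  refine isCompact_Icc.induction_on (p := fun s => ∃ c > 0, ∀ x ∈ s, x ∈ Icc (0 : ℝ) 1 →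
    c * parabola x ≤ vt x) ⟨1, one_pos, by simp⟩ (fun s t hst ⟨c, hc, hle⟩ =>
    ⟨c, hc, fun x hx => hle x (hst hx)⟩) ?_ fun a ha => ?_
  · rintro s t ⟨c, hc, hle⟩ ⟨d, hd, hle'⟩
    refine ⟨min c d, lt_min hc hd, fun x hx hx01 => ?_⟩
    have := parabola_nonneg hx01
    rcases hx with hx | hx
    · exact (mul_le_mul_of_nonneg_right (min_le_left c d) this).trans (hle x hx hx01)
    · exact (mul_le_mul_of_nonneg_right (min_le_right c d) this).trans (hle' x hx hx01)
  · obtain ⟨c, hc, hle⟩ := exists_mul_parabola_le_nhdsWithin h0 h1 hd hpos hg0 hg1 ha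
    exact ⟨_, hle, c, hc, fun x hx _ => hx⟩

lemma positiveWithBoundaryDerivs_of_mul_parabola_le {v : Hsp} (h0 : vt 0 = 0) (h1 : vt 1 = 0)
    (hv : v =ᵐ[μ01] vt) (hd : ∀ x ∈ Icc (0 : ℝ) 1, HasDerivWithinAt vt (g x) (Icc 0 1) x)
    (hg : ContinuousOn g (Icc 0 1)) {c : ℝ} (hc : 0 < c)
    (hle : ∀ x ∈ Icc (0 : ℝ) 1, c * parabola x ≤ vt x) : PositiveWithBoundaryDerivs v := by
  have hmem0 : (0 : ℝ) ∈ Icc (0 : ℝ) 1 := by simp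
  have hmem1 : (1 : ℝ) ∈ Icc (0 : ℝ) 1 := by simp
  have hsub x (hx : x ∈ Icc (0 : ℝ) 1) :=
    (hd x hx).sub ((hasDerivAt_parabola x).hasDerivWithinAt.const_mul c)
  have hmin a (ha : vt a = 0) (hpa : parabola a = 0) :
      IsMinOn (vt - fun x => c * parabola x) (Icc 0 1) a := fun x hx => by
    simpa [ha, hpa] using hle x hx
  have hnonneg0 := mul_sub_nonneg_of_isMinOn (convex_Icc 0 1) (hmin 0 h0 parabola_zero)
    (hsub 0 hmem0) hmem0 hmem1
  have hnonneg1 := mul_sub_nonneg_of_isMinOn (convex_Icc 0 1) (hmin 1 h1 parabola_one)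
    (hsub 1 hmem1) hmem1 hmem0
  exact ⟨vt, g, fun x hx => (hd x hx).continuousWithinAt, h0, h1, hv.symm, hd, hg,
    fun x hx => (mul_pos hc (parabola_pos hx)).trans_le (hle x (Ioo_subset_Icc_self hx)),
    by linarith, by linarith⟩

end ParabolaBarrier

/-- The solution of `y' = a y`, `y(τ) = 1`. -/
def expIntegral (a : ℝ → ℝ) (τ t : ℝ) : ℝ := Real.exp (∫ s in τ..t, a s)

section ExpIntegral

variable {a : ℝ → ℝ} {τ t : ℝ}

lemma expIntegral_pos : 0 < expIntegral a τ t := Real.exp_pos _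

lemma expIntegral_self : expIntegral a τ τ = 1 := by simp [expIntegral]

lemma expIntegral_mul_expIntegral_neg : expIntegral a τ t * expIntegral (-a) τ t = 1 := by
  simp [expIntegral, ← Real.exp_add]

lemma hasDerivAt_expIntegral (ha : Continuous a) :
    HasDerivAt (expIntegral a τ) (a t * expIntegral a τ t) t := by
  have := (intervalIntegral.integral_hasDerivAt_right (ha.intervalIntegrable τ t)
    (ha.stronglyMeasurableAtFilter _ _) ha.continuousAt).exp
  rwa [mul_comm] at this

lemma continuous_expIntegral (ha : Continuous a) : Continuous (expIntegral a τ) :=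
  continuous_iff_continuousAt.2 fun _ => (hasDerivAt_expIntegral ha).continuousAt

end ExpIntegral

namespace IsHeatCoeff

variable {b ω : ℝ → ℝ} {τ : ℝ} {U U' U'' : ℕ → ℝ → ℝ}

/-- The factor `exp (-∫ω)` removes the zero-order term, so that the minimum principle applies
whatever the sign of `ω`. -/
lemma mul_parabola_le_expIntegral_mul (h : IsHeatCoeff b ω τ U U' U'') (hω : Continuous ω)
    {c T : ℝ} (hT : τ ≤ T) (h0 : ∀ x ∈ Icc (0 : ℝ) 1, c * parabola x ≤ sineSeries U τ x)
    (hc : ∀ t ∈ Icc τ T, c < expIntegral (-ω) τ t * b t) :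
    ∀ t ∈ Icc τ T, ∀ x ∈ Icc (0 : ℝ) 1,
      0 ≤ expIntegral (-ω) τ t * sineSeries U t x - c * parabola x := by
  refine nonneg_of_strict_supersolution hT
    (Pt := fun t x => (-ω) t * expIntegral (-ω) τ t * sineSeries U t x +
      expIntegral (-ω) τ t * sineSeries U' t x)
    (Px := fun t x => expIntegral (-ω) τ t * cosineSeries (fun n t => freq n * U n t) t x -
      c * (1 / 2 - x))
    (Pxx := fun t x => expIntegral (-ω) τ t * laplacianSeries b ω U U' t x - c * (-1))
    ?_ ?_ ?_ ?_ ?_ ?_ ?_ ?_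
  · exact (((continuous_expIntegral hω.neg).comp continuous_fst).continuousOn.mul
      ((h.continuousOn_sineSeries T).mono (prod_mono_right (subset_univ _)))).sub
      ((continuous_parabola.comp continuous_snd).const_mul c).continuousOn
  · exact fun x hx => by simpa [expIntegral_self] using h0 x hx
  · exact fun t _ => by simp [sineSeries, sinFun_zero, parabola_zero]
  · exact fun t _ => by simp [sineSeries, sinFun_one, parabola_one]
  · exact fun t ht x _ => ((hasDerivAt_expIntegral hω.neg).mul
      (h.hasDerivAt_sineSeries_time ht.1 x)).sub_const _
  · exact fun t ht x _ => ((h.hasDerivAt_sineSeries_space ht.1 x).const_mul _).sub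
      ((hasDerivAt_parabola x).const_mul c)
  · exact fun t ht x hx => (((h.hasDerivWithinAt_cosineSeries ht.1
      (Ioo_subset_Icc_self hx)).hasDerivAt (Icc_mem_nhds hx.1 hx.2)).const_mul _).sub
      (((hasDerivAt_id' x).const_sub (1 / 2)).const_mul c)
  · intro t ht x _
    simp only [laplacianSeries, Pi.neg_apply]
    linarith [hc t (Ioc_subset_Icc_self ht)]

theorem exists_mul_parabola_le (h : IsHeatCoeff b ω τ U U' U'') (hb : Continuous b)
    (hω : Continuous ω) (hbpos : ∀ t, 0 < b t) {c₀ : ℝ} (hc₀ : 0 < c₀)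
    (h0 : ∀ x ∈ Icc (0 : ℝ) 1, c₀ * parabola x ≤ sineSeries U τ x) {T : ℝ} (hT : τ ≤ T) :
    ∃ c > 0, ∀ t ∈ Icc τ T, ∀ x ∈ Icc (0 : ℝ) 1, c * parabola x ≤ sineSeries U t x := by
  have hG := continuous_expIntegral (τ := τ) hω.neg
  obtain ⟨t₁, -, ht₁⟩ := isCompact_Icc.exists_isMinOn (nonempty_Icc.2 hT) (hG.mul hb).continuousOn
  obtain ⟨t₂, -, ht₂⟩ := isCompact_Icc.exists_isMaxOn (nonempty_Icc.2 hT) hG.continuousOn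
  have hm : 0 < expIntegral (-ω) τ t₁ * b t₁ := mul_pos expIntegral_pos (hbpos t₁)
  set c := min c₀ (expIntegral (-ω) τ t₁ * b t₁ / 2)
  have hc : 0 < c := lt_min hc₀ (half_pos hm)
  have hbarrier := h.mul_parabola_le_expIntegral_mul (c := c) hω hT
    (fun x hx => (mul_le_mul_of_nonneg_right (min_le_left ..) (parabola_nonneg hx)).trans (h0 x hx))
    fun t ht => ((min_le_right ..).trans_lt (half_lt_self hm)).trans_le (ht₁ ht)
  refine ⟨c / expIntegral (-ω) τ t₂, div_pos hc expIntegral_pos, fun t ht x hx => ?_⟩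
  have hpx := mul_nonneg hc.le (parabola_nonneg hx)
  have hle : c * parabola x ≤ expIntegral (-ω) τ t * sineSeries U t x :=
    sub_nonneg.1 (hbarrier t ht x hx)
  have hu : 0 ≤ sineSeries U t x := nonneg_of_mul_nonneg_right (hpx.trans hle) expIntegral_pos
  rw [div_mul_eq_mul_div, div_le_iff₀ expIntegral_pos, mul_comm (sineSeries U t x)]
  exact hle.trans (mul_le_mul_of_nonneg_right (ht₂ ht) hu)

lemma positiveWithBoundaryDerivs (h : IsHeatCoeff b ω τ U U' U'') {t c : ℝ} (ht : τ < t)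
    (hc : 0 < c) (hle : ∀ x ∈ Icc (0 : ℝ) 1, c * parabola x ≤ sineSeries U t x) :
    PositiveWithBoundaryDerivs (sineVec U t) :=
  positiveWithBoundaryDerivs_of_mul_parabola_le (by simp [sineSeries, sinFun_zero])
    (by simp [sineSeries, sinFun_one]) (h.coeFn_sineVec ht.le)
    (fun x _ => (h.hasDerivAt_sineSeries_space ht x).hasDerivWithinAt)
    (fun _ hx => (h.hasDerivWithinAt_cosineSeries ht hx).continuousWithinAt) hc hle

end IsHeatCoeff

/-! ### Solutions with prescribed initial coefficients -/

/-- The sine coefficients of the solution of `v_t - v_xx = β` with initial coefficients `a`, where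
`γ` is the derivative of `β`. Subtracting the quasi-stationary profile `β(t) x(1-x)/2` leaves a
forced decay, whose forcing involves only `γ` and gains a factor `1 / freq n ^ 2`. -/
def heatMode (β γ : ℝ → ℝ) (τ : ℝ) (a : ℕ → ℝ) (n : ℕ) (t : ℝ) : ℝ :=
  β t * (unitCoeff n / freq n ^ 2) +
    decayMode (freq n ^ 2) τ (a n - β τ * (unitCoeff n / freq n ^ 2)) (unitCoeff n / freq n ^ 2) γ t

section HeatMode

variable {β γ ω ω' E : ℝ → ℝ} {τ : ℝ} {a : ℕ → ℝ}

lemma heatMode_self (n : ℕ) : heatMode β γ τ a n τ = a n := by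
  rw [heatMode, decayMode_self, add_sub_cancel]

lemma hasL2Deriv_heatMode (hβ : HasL2Deriv β γ) (n : ℕ) :
    HasL2Deriv (heatMode β γ τ a n) (fun t => -freq n ^ 2 * decayMode (freq n ^ 2) τ
      (a n - β τ * (unitCoeff n / freq n ^ 2)) (unitCoeff n / freq n ^ 2) γ t) := by
  convert (hβ.const_mul (unitCoeff n / freq n ^ 2)).add (hasL2Deriv_decayMode (freq n ^ 2) τ
    (a n - β τ * (unitCoeff n / freq n ^ 2)) (unitCoeff n / freq n ^ 2) hβ.locL2) using 1
  · funext t; rw [heatMode, mul_comm (β t)]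
  · funext t; ring

theorem isHeatCoeff_heatMode (hβ : HasL2Deriv β γ) (ha : Summable fun n => |a n|) :
    ∃ V' V'', IsHeatCoeff β 0 τ (heatMode β γ τ a) V' V'' := by
  set p : ℕ → ℝ := fun n => unitCoeff n / freq n ^ 2
  set y : ℕ → ℝ → ℝ := fun n => decayMode (freq n ^ 2) τ (a n - β τ * p n) (p n) γ
  have hy n : HasL2Deriv (y n) (fun t => -freq n ^ 2 * y n t - p n * γ t) :=
    hasL2Deriv_decayMode _ _ _ _ hβ.locL2
  have ha' : Summable fun n => |a n - β τ * p n| := by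
    refine (ha.add (summable_abs_unitCoeff_div_sq.mul_left |β τ|)).of_nonneg_of_le
      (fun _ => abs_nonneg _) fun n => (abs_sub _ _).trans_eq (by rw [abs_mul])
  have ha_le n : |a n - β τ * p n| ≤ ∑' m, |a m - β τ * p m| :=
    ha'.le_tsum n fun _ _ => abs_nonneg _
  have hyDecay : HasDecay τ 4 y := hasDecay_decayMode hβ.locL2 abs_unitCoeff_div_sq_le ha_le
  have hq : HasDecay τ 1 (fun n _ => unitCoeff n) := .const (C := 2 * √2) (by
    simpa only [pow_one] using abs_unitCoeff_le)
  refine ⟨fun n t => -freq n ^ 2 * y n t, fun n t => freq n ^ 4 * y n t + unitCoeff n * γ t,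
    fun n t => (hasL2Deriv_heatMode hβ n).hasDerivAt ((hy n).continuous.const_mul _) t,
    fun n => ?_, fun n t => ?_, ?_, ?_, ?_, fun T => ?_⟩
  · convert (hy n).const_mul (-freq n ^ 2) using 1
    funext t
    have := (freq_pos n).ne'
    simp only [p]
    field_simp
    ring
  · have := (freq_pos n).ne'
    simp only [heatMode, y, p, Pi.zero_apply]
    field_simp
    ring
  · exact ((HasDecay.const abs_unitCoeff_div_sq_le).continuous_mul hβ.continuous).add
      (hyDecay.mono (by norm_num))
  · simpa only [neg_mul, one_mul] using
      (hyDecay.freq_pow_mul (j := 2) 2).continuous_mul (continuous_const (y := (-1 : ℝ)))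
  · exact (locSqSummable_decayMode hβ.locL2 abs_unitCoeff_div_sq_le ha_le).add
      (hq.mul_locL2 (fun _ => continuous_const) hβ.locL2)
  · obtain ⟨M, hM, hle⟩ := exists_summable_bound_decayMode hβ.locL2 abs_unitCoeff_div_sq_le ha' T
    obtain ⟨B, hB⟩ :=
      (isCompact_Icc (a := τ) (b := T)).exists_bound_of_continuousOn hβ.continuous.continuousOn
    refine ⟨_, (summable_abs_unitCoeff_div_sq.mul_left B).add hM, fun n t ht =>
      (abs_add_le _ _).trans (add_le_add ?_ (hle n t ht))⟩
    rw [abs_mul]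
    exact mul_le_mul_of_nonneg_right (hB t ht) (abs_nonneg _)

/-- Multiplication by a solution `E` of `E' = ω E` introduces the zero-order term `ω u`. -/
theorem IsHeatCoeff.mul_gauge {V V' V'' : ℕ → ℝ → ℝ} (h : IsHeatCoeff β 0 τ V V' V'')
    (hω : HasL2Deriv ω ω') (hE : ∀ t, HasDerivAt E (ω t * E t) t) :
    ∃ U' U'', IsHeatCoeff (E * β) ω τ (fun n t => E t * V n t) U' U'' := by
  have hEc : Continuous E := continuous_iff_continuousAt.2 fun t => (hE t).continuousAt
  have hωE : Continuous fun t => ω t * E t := hω.continuous.mul hEc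
  have hEL2 : HasL2Deriv E (fun t => ω t * E t) := .of_hasDerivAt hE hωE
  have hVL2 n : HasL2Deriv (V n) (V' n) :=
    .of_hasDerivAt (h.hasDerivAt n) (h.hasL2Deriv n).continuous
  have hEV := h.hasDecay.continuous_mul hEc
  refine ⟨fun n t => ω t * E t * V n t + E t * V' n t, _, fun n t => (hE t).mul (h.hasDerivAt n t),
    fun n => ((hω.mul hEL2).mul (hVL2 n)).add (hEL2.mul (h.hasL2Deriv n)), fun n t => ?_,
    hEV, ?_, ?_, fun T => ?_⟩
  · have := h.ode n t
    simp only [Pi.zero_apply, zero_mul, add_zero] at this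
    simp only [Pi.mul_apply]
    linear_combination E t * this
  · exact ((h.hasDecay.mono (by norm_num)).continuous_mul hωE).add
      (h.hasDecay_deriv.continuous_mul hEc)
  · have hV := (h.hasDecay.mono (by norm_num : 1 ≤ 3)).mul_locL2
      (fun n => (hVL2 n).continuous) (hω.mul hEL2).locL2
    have hV' := (h.hasDecay_deriv.mono one_le_two).mul_locL2
      (fun n => (h.hasL2Deriv n).continuous) (.of_continuous hωE)
    convert (hV.add hV').add (hV'.add (h.locSqSummable.continuous_mul hEc)) using 1
    funext n t
    ring
  · obtain ⟨M, hM, hle⟩ := h.exists_bound T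
    obtain ⟨B, hB⟩ :=
      (isCompact_Icc (a := τ) (b := T)).exists_bound_of_continuousOn hEc.continuousOn
    refine ⟨_, hM.mul_left B, fun n t ht => ?_⟩
    rw [abs_mul]
    exact mul_le_mul (hB t ht) (hle n t ht) (abs_nonneg _) ((norm_nonneg _).trans (hB t ht))

theorem exists_isHeatCoeff {b b' : ℝ → ℝ} (hb : HasL2Deriv b b') (hω : HasL2Deriv ω ω')
    (τ : ℝ) (ha : Summable fun n => |a n|) :
    ∃ U U' U'', IsHeatCoeff b ω τ U U' U'' ∧ ∀ n, U n τ = a n := by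
  have hE t := hasDerivAt_expIntegral (τ := τ) (t := t) hω.continuous
  have hG : HasL2Deriv (expIntegral (-ω) τ) _ :=
    .of_hasDerivAt (fun t => hasDerivAt_expIntegral hω.continuous.neg)
      (hω.continuous.neg.mul (continuous_expIntegral hω.continuous.neg))
  obtain ⟨V', V'', hV⟩ := isHeatCoeff_heatMode (τ := τ) (hb.mul hG) ha
  obtain ⟨U', U'', hU⟩ := hV.mul_gauge hω hE
  have hb : (expIntegral ω τ * fun t => b t * expIntegral (-ω) τ t) = b := by
    funext t
    rw [Pi.mul_apply, mul_left_comm, expIntegral_mul_expIntegral_neg, mul_one]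
  rw [hb] at hU
  exact ⟨_, U', U'', hU, fun n => by rw [expIntegral_self, heatMode_self, one_mul]⟩

end HeatMode

section InitialDatum

variable {v w : Hsp} {vt g : ℝ → ℝ}

lemma freq_mul_inner_sinVec (hv : v =ᵐ[μ01] vt) (hw : w =ᵐ[μ01] g)
    (hcont : ContinuousOn vt (Icc 0 1)) (h0 : vt 0 = 0) (h1 : vt 1 = 0)
    (hd : ∀ x ∈ Ioo (0 : ℝ) 1, HasDerivAt vt (g x) x) (hg : ContinuousOn g (Icc 0 1)) (n : ℕ) :
    freq n * inner ℝ (sinVec n) v = inner ℝ (cosVec n) w := by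
  rw [← uIcc_of_le zero_le_one] at hg hcont
  have hcos : IntervalIntegrable (fun x => cosFun n x * g x) volume 0 1 :=
    ((continuous_cosFun n).continuousOn.mul hg).intervalIntegrable
  have hsin : IntervalIntegrable (fun x => sinFun n x * vt x) volume 0 1 :=
    ((continuous_sinFun n).continuousOn.mul hcont).intervalIntegrable
  have hparts := intervalIntegral.integral_eq_sub_of_hasDerivAt_of_le zero_le_one
    ((continuous_cosFun n).continuousOn.mul (uIcc_of_le (zero_le_one' ℝ) ▸ hcont))
    (f' := fun x => -freq n * (sinFun n x * vt x) + cosFun n x * g x)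
    (fun x hx => ((hasDerivAt_cosFun n x).mul (hd x hx)).congr_deriv (by rw [mul_assoc]))
    ((hsin.const_mul _).add hcos)
  rw [intervalIntegral.integral_add (hsin.const_mul _) hcos, intervalIntegral.integral_const_mul,
    Pi.mul_apply, Pi.mul_apply, h0, h1, ← integral_μ01, ← integral_μ01,
    ← inner_eq_integral (coeFn_sinVec n) hv, ← inner_eq_integral (coeFn_cosVec n) hw] at hparts
  linarith

lemma summable_abs_inner_sinVec (hv : v =ᵐ[μ01] vt) (hcont : ContinuousOn vt (Icc 0 1))
    (h0 : vt 0 = 0) (h1 : vt 1 = 0) (hd : ∀ x ∈ Ioo (0 : ℝ) 1, HasDerivAt vt (g x) x)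
    (hg : ContinuousOn g (Icc 0 1)) : Summable fun n => |inner ℝ (sinVec n) v| := by
  obtain ⟨w, hw⟩ : ∃ w : Hsp, w =ᵐ[μ01] g := ⟨_, (memLp_μ01_of_continuousOn hg).coeFn_toLp⟩
  have hbessel := orthonormal_cosVec.inner_products_summable w
  refine (hbessel.add (summable_one_div_freq_pow le_rfl)).of_nonneg_of_le
    (fun _ => abs_nonneg _) fun n => ?_
  have hk := freq_pos n
  have hcoeff : |inner ℝ (sinVec n) v| = ‖inner ℝ (cosVec n) w‖ * (1 / freq n) := by
    rw [← freq_mul_inner_sinVec hv hw hcont h0 h1 hd hg n, Real.norm_eq_abs, abs_mul,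
      abs_of_pos hk]
    field_simp
  rw [hcoeff, ← one_div_pow]
  nlinarith [two_mul_le_add_sq ‖inner ℝ (cosVec n) w‖ (1 / freq n),
    sq_nonneg ‖inner ℝ (cosVec n) w‖, sq_nonneg (1 / freq n)]

lemma sineVec_eq_of_forall_eq_inner {c : ℕ → ℝ → ℝ} {t : ℝ}
    (hc : ∀ n, c n t = inner ℝ (sinVec n) v) : sineVec c t = v := by
  simp only [sineVec, hc]
  exact (hasSum_inner_sinVec v).tsum_eq

end InitialDatum

/-! ### Grönwall's inequality in Hilbert space -/

section AbsolutelyContinuous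

variable {X Y E : Type*} [PseudoMetricSpace X] [PseudoMetricSpace Y] [NormedAddCommGroup E]
  {a b : ℝ}

lemma absolutelyContinuousOnInterval_of_dist_le_mul {f : ℝ → X} {g : ℝ → Y} {K : ℝ}
    (hf : AbsolutelyContinuousOnInterval f a b)
    (hd : ∀ s ∈ uIcc a b, ∀ t ∈ uIcc a b, dist (g s) (g t) ≤ K * dist (f s) (f t)) :
    AbsolutelyContinuousOnInterval g a b := by
  refine squeeze_zero' (.of_forall fun _ => Finset.sum_nonneg fun _ _ => dist_nonneg) ?_
    (by simpa using Filter.Tendsto.const_mul K hf)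
  rw [Filter.eventually_inf_principal]
  filter_upwards with I hI
  rw [Finset.mul_sum]
  exact Finset.sum_le_sum fun i hi => hd _ (hI.1 i hi).1 _ (hI.1 i hi).2

lemma absolutelyContinuousOnInterval_norm_sq {z : ℝ → E}
    (hz : AbsolutelyContinuousOnInterval z a b) :
    AbsolutelyContinuousOnInterval (fun t => ‖z t‖ ^ 2) a b := by
  obtain ⟨C, hC⟩ := hz.exists_bound
  refine absolutelyContinuousOnInterval_of_dist_le_mul (K := C + C) hz fun s hs t ht => ?_
  rw [Real.dist_eq, dist_eq_norm, sq_sub_sq, abs_mul, abs_of_nonneg (by positivity)]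
  exact mul_le_mul (add_le_add (hC s hs) (hC t ht)) (abs_norm_sub_norm_le _ _) (abs_nonneg _)
    (by linarith [(norm_nonneg _).trans (hC s hs)])

lemma absolutelyContinuousOnInterval_const_add_integral [NormedSpace ℝ E] {z' : ℝ → E} (p : E)
    (hi : IntervalIntegrable z' volume a b) :
    AbsolutelyContinuousOnInterval (fun t => p + ∫ s in a..t, z' s) a b := by
  have hsub (t) (ht : t ∈ uIcc a b) : IntervalIntegrable z' volume a t :=
    hi.mono_set (uIcc_subset_uIcc_left ht)
  refine absolutelyContinuousOnInterval_of_dist_le_mul (K := 1)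
    (hi.norm.absolutelyContinuousOnInterval_intervalIntegral (c := a) (by simp))
    fun s hs t ht => ?_
  rw [dist_add_left, dist_eq_norm, Real.dist_eq, one_mul,
    intervalIntegral.integral_interval_sub_left (hsub s hs) (hsub t ht),
    intervalIntegral.integral_interval_sub_left (hsub s hs).norm (hsub t ht).norm]
  exact intervalIntegral.norm_integral_le_abs_integral_norm

end AbsolutelyContinuous

section Gronwall

variable {E : Type*} [NormedAddCommGroup E] [InnerProductSpace ℝ E] [CompleteSpace E]
  {z z' : ℝ → E} {C τ T : ℝ}

lemma norm_sq_mul_exp_le_of_inner_le (hT : τ ≤ T) (hi : IntervalIntegrable z' volume τ T)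
    (hz : ∀ t ∈ Icc τ T, z t = z τ + ∫ s in τ..t, z' s)
    (hC : ∀ᵐ t ∂(volume.restrict (Ioo τ T)), inner ℝ (z t) (z' t) ≤ C * ‖z t‖ ^ 2) :
    ‖z T‖ ^ 2 * Real.exp (-(2 * C) * T) ≤ ‖z τ‖ ^ 2 * Real.exp (-(2 * C) * τ) := by
  set y : ℝ → E := fun t => z τ + ∫ s in τ..t, z' s
  set f : ℝ → ℝ := fun t => ‖y t‖ ^ 2 * Real.exp (-(2 * C) * t)
  have hexp (t : ℝ) : HasDerivAt (fun t => Real.exp (-(2 * C) * t))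
      (Real.exp (-(2 * C) * t) * (-(2 * C))) t := by
    simpa using ((hasDerivAt_id t).const_mul (-(2 * C))).exp
  have hf : AbsolutelyContinuousOnInterval f τ T :=
    (absolutelyContinuousOnInterval_norm_sq
      (absolutelyContinuousOnInterval_const_add_integral _ hi)).fun_mul
      ((HasL2Deriv.of_hasDerivAt hexp (by fun_prop)).absolutelyContinuousOnInterval τ T)
  have hderiv : ∀ᵐ t ∂(volume.restrict (Ioo τ T)), deriv f t ≤ 0 := by
    filter_upwards [ae_restrict_of_ae hi.ae_hasDerivAt_integral, hC,
      ae_restrict_mem measurableSet_Ioo] with t hz't hCt ht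
    have hy : HasDerivAt y (z' t) t := (hz't (Icc_subset_uIcc (Ioo_subset_Icc_self ht)) τ
      left_mem_uIcc).const_add _
    have hft : HasDerivAt f _ t := hy.norm_sq.mul (hexp t)
    rw [hft.deriv, show y t = z t from (hz t (Ioo_subset_Icc_self ht)).symm]
    nlinarith [Real.exp_pos (-(2 * C) * t)]
  have hle : f T - f τ ≤ 0 := by
    rw [← hf.integral_deriv_eq_sub, intervalIntegral.integral_of_le hT,
      integral_Ioc_eq_integral_Ioo]
    exact integral_nonpos_of_ae hderiv
  simpa [f, y, ← hz T (right_mem_Icc.2 hT)] using hle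

theorem eq_zero_of_inner_le (hc : ContinuousOn z (Ici τ)) (h0 : z τ = 0)
    (hf : ∀ T1 T2, τ < T1 → T1 < T2 → IntervalIntegrable z' volume T1 T2 ∧
      ∀ t ∈ Icc T1 T2, z t = z T1 + ∫ s in T1..t, z' s)
    (hC : ∀ᵐ t ∂(volume.restrict (Ioo τ T)), inner ℝ (z t) (z' t) ≤ C * ‖z t‖ ^ 2)
    {t : ℝ} (ht : t ∈ Icc τ T) : z t = 0 := by
  rcases ht.1.eq_or_lt with rfl | hlt
  · exact h0
  have hlim : ContinuousWithinAt (fun s => ‖z s‖ ^ 2 * Real.exp (-(2 * C) * s)) (Ioi τ) τ :=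
    (((hc τ self_mem_Ici).mono Ioi_subset_Ici_self).norm.pow 2).mul (by fun_prop)
  have hle : ‖z t‖ ^ 2 * Real.exp (-(2 * C) * t) ≤ ‖z τ‖ ^ 2 * Real.exp (-(2 * C) * τ) := by
    refine ge_of_tendsto hlim ?_
    filter_upwards [Ioo_mem_nhdsGT hlt] with s hs
    obtain ⟨hi, hz⟩ := hf s t hs.1 hs.2
    exact norm_sq_mul_exp_le_of_inner_le hs.2.le hi hz
      (ae_restrict_of_ae_restrict_of_subset (Ioo_subset_Ioo hs.1.le ht.2) hC)
  rw [h0, norm_zero, zero_pow two_ne_zero, zero_mul] at hle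
  simpa using nonpos_of_mul_nonpos_left hle (Real.exp_pos _)

end Gronwall

/-! ### A Hardy-type inequality -/

lemma HasL2Deriv.sub_sq_le {F d : ℝ → ℝ} (h : HasL2Deriv F d) {s t : ℝ} (hst : s ≤ t) :
    (F t - F s) ^ 2 ≤ (t - s) * ∫ x in s..t, d x ^ 2 := by
  rcases hst.eq_or_lt with rfl | hlt
  · simp
  set m := (F t - F s) / (t - s)
  have hm : F t - F s = m * (t - s) := (div_mul_cancel₀ _ (sub_pos.2 hlt).ne').symm
  have hnonneg : 0 ≤ ∫ x in s..t, (d x ^ 2 - 2 * m * d x + m ^ 2) :=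
    intervalIntegral.integral_nonneg hst fun x _ => by nlinarith [sq_nonneg (d x - m)]
  have hsq := h.locL2.intervalIntegrable_sq s t
  have hlin := (h.intervalIntegrable s t).const_mul (2 * m)
  rw [intervalIntegral.integral_add (hsq.sub hlin) (by simp),
    intervalIntegral.integral_sub hsq hlin, intervalIntegral.integral_const_mul,
    intervalIntegral.integral_const, smul_eq_mul, ← h.sub_eq, hm] at hnonneg
  rw [hm]
  nlinarith [sub_pos.2 hlt]

lemma HasL2Deriv.sq_le_parabola_mul {F d : ℝ → ℝ} (h : HasL2Deriv F d) (h0 : F 0 = 0)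
    (h1 : F 1 = 0) {x : ℝ} (hx : x ∈ Icc (0 : ℝ) 1) :
    F x ^ 2 ≤ parabola x * (2 * ∫ y in (0 : ℝ)..1, d y ^ 2) := by
  have hleft := h.sub_sq_le hx.1
  have hright := h.sub_sq_le hx.2
  rw [h0] at hleft
  rw [h1] at hright
  rw [← intervalIntegral.integral_add_adjacent_intervals (h.locL2.intervalIntegrable_sq 0 x)
    (h.locL2.intervalIntegrable_sq x 1), parabola]
  have := mul_le_mul_of_nonneg_left hleft (sub_nonneg.2 hx.2)
  have := mul_le_mul_of_nonneg_left hright hx.1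
  nlinarith

lemma neg_inner_eq_integral_sq {F g d : ℝ → ℝ} {v w : Hsp} (hF : HasL2Deriv F g)
    (hg : HasL2Deriv g d) (h0 : F 0 = 0) (h1 : F 1 = 0) (hv : v =ᵐ[μ01] F) (hw : w =ᵐ[μ01] d) :
    -inner ℝ v w = ∫ x in (0 : ℝ)..1, g x ^ 2 := by
  have hparts := (hF.mul hg).sub_eq 0 1
  rw [intervalIntegral.integral_add ((hg.continuous.fun_mul hg.continuous).intervalIntegrable 0 1)
    ((hg.locL2.continuous_mul hF.continuous).intervalIntegrable 0 1), h0, h1] at hparts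
  rw [inner_eq_integral hv hw, integral_μ01]
  simp only [sq]
  linarith

namespace InDomainA

variable {v w v' w' : Hsp}

lemma exists_hasL2Deriv (h : InDomainA v w) : ∃ F g d, HasL2Deriv F g ∧ HasL2Deriv g d ∧
    F 0 = 0 ∧ F 1 = 0 ∧ v =ᵐ[μ01] F ∧ w =ᵐ[μ01] d := by
  obtain ⟨vt, hcont, h0, h1, hv, g, hg, hgw⟩ := h
  set d : ℝ → ℝ := (Ioo (0 : ℝ) 1).indicator w
  have hd : LocL2 d := fun s t =>
    ((memLp_indicator_iff_restrict measurableSet_Ioo).2 (Lp.memLp w)).restrict _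
  have hG : HasL2Deriv (fun x => g (1 / 2) + ∫ y in (1 / 2 : ℝ)..x, d y) d := by
    simpa using (HasL2Deriv.const (g (1 / 2))).add (.primitive hd (1 / 2))
  have hGg : ∀ x ∈ Ioo (0 : ℝ) 1, g (1 / 2) + ∫ y in (1 / 2 : ℝ)..x, d y = g x := by
    intro x hx
    have hmid : (1 / 2 : ℝ) ∈ Ioo (0 : ℝ) 1 := by norm_num
    rw [← eq_sub_iff_add_eq', hgw x hx _ hmid]
    exact intervalIntegral.integral_congr fun y hy =>
      indicator_of_mem (ordConnected_Ioo.uIcc_subset hmid hx hy) _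
  have hF : ∀ x ∈ Icc (0 : ℝ) 1,
      ∫ y in (0 : ℝ)..x, (g (1 / 2) + ∫ y in (1 / 2 : ℝ)..y, d y) = vt x := by
    intro x hx
    rw [intervalIntegral.integral_eq_sub_of_hasDerivAt_of_le hx.1
      (hcont.mono (Icc_subset_Icc_right hx.2)) (fun y hy => ?_)
      (hG.continuous.intervalIntegrable _ _), h0, sub_zero]
    have hy' : y ∈ Ioo (0 : ℝ) 1 := ⟨hy.1, hy.2.trans_le hx.2⟩
    rw [hGg y hy']
    exact hg y hy'
  refine ⟨_, _, d, .primitive (.of_continuous hG.continuous) 0, hG, by simp,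
    by rw [hF 1 (by simp), h1], ?_, ?_⟩
  · filter_upwards [hv, ae_μ01_mem] with x hvx hx
    rw [hF x (Ioo_subset_Icc_self hx), hvx]
  · filter_upwards [ae_μ01_mem] with x hx
    exact (indicator_of_mem hx _).symm

lemma inner_nonpos (h : InDomainA v w) : inner ℝ v w ≤ 0 := by
  obtain ⟨F, g, d, hF, hg, h0, h1, hv, hw⟩ := h.exists_hasL2Deriv
  rw [← neg_nonneg, neg_inner_eq_integral_sq hF hg h0 h1 hv hw]
  exact intervalIntegral.integral_nonneg zero_le_one fun _ _ => sq_nonneg _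

lemma sq_le_parabola_mul_neg_inner (h : InDomainA v w) :
    ∀ᵐ x ∂μ01, v x ^ 2 ≤ parabola x * (2 * -inner ℝ v w) := by
  obtain ⟨F, g, d, hF, hg, h0, h1, hv, hw⟩ := h.exists_hasL2Deriv
  filter_upwards [hv, ae_μ01_mem] with x hvx hx
  rw [hvx, neg_inner_eq_integral_sq hF hg h0 h1 hv hw]
  exact hF.sq_le_parabola_mul h0 h1 (Ioo_subset_Icc_self hx)

lemma integrable_sq_div_parabola (h : InDomainA v w) :
    Integrable (fun x => v x ^ 2 / parabola x) μ01 := by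
  refine Integrable.of_bound (C := 2 * -inner ℝ v w)
    (((Lp.aestronglyMeasurable v).pow 2).aemeasurable.div
      continuous_parabola.aemeasurable).aestronglyMeasurable ?_
  filter_upwards [h.sq_le_parabola_mul_neg_inner, ae_μ01_mem] with x hvx hx
  have hp := parabola_pos hx
  rw [Real.norm_of_nonneg (by positivity), div_le_iff₀' hp]
  exact hvx

lemma sub (h : InDomainA v w) (h' : InDomainA v' w') : InDomainA (v - v') (w - w') := by
  obtain ⟨vt, hcont, h0, h1, hv, g, hg, hgw⟩ := h
  obtain ⟨vt', hcont', h0', h1', hv', g', hg', hgw'⟩ := h'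
  refine ⟨vt - vt', hcont.sub hcont', by simp [h0, h0'], by simp [h1, h1'], ?_,
    g - g', fun x hx => (hg x hx).sub (hg' x hx), fun x hx y hy => ?_⟩
  · filter_upwards [hv, hv', Lp.coeFn_sub v v'] with x hvx hvx' hsub
    rw [hsub, Pi.sub_apply, Pi.sub_apply, hvx, hvx']
  have hyx : uIcc y x ⊆ Ioo 0 1 := ordConnected_Ioo.uIcc_subset hy hx
  have hint (w : Hsp) : IntervalIntegrable w volume y x :=
    (IntegrableOn.mono_set ((Lp.memLp w).integrable one_le_two) hyx).intervalIntegrable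
  have hsub : ∫ z in y..x, (w - w') z = ∫ z in y..x, (w z - w' z) := by
    refine intervalIntegral.integral_congr_ae_restrict ?_
    exact ae_restrict_of_ae_restrict_of_subset (uIoc_subset_uIcc.trans hyx) (Lp.coeFn_sub w w')
  rw [hsub, intervalIntegral.integral_sub (hint w) (hint w'), ← hgw x hx y hy, ← hgw' x hx y hy,
    Pi.sub_apply, Pi.sub_apply]
  ring

end InDomainA

lemma integral_sq_eq_norm_sq (v : Hsp) : ∫ x, v x ^ 2 ∂μ01 = ‖v‖ ^ 2 := by
  rw [← real_inner_self_eq_norm_sq, inner_eq_integral .rfl .rfl]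
  simp only [sq]

lemma measurableSet_parabola_lt (δ : ℝ) : MeasurableSet {x | parabola x < δ} :=
  measurableSet_lt continuous_parabola.measurable measurable_const

lemma measureReal_μ01_parabola_lt_le {δ : ℝ} (hδ : 0 ≤ δ) :
    μ01.real {x | parabola x < δ} ≤ 8 * δ := by
  have hsub : {x | parabola x < δ} ∩ Ioo 0 1 ⊆ Ioo 0 (4 * δ) ∪ Ioo (1 - 4 * δ) 1 := by
    rintro x ⟨hx, hx0, hx1⟩
    by_contra hnot
    simp only [mem_union, mem_Ioo, hx0, hx1, true_and, and_true, not_or, not_lt] at hnot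
    simp only [mem_ofPred_eq, parabola] at hx
    rcases le_total x (1 / 2) with h | h <;> nlinarith
  calc μ01.real {x | parabola x < δ}
      = volume.real ({x | parabola x < δ} ∩ Ioo 0 1) :=
        measureReal_restrict_apply (measurableSet_parabola_lt δ)
    _ ≤ volume.real (Ioo 0 (4 * δ) ∪ Ioo (1 - 4 * δ) 1) := measureReal_mono hsub
        (measure_union_lt_top measure_Ioo_lt_top measure_Ioo_lt_top).ne
    _ ≤ volume.real (Ioo 0 (4 * δ)) + volume.real (Ioo (1 - 4 * δ) 1) := measureReal_union_le _ _
    _ = 8 * δ := by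
        rw [Real.volume_real_Ioo_of_le (by linarith), Real.volume_real_Ioo_of_le (by linarith)]
        ring

lemma InDomainA.sq_div_parabola_le {v w : Hsp} (h : InDomainA v w) {δ : ℝ} (hδ : 0 < δ) :
    ∀ᵐ x ∂μ01, v x ^ 2 / parabola x ≤
      v x ^ 2 / δ + {x | parabola x < δ}.indicator (fun _ => 2 * -inner ℝ v w) x := by
  filter_upwards [h.sq_le_parabola_mul_neg_inner, ae_μ01_mem] with x hvx hx
  by_cases hxδ : parabola x < δ
  · rw [indicator_of_mem (by exact hxδ)]
    exact le_add_of_nonneg_of_le (by positivity) ((div_le_iff₀' (parabola_pos hx)).2 hvx)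
  · rw [indicator_of_notMem (by exact hxδ), add_zero]
    exact div_le_div_of_nonneg_left (sq_nonneg _) hδ (not_lt.1 hxδ)

/-- Near the boundary, on a set of small measure, `v² / parabola` is bounded by the Dirichlet
energy `-⟨v, v''⟩`; elsewhere it is bounded by a multiple of `v²`. -/
theorem exists_mul_integral_sq_div_parabola_le {K : ℝ} (hK : 0 ≤ K) : ∃ C, ∀ v w, InDomainA v w →
    K * ∫ x, v x ^ 2 / parabola x ∂μ01 ≤ C * ‖v‖ ^ 2 - inner ℝ v w := by
  set δ := 1 / (16 * (K + 1)) with hδ_def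
  have hδ : 0 < δ := by positivity
  have hKδ : K * (16 * δ) ≤ 1 := by
    rw [show K * (16 * δ) = K / (K + 1) by rw [hδ_def]; field_simp]
    exact div_le_one_of_le₀ (by linarith) (by linarith)
  refine ⟨K / δ, fun v w h => ?_⟩
  have hsq : Integrable (fun x => v x ^ 2) μ01 := (Lp.memLp v).integrable_sq
  have hle := integral_mono_ae h.integrable_sq_div_parabola
    ((hsq.div_const δ).add ((integrable_const _).indicator (measurableSet_parabola_lt δ)))
    (h.sq_div_parabola_le hδ)
  rw [integral_add' (hsq.div_const δ)
    ((integrable_const _).indicator (measurableSet_parabola_lt δ)), integral_div,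
    integral_sq_eq_norm_sq, integral_indicator_const _ (measurableSet_parabola_lt δ),
    smul_eq_mul] at hle
  have hG := neg_nonneg.2 h.inner_nonpos
  calc K * ∫ x, v x ^ 2 / parabola x ∂μ01
      ≤ K * (‖v‖ ^ 2 / δ + 8 * δ * (2 * -inner ℝ v w)) := by
        gcongr
        exact hle.trans (by gcongr; exact measureReal_μ01_parabola_lt_le hδ.le)
    _ = K / δ * ‖v‖ ^ 2 + K * (16 * δ) * -inner ℝ v w := by ring
    _ ≤ K / δ * ‖v‖ ^ 2 - inner ℝ v w := by nlinarith

/-! ### Uniqueness -/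

lemma mem_Icc_of_mem_heaviside {s h : ℝ} (hh : h ∈ heaviside s) : h ∈ Icc (-1) 1 := by
  unfold heaviside at hh
  split_ifs at hh <;> simp_all

lemma eq_one_of_mem_heaviside {s h : ℝ} (hs : 0 < s) (hh : h ∈ heaviside s) : h = 1 := by
  rwa [heaviside, if_neg hs.not_gt, if_neg hs.ne'] at hh

/-- If `w ≤ 0` then `c p ≤ a - w`; if `w > 0` the left hand side vanishes. -/
lemma sub_mul_sub_le_of_mem_heaviside {a w h k c p : ℝ} (hc : 0 < c) (hp : 0 < p) (ha : c * p ≤ a)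
    (hh : h ∈ heaviside a) (hk : k ∈ heaviside w) :
    (a - w) * (h - k) ≤ 2 / c * ((a - w) ^ 2 / p) := by
  have hcp : 0 < c * p := mul_pos hc hp
  rw [eq_one_of_mem_heaviside (hcp.trans_le ha) hh]
  rcases lt_or_ge 0 w with hw | hw
  · rw [eq_one_of_mem_heaviside hw hk, sub_self, mul_zero]
    positivity
  · have hk' := mem_Icc_of_mem_heaviside hk
    rw [div_mul_div_comm, le_div_iff₀ hcp]
    calc (a - w) * (1 - k) * (c * p) ≤ (a - w) * 2 * (a - w) := by
          gcongr <;> linarith [hk'.1]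
      _ = 2 * (a - w) ^ 2 := by ring

lemma inner_sub_le_of_mem_heaviside {β κ c : ℝ} (hβ : 0 ≤ β) (hc : 0 < c) {u w r ρ : Hsp}
    (hpos : ∀ᵐ x ∂μ01, c * parabola x ≤ u x)
    (hr : ∀ᵐ x ∂μ01, ∃ h ∈ heaviside (u x), r x = β * h + κ * u x)
    (hρ : ∀ᵐ x ∂μ01, ∃ h ∈ heaviside (w x), ρ x = β * h + κ * w x)
    (hint : Integrable (fun x => (u - w) x ^ 2 / parabola x) μ01) :
    inner ℝ (u - w) (r - ρ) ≤
      κ * ‖u - w‖ ^ 2 + β * (2 / c) * ∫ x, (u - w) x ^ 2 / parabola x ∂μ01 := by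
  have hsq : Integrable (fun x => (u - w) x ^ 2) μ01 := (Lp.memLp (u - w)).integrable_sq
  rw [← integral_sq_eq_norm_sq, ← integral_const_mul, ← integral_const_mul,
    ← integral_add (hsq.const_mul κ) (hint.const_mul _), L2.inner_def]
  refine integral_mono_ae (L2.integrable_inner _ _)
    ((hsq.const_mul κ).add (hint.const_mul _)) ?_
  filter_upwards [hpos, hr, hρ, Lp.coeFn_sub u w, Lp.coeFn_sub r ρ, ae_μ01_mem]
    with x hux ⟨h, hh, hrx⟩ ⟨k, hk, hρx⟩ huw hrρ hx
  rw [huw, hrρ, Pi.sub_apply, Pi.sub_apply, hrx, hρx]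
  have := mul_le_mul_of_nonneg_left
    (sub_mul_sub_le_of_mem_heaviside hc (parabola_pos hx) hux hh hk) hβ
  simp only [RCLike.inner_apply, conj_trivial]
  linarith

theorem exists_inner_sub_le {B Ω c : ℝ} (hB : 0 ≤ B) (hc : 0 < c) :
    ∃ C, ∀ β ∈ Icc 0 B, ∀ κ ≤ Ω, ∀ u w r ρ uxx wxx : Hsp, (∀ᵐ x ∂μ01, c * parabola x ≤ u x) →
      (∀ᵐ x ∂μ01, ∃ h ∈ heaviside (u x), r x = β * h + κ * u x) →
      (∀ᵐ x ∂μ01, ∃ h ∈ heaviside (w x), ρ x = β * h + κ * w x) →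
      InDomainA u uxx → InDomainA w wxx →
      inner ℝ (u - w) ((r + uxx) - (ρ + wxx)) ≤ C * ‖u - w‖ ^ 2 := by
  obtain ⟨C, hC⟩ := exists_mul_integral_sq_div_parabola_le (K := B * (2 / c)) (by positivity)
  refine ⟨Ω + C, fun β hβ κ hκ u w r ρ uxx wxx hpos hr hρ hu hw => ?_⟩
  have hdom := hu.sub hw
  have hweight : 0 ≤ ∫ x, (u - w) x ^ 2 / parabola x ∂μ01 := integral_nonneg_of_ae <| by
    filter_upwards [ae_μ01_mem] with x hx
    exact div_nonneg (sq_nonneg _) (parabola_pos hx).le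
  calc inner ℝ (u - w) ((r + uxx) - (ρ + wxx))
      = inner ℝ (u - w) (r - ρ) + inner ℝ (u - w) (uxx - wxx) := by
        rw [← inner_add_right, add_sub_add_comm]
    _ ≤ κ * ‖u - w‖ ^ 2 + β * (2 / c) * ∫ x, (u - w) x ^ 2 / parabola x ∂μ01
        + inner ℝ (u - w) (uxx - wxx) := by
        gcongr
        exact inner_sub_le_of_mem_heaviside hβ.1 hc hpos hr hρ hdom.integrable_sq_div_parabola
    _ ≤ Ω * ‖u - w‖ ^ 2 + B * (2 / c) * ∫ x, (u - w) x ^ 2 / parabola x ∂μ01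
        + inner ℝ (u - w) (uxx - wxx) := by
        gcongr
        exact hβ.2
    _ ≤ (Ω + C) * ‖u - w‖ ^ 2 := by linarith [hC _ _ hdom]

theorem IsStrongSolution.eqOn_of_mul_parabola_le {b ω : ℝ → ℝ} {τ T c : ℝ} {u w : ℝ → Hsp}
    (hu : IsStrongSolution b ω τ u) (hw : IsStrongSolution b ω τ w) (hb : Continuous b)
    (hω : Continuous ω) (hbpos : ∀ t, 0 ≤ b t) (hc : 0 < c) (h0 : w τ = u τ)
    (hpos : ∀ t ∈ Ioo τ T, ∀ᵐ x ∂μ01, c * parabola x ≤ u t x) : EqOn w u (Icc τ T) := by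
  obtain ⟨r, u', uxx, hu⟩ := hu
  obtain ⟨ρ, w', wxx, hw⟩ := hw
  obtain ⟨B, hB⟩ := (isCompact_Icc (a := τ) (b := T)).bddAbove_image hb.continuousOn
  obtain ⟨Ω, hΩ⟩ := (isCompact_Icc (a := τ) (b := T)).bddAbove_image hω.continuousOn
  obtain ⟨C, hC⟩ := exists_inner_sub_le (B := max B 0) (Ω := Ω) (le_max_right _ _) hc
  have hfund (T1 T2 : ℝ) (h1 : τ < T1) (h12 : T1 < T2) :
      IntervalIntegrable (u' - w') volume T1 T2 ∧
      ∀ t ∈ Icc T1 T2, (u - w) t = (u - w) T1 + ∫ s in T1..t, (u' - w') s := by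
    obtain ⟨hui, huint⟩ := hu.fund T1 T2 h1 h12
    obtain ⟨hwi, hwint⟩ := hw.fund T1 T2 h1 h12
    refine ⟨hui.sub hwi, fun t ht => ?_⟩
    have hsub : uIcc T1 t ⊆ uIcc T1 T2 := uIcc_subset_uIcc_left (Icc_subset_uIcc ht)
    simp only [Pi.sub_apply]
    rw [intervalIntegral.integral_sub (hui.mono_set hsub) (hwi.mono_set hsub), huint t ht,
      hwint t ht]
    abel
  have hdiss : ∀ᵐ t ∂(volume.restrict (Ioo τ T)),
      inner ℝ ((u - w) t) ((u' - w') t) ≤ C * ‖(u - w) t‖ ^ 2 := by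
    have hall := hu.sel.and (hw.sel.and (hu.dom.and (hw.dom.and (hu.eq.and hw.eq))))
    filter_upwards [ae_restrict_of_ae_restrict_of_subset Ioo_subset_Ioi_self hall,
      ae_restrict_mem measurableSet_Ioo] with t ⟨hr, hρ, hdu, hdw, heu, hew⟩ ht
    have hmem := Ioo_subset_Icc_self ht
    rw [Pi.sub_apply, Pi.sub_apply, heu, hew]
    exact hC (b t) ⟨hbpos t, (hB (mem_image_of_mem b hmem)).trans (le_max_left _ _)⟩ (ω t)
      (hΩ (mem_image_of_mem ω hmem)) _ _ _ _ _ _ (hpos t ht) hr hρ hdu hdw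
  exact fun t ht => (sub_eq_zero.1 (eq_zero_of_inner_le (hu.cont.sub hw.cont)
    (sub_eq_zero.2 h0.symm) hfund hdiss ht)).symm

/-! ### Well-posedness -/

section MainResult

variable {b ω : ℝ → ℝ} {τ : ℝ}

lemma PositiveWithBoundaryDerivs.exists_isHeatCoeff_sineVec_eq {b' ω' : ℝ → ℝ} {v : Hsp}
    (hv : PositiveWithBoundaryDerivs v) (hb : HasL2Deriv b b') (hω : HasL2Deriv ω ω') :
    ∃ U U' U'', IsHeatCoeff b ω τ U U' U'' ∧ sineVec U τ = v ∧
      ∃ c > 0, ∀ x ∈ Icc (0 : ℝ) 1, c * parabola x ≤ sineSeries U τ x := by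
  obtain ⟨vt, g, hcont, h0, h1, hae, hd, hg, hpos, hg0, hg1⟩ := hv
  have hsum := summable_abs_inner_sinVec (Filter.EventuallyEq.symm hae) hcont h0 h1
    (fun x hx => (hd x (Ioo_subset_Icc_self hx)).hasDerivAt (Icc_mem_nhds hx.1 hx.2)) hg
  obtain ⟨U, U', U'', hU, hUτ⟩ := exists_isHeatCoeff hb hω τ hsum
  have hsineVec : sineVec U τ = v := sineVec_eq_of_forall_eq_inner hUτ
  have heqOn : EqOn (sineSeries U τ) vt (Icc 0 1) := by
    refine eqOn_Icc_of_ae_eq_μ01 ?_ ?_ hcont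
    · filter_upwards [hU.coeFn_sineVec le_rfl, hae] with x hUx hvx
      rw [← hUx, hsineVec, hvx]
    · exact (hU.continuousOn_sineSeries τ).comp (f := fun x : ℝ => (τ, x)) (by fun_prop)
        fun _ _ => ⟨⟨le_rfl, le_rfl⟩, mem_univ _⟩
  obtain ⟨c, hc, hle⟩ := exists_mul_parabola_le h0 h1 hd hpos hg0 hg1
  exact ⟨U, U', U'', hU, hsineVec, c, hc, fun x hx => (hle x hx).trans_eq (heqOn hx).symm⟩

lemma IsHeatCoeff.eq_of_isStrongSolution {U U' U'' : ℕ → ℝ → ℝ} (h : IsHeatCoeff b ω τ U U' U'')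
    (hb : Continuous b) (hω : Continuous ω) (hbpos : ∀ t, 0 ≤ b t)
    (hu : IsStrongSolution b ω τ (sineVec U)) {w : ℝ → Hsp} (hw : IsStrongSolution b ω τ w)
    (h0 : w τ = sineVec U τ) {t c : ℝ} (ht : τ ≤ t) (hc : 0 < c)
    (hle : ∀ s ∈ Icc τ t, ∀ x ∈ Icc (0 : ℝ) 1, c * parabola x ≤ sineSeries U s x) :
    w t = sineVec U t := by
  refine hu.eqOn_of_mul_parabola_le hw hb hω hbpos hc h0 (fun s hs => ?_) (right_mem_Icc.2 ht)
  filter_upwards [h.coeFn_sineVec hs.1.le, ae_μ01_mem] with x hx hx01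
  exact (hle s (Ioo_subset_Icc_self hs) x (Ioo_subset_Icc_self hx01)).trans_eq hx.symm

theorem statement7_general (hb : Continuous b) (hω : Continuous ω) (hbpos : ∀ t, 0 < b t)
    (hb' : Wkloc 1 b) (hω' : Wkloc 1 ω) {uτ : Hsp} (hpos : PositiveWithBoundaryDerivs uτ) :
    ∃ u : ℝ → Hsp,
      IsStrongSolution b ω τ u ∧ u τ = uτ ∧
      (∀ w : ℝ → Hsp, IsStrongSolution b ω τ w → w τ = uτ →
        ∀ t, τ ≤ t → w t = u t) ∧
      (∀ t, τ ≤ t → PositiveWithBoundaryDerivs (u t)) ∧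
      CjIntoHm 0 3 u (Ioi τ) ∧
      CkIntoV 1 u (Ioi τ) ∧
      HasL2locTimeDerivChain 2 u τ ∧
      ClassicalUtUxx τ u := by
  obtain ⟨U, U', U'', hU, rfl, c₀, hc₀, hle₀⟩ :=
    hpos.exists_isHeatCoeff_sineVec_eq (τ := τ) (hb'.hasL2Deriv hb) (hω'.hasL2Deriv hω)
  have hbarrier {T : ℝ} (hT : τ ≤ T) := hU.exists_mul_parabola_le hb hω hbpos hc₀ hle₀ hT
  have hsol : IsStrongSolution b ω τ (sineVec U) := hU.isStrongSolution hb hω fun t ht x hx => by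
    obtain ⟨c, hc, hle⟩ := hbarrier ht.le
    exact (mul_pos hc (parabola_pos hx)).trans_le
      (hle t (right_mem_Icc.2 ht.le) x (Ioo_subset_Icc_self hx))
  refine ⟨sineVec U, hsol, rfl, fun w hw h0 t ht => ?_, fun t ht => ?_, hU.cjIntoHm hb hω,
    hU.ckIntoV, hU.hasL2locTimeDerivChain, hU.classicalUtUxx hb hω⟩
  · obtain ⟨c, hc, hle⟩ := hbarrier ht
    exact hU.eq_of_isStrongSolution hb hω (fun t => (hbpos t).le) hsol hw h0 ht hc hle
  · rcases ht.eq_or_lt with rfl | hτt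
    · exact hpos
    · obtain ⟨c, hc, hle⟩ := hbarrier ht
      exact hU.positiveWithBoundaryDerivs hτt hc (hle t (right_mem_Icc.2 ht))

end MainResult

/-- for a positive initial datum `u_τ ∈ V^{2r}`, `3/4 < r < 1`,
with `u_τ'(0) > 0` and `u_τ'(1) < 0`, and `b, ω ∈ W^{1,2}_loc(ℝ)`, there is a
unique strong solution (in the class of all solutions); it stays positive with
nonvanishing boundary derivatives for all `t ≥ τ` and enjoys the regularity
`u ∈ C((τ,∞),H³) ∩ C¹((τ,∞),V)`, `d²u/dt² ∈ L²_loc(τ+ε,∞;H)`, and `u_t`, `u_xx`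
classical and continuous on `(τ,∞)×[0,1]`. -/
theorem statement7
    (b ω : ℝ → ℝ) (b0 b1 ω0 ω1 τ : ℝ) (hC : Cond1 b ω b0 b1 ω0 ω1)
    (hb : Wkloc 1 b) (hω : Wkloc 1 ω)
    (r : ℝ) (hr1 : 3 / 4 < r) (hr2 : r < 1)
    (uτ : Hsp) (hV2r : MemV2r r uτ)
    (hpos : PositiveWithBoundaryDerivs uτ) :
    ∃ u : ℝ → Hsp,
      IsStrongSolution b ω τ u ∧ u τ = uτ ∧
      (∀ w : ℝ → Hsp, IsStrongSolution b ω τ w → w τ = uτ →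
        ∀ t, τ ≤ t → w t = u t) ∧
      (∀ t, τ ≤ t → PositiveWithBoundaryDerivs (u t)) ∧
      CjIntoHm 0 3 u (Ioi τ) ∧
      CkIntoV 1 u (Ioi τ) ∧
      HasL2locTimeDerivChain 2 u τ ∧
      ClassicalUtUxx τ u :=
  statement7_general hC.contb hC.contω (fun t => hC.b0pos.trans_le (hC.blb t)) hb hω hpos

end
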